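/- arXiv:math/9307231 — 5 statements merged into one kernel-verified Lean document; each statement's English description precedes it below -/
import Mathlib

section
/- The cubic curve 3x³ + 4y³ + 5z³ = 0 has no nontrivial rational solutions: there are no rational numbers x, y, z, not all zero, with 3x³ + 4y³ + 5z³ = 0. -/
namespace SelmerAux

/-- 3-adic obstruction -/
theorem obstruction3 (n : ℕ) : ∀ a b c : ℤ, a.natAbs + b.natAbs + c.natAbs ≤ n →
    -2 * (3 * (a^2*c + a*b^2 + 6*b*c^2)) + 3 * (3 * (a^2*b + 6*b^2*c + 6*a*c^2))
      - (a^3+6*b^3+36*c^3+36*a*b*c) = 0 → a = 0 ∧ b = 0 ∧ c = 0 := by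
  induction n with
  | zero => intro a b c h _; omega
  | succ n ih =>
    intro a b c hn h
    have p3 : Prime (3 : ℤ) := Int.prime_three
    have ha : (3 : ℤ) ∣ a := p3.dvd_of_dvd_pow (n := 3) ⟨-2 * (a^2*c + a*b^2 + 6*b*c^2) +
      3 * (a^2*b + 6*b^2*c + 6*a*c^2) - 2*b^3-12*c^3-12*a*b*c, by linear_combination -h⟩
    obtain ⟨a, rfl⟩ := ha
    have hb : (3 : ℤ) ∣ b := by
      have : (3 : ℤ) ∣ 2 * b ^ 3 :=
        ⟨-2 * (3*a^2*c + a*b^2 + 2*b*c^2) + 3 * (3*a^2*b + 2*b^2*c + 6*a*c^2)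
          - 3*a^3 - 4*c^3 - 12*a*b*c, mul_left_cancel₀ (show (3 : ℤ) ≠ 0 by norm_num) (by linear_combination -h)⟩
      exact p3.dvd_of_dvd_pow ((p3.dvd_or_dvd this).resolve_left (by decide))
    obtain ⟨b, rfl⟩ := hb
    have hc : (3 : ℤ) ∣ c := by
      have : (3 : ℤ) ∣ 4 * c ^ 3 :=
        ⟨-2 * (a^2*c + 3*a*b^2 + 2*b*c^2) + 3 * (3*a^2*b + 6*b^2*c + 2*a*c^2)
          - a^3 - 6*b^3 - 12*a*b*c, mul_left_cancel₀ (show (9 : ℤ) ≠ 0 by norm_num) (by linear_combination -h)⟩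
      exact p3.dvd_of_dvd_pow ((p3.dvd_or_dvd this).resolve_left (by decide))
    obtain ⟨c, rfl⟩ := hc
    by_cases h0 : a = 0 ∧ b = 0 ∧ c = 0
    · obtain ⟨rfl, rfl, rfl⟩ := h0; simp
    · have := ih a b c (by omega) (mul_left_cancel₀ (show (27 : ℤ) ≠ 0 by norm_num) (by linear_combination h))
      omega

/-- 7-adic obstruction to `2` being a cube -/
theorem obstruction7 (n : ℕ) : ∀ a b c d : ℤ, a.natAbs + b.natAbs + c.natAbs + d.natAbs ≤ n →
    a^3+6*b^3+36*c^3+36*a*b*c = 2 * d^3 → a^2*c + a*b^2 + 6*b*c^2 = 0 →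
    a^2*b + 6*b^2*c + 6*a*c^2 = 0 → d = 0 := by
  induction n with
  | zero => intro a b c d h _ _ _; omega
  | succ n ih =>
    intro a b c d hn h1 h2 h3
    have key : ∀ a b c d : ZMod 7, a^3+6*b^3+36*c^3+36*a*b*c = 2 * d^3 →
      a^2*c + a*b^2 + 6*b*c^2 = 0 → a^2*b + 6*b^2*c + 6*a*c^2 = 0 →
      a = 0 ∧ b = 0 ∧ c = 0 ∧ d = 0 := by decide +kernel
    have := key a b c d (by exact_mod_cast congrArg (Int.cast : ℤ → ZMod 7) h1)
      (by exact_mod_cast congrArg (Int.cast : ℤ → ZMod 7) h2)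
      (by exact_mod_cast congrArg (Int.cast : ℤ → ZMod 7) h3)
    simp only [ZMod.intCast_zmod_eq_zero_iff_dvd] at this
    obtain ⟨⟨a, rfl⟩, ⟨b, rfl⟩, ⟨c, rfl⟩, ⟨d, rfl⟩⟩ := this
    push_cast at *
    by_cases h0 : d = 0
    · simp [h0]
    · have := ih a b c d (by omega) (mul_left_cancel₀ (show (343 : ℤ) ≠ 0 by norm_num) (by linear_combination h1))
        (mul_left_cancel₀ (show (343 : ℤ) ≠ 0 by norm_num) (by linear_combination h2)) (mul_left_cancel₀ (show (343 : ℤ) ≠ 0 by norm_num) (by linear_combination h3))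
      omega

theorem common_denom (a b c : ℚ) : ∃ (A B C N : ℤ), N ≠ 0 ∧ a = A / N ∧ b = B / N ∧ c = C / N := by
  refine ⟨a.num * b.den * c.den, b.num * a.den * c.den, c.num * a.den * b.den,
    a.den * b.den * c.den, by simp, ?_, ?_, ?_⟩
  · push_cast
    conv_lhs => rw [← Rat.num_div_den a]
    field_simp
  · push_cast
    conv_lhs => rw [← Rat.num_div_den b]
    field_simp
  · push_cast
    conv_lhs => rw [← Rat.num_div_den c]
    field_simp

theorem obstruction3_rat (a b c : ℚ)
    (h : -2 * (3 * (a^2*c + a*b^2 + 6*b*c^2)) + 3 * (3 * (a^2*b + 6*b^2*c + 6*a*c^2))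
      - (a^3+6*b^3+36*c^3+36*a*b*c) = 0) : a = 0 ∧ b = 0 ∧ c = 0 := by
  obtain ⟨A, B, C, N, hN, rfl, rfl, rfl⟩ := common_denom a b c
  have hN' : (N : ℚ) ≠ 0 := by exact_mod_cast hN
  field_simp at h
  have := obstruction3 _ A B C le_rfl (by
    have h' : ((-2 * (3 * (A^2*C + A*B^2 + 6*B*C^2)) + 3 * (3 * (A^2*B + 6*B^2*C + 6*A*C^2))
      - (A^3+6*B^3+36*C^3+36*A*B*C) : ℤ) : ℚ) = 0 := by push_cast; linear_combination h
    exact_mod_cast h')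
  obtain ⟨rfl, rfl, rfl⟩ := this
  simp

theorem obstruction7_rat (a b c : ℚ) (h1 : a^3+6*b^3+36*c^3+36*a*b*c = 2)
    (h2 : a^2*c + a*b^2 + 6*b*c^2 = 0) (h3 : a^2*b + 6*b^2*c + 6*a*c^2 = 0) : False := by
  obtain ⟨A, B, C, N, hN, rfl, rfl, rfl⟩ := common_denom a b c
  have hN' : (N : ℚ) ≠ 0 := by exact_mod_cast hN
  field_simp at h1 h2 h3
  apply hN
  refine obstruction7 _ A B C N le_rfl ?_ ?_ ?_
  · have h' : ((A^3+6*B^3+36*C^3+36*A*B*C : ℤ) : ℚ) = ((2 * N^3 : ℤ) : ℚ) := by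
      push_cast; linear_combination h1
    exact_mod_cast h'
  · have h' : ((A^2*C + A*B^2 + 6*B*C^2 : ℤ) : ℚ) = 0 := by push_cast; linear_combination h2
    exact_mod_cast h'
  · have h' : ((A^2*B + 6*B^2*C + 6*A*C^2 : ℤ) : ℚ) = 0 := by push_cast; linear_combination h3
    exact_mod_cast h'
end SelmerAux

open NumberField Module

set_option linter.unusedSectionVars false

namespace SelmerAux

section cubic
variable {K : Type} [Field K] [NumberField K]

/-- matrix of multiplication by `a + bθ + cθ²` -/
theorem leftMul (B : Basis (Fin 3) ℚ K) (θ : K) (hθ : θ ^ 3 = 6)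
    (hB : ∀ i, B i = θ ^ (i : ℕ)) (a b c : ℚ) :
    Algebra.leftMulMatrix B ((a : K) + b * θ + c * θ ^ 2) =
      !![a, 6 * c, 6 * b; b, a, 6 * c; c, b, a] := by
  have key : ∀ x y z : ℚ, (B.repr ((x : K) + y * θ + z * θ ^ 2) : Fin 3 → ℚ) = ![x, y, z] := by
    intro x y z
    have : (x : K) + y * θ + z * θ ^ 2 = ∑ i, (![x, y, z] i) • B i := by
      simp [Fin.sum_univ_three, hB, Algebra.smul_def]
    rw [this, B.repr_sum_self]
  have k0 : ((a : K) + b * θ + c * θ ^ 2) * B 0 = (a : K) + b * θ + c * θ ^ 2 := by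
    simp [hB]
  have k1 : ((a : K) + b * θ + c * θ ^ 2) * B 1 = ((6 * c : ℚ) : K) + a * θ + b * θ ^ 2 := by
    simp only [hB]; push_cast; simp
    linear_combination (c : K) * hθ
  have k2 : ((a : K) + b * θ + c * θ ^ 2) * B 2 = ((6 * b : ℚ) : K) + (6 * c : ℚ) * θ + a * θ ^ 2 := by
    simp only [hB]; push_cast; simp
    linear_combination (b + c * θ : K) * hθ
  ext i j
  rw [Algebra.leftMulMatrix_eq_repr_mul]
  fin_cases j
  · simp only [Fin.zero_eta]; rw [k0, key]; fin_cases i <;> simp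
  · simp only [Fin.mk_one]; rw [k1, key]; fin_cases i <;> simp
  · simp only [Fin.reduceFinMk]; rw [k2, key]; fin_cases i <;> simp

theorem norm_formula (B : Basis (Fin 3) ℚ K) (θ : K) (hθ : θ ^ 3 = 6)
    (hB : ∀ i, B i = θ ^ (i : ℕ)) (a b c : ℚ) :
    Algebra.norm ℚ ((a : K) + b * θ + c * θ ^ 2) =
      a ^ 3 + 6 * b ^ 3 + 36 * c ^ 3 - 18 * a * b * c := by
  rw [Algebra.norm_eq_matrix_det B, leftMul B θ hθ hB, Matrix.det_fin_three]
  simp; ring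

theorem trace_formula (B : Basis (Fin 3) ℚ K) (θ : K) (hθ : θ ^ 3 = 6)
    (hB : ∀ i, B i = θ ^ (i : ℕ)) (a b c : ℚ) :
    Algebra.trace ℚ K ((a : K) + b * θ + c * θ ^ 2) = 3 * a := by
  rw [Algebra.trace_eq_matrix_trace B, leftMul B θ hθ hB, Matrix.trace_fin_three]
  simp; ring

theorem coe_cube (t : 𝓞 K) (ht : t ^ 3 = 6) : (t : K) ^ 3 = 6 :=
  (map_pow (algebraMap (𝓞 K) K) t 3).symm.trans
    ((congrArg _ ht).trans (map_ofNat (algebraMap (𝓞 K) K) 6))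

theorem norm_int (B : Basis (Fin 3) ℚ K) (t : 𝓞 K) (ht : t ^ 3 = 6)
    (hB : ∀ i, B i = (t : K) ^ (i : ℕ)) (a b c : ℤ) :
    Algebra.norm ℤ ((a : 𝓞 K) + b * t + c * t ^ 2) =
      a ^ 3 + 6 * b ^ 3 + 36 * c ^ 3 - 18 * a * b * c := by
  have hθ : (t : K) ^ 3 = 6 := coe_cube t ht
  have h := norm_formula B (t : K) hθ hB a b c
  have h2 := Algebra.coe_norm_int (K := K) ((a : 𝓞 K) + b * t + c * t ^ 2)
  simp only [map_add, map_mul, map_pow, map_intCast] at h2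
  push_cast at h
  rw [h] at h2
  exact_mod_cast h2

theorem discr_rel (B : Basis (Fin 3) ℚ K) (t : 𝓞 K) (ht : t ^ 3 = 6)
    (hB : ∀ i, B i = (t : K) ^ (i : ℕ)) :
    ∃ n : ℤ, n ^ 2 * discr K = -972 := by
  have hθ : (t : K) ^ 3 = 6 := coe_cube t ht
  have hfr : finrank ℚ K = 3 := by simpa using finrank_eq_card_basis B
  have hcard : Fintype.card (Free.ChooseBasisIndex ℤ (𝓞 K)) = 3 := by
    rw [← finrank_eq_card_basis (RingOfIntegers.basis K), RingOfIntegers.rank, hfr]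
  let e : Free.ChooseBasisIndex ℤ (𝓞 K) ≃ Fin 3 := Fintype.equivFinOfCardEq hcard
  let b : Basis (Fin 3) ℤ (𝓞 K) := (RingOfIntegers.basis K).reindex e
  let v : Fin 3 → 𝓞 K := fun i => t ^ (i : ℕ)
  have hd : Algebra.discr ℤ v = (b.toMatrix v).det ^ 2 * discr K := by
    rw [← discr_eq_discr K b, ← Algebra.discr_of_matrix_vecMul]
    congr 1
    ext1 j
    rw [Matrix.vecMul, dotProduct]
    conv_lhs => rw [← b.sum_toMatrix_smul_self v j]
    refine Finset.sum_congr rfl fun i _ => ?_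
    simp [Algebra.smul_def, mul_comm]
  refine ⟨(b.toMatrix v).det, ?_⟩
  rw [← hd, Algebra.discr_def]
  have htr : ∀ a b c : ℤ, Algebra.trace ℤ (𝓞 K) ((a : 𝓞 K) + b * t + c * t ^ 2) = 3 * a := by
    intro a b c
    have h := trace_formula B (t : K) hθ hB a b c
    have h2 := Algebra.coe_trace_int (K := K) ((a : 𝓞 K) + b * t + c * t ^ 2)
    push_cast at h
    simp only [map_add, map_mul, map_pow, map_intCast] at h2 h ⊢
    rw [h] at h2
    exact_mod_cast h2
  have h0 : Algebra.trace ℤ (𝓞 K) 1 = 3 := by simpa using htr 1 0 0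
  have h1 : Algebra.trace ℤ (𝓞 K) t = 0 := by simpa using htr 0 1 0
  have h2 : Algebra.trace ℤ (𝓞 K) (t ^ 2) = 0 := by simpa using htr 0 0 1
  have h3 : Algebra.trace ℤ (𝓞 K) (t ^ 3) = 18 := by rw [ht]; simpa using htr 6 0 0
  have h4 : Algebra.trace ℤ (𝓞 K) (t ^ 4) = 0 := by
    rw [pow_succ, ht]; simpa using htr 0 6 0
  have hm : Algebra.traceMatrix ℤ v = !![3, 0, 0; 0, 0, 18; 0, 18, 0] := by
    ext i j
    rw [Algebra.traceMatrix_apply, Algebra.traceForm_apply]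
    simp only [v, ← pow_add]
    fin_cases i <;> fin_cases j <;> simp [h0, h1, h2, h3, h4]
  rw [hm, Matrix.det_fin_three]
  simp

theorem discr_bound (B : Basis (Fin 3) ℚ K) (t : 𝓞 K) (ht : t ^ 3 = 6)
    (hB : ∀ i, B i = (t : K) ^ (i : ℕ)) :
    |discr K| ≤ 972 ∧ InfinitePlace.nrComplexPlaces K = 1 ∧ Units.rank K = 1 := by
  obtain ⟨n, hn⟩ := discr_rel B t ht hB
  have hfr : finrank ℚ K = 3 := by simpa using finrank_eq_card_basis B
  have hn0 : 1 ≤ n ^ 2 := by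
    have : n ≠ 0 := by rintro rfl; simp at hn
    have := sq_pos_of_ne_zero this
    omega
  have hneg : discr K < 0 := by nlinarith
  have hs := sign_discr K
  rw [Int.sign_eq_neg_one_of_neg hneg] at hs
  have hr := InfinitePlace.card_add_two_mul_card_eq_rank K
  rw [hfr] at hr
  have hc : InfinitePlace.nrComplexPlaces K = 1 := by
    have : InfinitePlace.nrComplexPlaces K ≠ 0 := by
      intro h; rw [h] at hs; simp at hs
    omega
  refine ⟨?_, hc, ?_⟩
  · rw [abs_of_neg hneg]; nlinarith
  · rw [Units.rank, InfinitePlace.card_eq_nrRealPlaces_add_nrComplexPlaces]; omega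

theorem principal_of_mem (P : Ideal (𝓞 K)) (hP : P.IsPrime) (g : 𝓞 K) (p : ℕ) (hp : p.Prime)
    (hg : Algebra.norm ℤ g = p ∨ Algebra.norm ℤ g = - p) (hgP : g ∈ P) :
    Submodule.IsPrincipal P := by
  have hN : Ideal.absNorm (Ideal.span {g}) = p := by
    rw [Ideal.absNorm_span_singleton]; rcases hg with h | h <;> rw [h] <;> simp
  have hpr : (Ideal.span {g}).IsPrime := Ideal.isPrime_of_irreducible_absNorm (by rw [hN]; exact hp)
  have hne : Ideal.span {g} ≠ ⊥ := by
    intro h; rw [h] at hN; simp at hN; exact hp.ne_zero hN.symm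
  have hm : (Ideal.span {g}).IsMaximal := hpr.isMaximal hne
  have : Ideal.span {g} = P :=
    hm.eq_of_le hP.ne_top ((Ideal.span_singleton_le_iff_mem P).mpr hgP)
  rw [← this]
  exact ⟨⟨g, rfl⟩⟩

theorem minkowski (B : Basis (Fin 3) ℚ K) (t : 𝓞 K) (ht : t ^ 3 = 6)
    (hB : ∀ i, B i = (t : K) ^ (i : ℕ)) :
    (4 / Real.pi) ^ InfinitePlace.nrComplexPlaces K *
      ((finrank ℚ K).factorial / (finrank ℚ K) ^ (finrank ℚ K) * √|(discr K : ℝ)|) < 9 := by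
  obtain ⟨hd, hc, -⟩ := discr_bound B t ht hB
  have hfr : finrank ℚ K = 3 := by simpa using finrank_eq_card_basis B
  rw [hc, hfr]
  have hd' : |(discr K : ℝ)| ≤ 972 := by exact_mod_cast hd
  have h1 : √|(discr K : ℝ)| ≤ 31.2 := by
    rw [Real.sqrt_le_left (by norm_num)]; linarith
  have h2 : 4 / Real.pi ≤ 1.28 := by
    rw [div_le_iff₀ Real.pi_pos]; nlinarith [Real.pi_gt_d2]
  have h3 : 0 ≤ √|(discr K : ℝ)| := Real.sqrt_nonneg _
  calc _ ≤ (1.28 : ℝ) ^ 1 * ((Nat.factorial 3 : ℕ) / (3 : ℕ) ^ 3 * 31.2) := by gcongr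
    _ < 9 := by norm_num [Nat.factorial]

theorem pid (B : Basis (Fin 3) ℚ K) (t : 𝓞 K) (ht : t ^ 3 = 6)
    (hB : ∀ i, B i = (t : K) ^ (i : ℕ)) : IsPrincipalIdealRing (𝓞 K) := by
  refine RingOfIntegers.isPrincipalIdealRing_of_isPrincipal_of_norm_le_of_isPrime ?_
  rintro ⟨P, hP0⟩ hP hN
  simp only at hP hN ⊢
  have hlt := hN.trans_lt (minkowski B t ht hB)
  have hlt : Ideal.absNorm P < 9 := by exact_mod_cast hlt
  have hmem := Ideal.absNorm_mem P
  have hpos : 2 ≤ Ideal.absNorm P := by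
    have h0 : Ideal.absNorm P ≠ 0 := Ideal.absNorm_ne_zero_of_nonZeroDivisors ⟨P, hP0⟩
    have h1 : Ideal.absNorm P ≠ 1 := fun h => hP.ne_top (Ideal.absNorm_eq_one_iff.mp h)
    omega
  have one_nmem : (1 : 𝓞 K) ∉ P := fun h => hP.ne_top ((Ideal.eq_top_iff_one P).mpr h)
  have two : (2 : 𝓞 K) ∈ P → Submodule.IsPrincipal P := by
    intro h2
    refine principal_of_mem P hP (2 - t) 2 Nat.prime_two (Or.inl ?_) ?_
    · have := norm_int B t ht hB 2 (-1) 0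
      push_cast at this
      convert this using 2 <;> ring1
    · refine hP.mem_of_pow_mem 3 ?_
      have : (2 - t) ^ 3 = (1 - 6 * t + 3 * t ^ 2) * 2 := by linear_combination -ht
      rw [this]; exact P.mul_mem_left _ h2
  have three : (3 : 𝓞 K) ∈ P → Submodule.IsPrincipal P := by
    intro h3
    refine principal_of_mem P hP (3 + 2 * t + t ^ 2) 3 Nat.prime_three (Or.inl ?_) ?_
    · have := norm_int B t ht hB 3 2 1
      push_cast at this
      convert this using 2 <;> ring1
    · have htP : t ∈ P := by
        refine hP.mem_of_pow_mem 3 ?_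
        rw [ht, show (6 : 𝓞 K) = 2 * 3 by norm_num]; exact P.mul_mem_left _ h3
      have : 3 + 2 * t + t ^ 2 = 3 + (2 + t) * t := by ring
      rw [this]; exact P.add_mem h3 (P.mul_mem_left _ htP)
  have five : Ideal.absNorm P = 5 → Submodule.IsPrincipal P := by
    intro h5
    have h5m : (5 : 𝓞 K) ∈ P := by rw [h5] at hmem; exact_mod_cast hmem
    refine principal_of_mem P hP (t - 1) 5 Nat.prime_five (Or.inl ?_) ?_
    · have := norm_int B t ht hB (-1) 1 0
      push_cast at this
      convert this using 2 <;> ring1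
    · have h1 : (t - 1) * (t ^ 2 + t + 1) ∈ P := by
        have : (t - 1) * (t ^ 2 + t + 1) = 5 := by linear_combination ht
        rwa [this]
      have h2 : t ^ 5 - t ∈ P := by
        have hm : P.IsMaximal := hP.isMaximal (by simpa using nonZeroDivisors.ne_zero hP0)
        let : Field (𝓞 K ⧸ P) := Ideal.Quotient.field P
        have hcard : Nat.card (𝓞 K ⧸ P) = 5 := by
          rw [← h5, Ideal.absNorm_apply]; rfl
        have : Finite (𝓞 K ⧸ P) := Nat.finite_of_card_ne_zero (by omega)
        let := Fintype.ofFinite (𝓞 K ⧸ P)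
        have := FiniteField.pow_card (Ideal.Quotient.mk P t)
        rw [← Nat.card_eq_fintype_card, hcard, ← map_pow] at this
        exact Ideal.Quotient.eq.mp this
      have h3 : t * (t - 1) ∈ P := by
        have : t * (t - 1) = (t ^ 5 - t) - t ^ 2 * 5 := by linear_combination (-t^2) * ht
        rw [this]; exact P.sub_mem h2 (P.mul_mem_left _ h5m)
      rcases hP.mem_or_mem h3 with h | h
      · exfalso; apply one_nmem
        have : (1 : 𝓞 K) = t ^ 2 * t - 5 := by linear_combination -ht
        rw [this]; exact P.sub_mem (P.mul_mem_left _ h) h5m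
      · exact h
  have seven : (7 : 𝓞 K) ∈ P → Submodule.IsPrincipal P := by
    intro h7
    have h1 : (t + 1) * ((t - 3) * (t - 5)) ∈ P := by
      have : (t + 1) * ((t - 3) * (t - 5)) = (3 + t - t ^ 2) * 7 := by linear_combination ht
      rw [this]; exact P.mul_mem_left _ h7
    rcases hP.mem_or_mem h1 with h | h
    · refine principal_of_mem P hP (t + 1) 7 (by norm_num) (Or.inl ?_) h
      have := norm_int B t ht hB 1 1 0
      push_cast at this
      convert this using 2 <;> ring1
    rcases hP.mem_or_mem h with h | h
    · refine principal_of_mem P hP (-5 + t + t ^ 2) 7 (by norm_num) (Or.inl ?_) ?_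
      · have := norm_int B t ht hB (-5) 1 1
        push_cast at this
        convert this using 2 <;> ring1
      · have : -5 + t + t ^ 2 = (t + 4) * (t - 3) + 7 := by ring
        rw [this]; exact P.add_mem (P.mul_mem_left _ h) h7
    · refine principal_of_mem P hP (7 - 2 * t - t ^ 2) 7 (by norm_num) (Or.inl ?_) ?_
      · have := norm_int B t ht hB 7 (-2) (-1)
        push_cast at this
        convert this using 2 <;> ring1
      · have : 7 - 2 * t - t ^ 2 = (-t - 7) * (t - 5) + (-4) * 7 := by ring
        rw [this]; exact P.add_mem (P.mul_mem_left _ h) (P.mul_mem_left _ h7)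
  have pw : ∀ (p k : ℕ), Ideal.absNorm P = p ^ k → (p : 𝓞 K) ∈ P := by
    intro p k h
    rw [h] at hmem; push_cast at hmem
    exact hP.mem_of_pow_mem k hmem
  generalize hn : Ideal.absNorm P = n at *
  interval_cases n
  · exact two (by simpa using pw 2 1 (by norm_num))
  · exact three (by simpa using pw 3 1 (by norm_num))
  · exact two (by simpa using pw 2 2 (by norm_num))
  · exact five rfl
  · rcases hP.mem_or_mem (show (2 : 𝓞 K) * 3 ∈ P by norm_num; exact_mod_cast hmem) with h | h
    · exact two h
    · exact three h
  · exact seven (by simpa using pw 7 1 (by norm_num))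
  · exact two (by simpa using pw 2 3 (by norm_num))

/-- coordinates of elements and of their cubes -/
theorem coords (B : Basis (Fin 3) ℚ K) (θ : K) (hB : ∀ i, B i = θ ^ (i : ℕ)) (x : K) :
    ∃ a b c : ℚ, x = a + b * θ + c * θ ^ 2 := by
  refine ⟨B.repr x 0, B.repr x 1, B.repr x 2, ?_⟩
  conv_lhs => rw [← B.sum_repr x]
  simp [Fin.sum_univ_three, hB, Algebra.smul_def]

theorem coords_unique (B : Basis (Fin 3) ℚ K) (θ : K) (hB : ∀ i, B i = θ ^ (i : ℕ))
    (a b c : ℚ) (h : (a : K) + b * θ + c * θ ^ 2 = 0) : a = 0 ∧ b = 0 ∧ c = 0 := by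
  have h1 := Fintype.linearIndependent_iff.mp B.linearIndependent ![a, b, c] (by
    simpa [Fin.sum_univ_three, hB, Algebra.smul_def] using h)
  exact ⟨h1 0, h1 1, h1 2⟩

theorem two_not_cube (B : Basis (Fin 3) ℚ K) (θ : K) (hθ : θ ^ 3 = 6)
    (hB : ∀ i, B i = θ ^ (i : ℕ)) (x : K) : x ^ 3 ≠ 2 := by
  intro hx
  obtain ⟨a, b, c, rfl⟩ := coords B θ hB x
  have := coords_unique B θ hB (a^3+6*b^3+36*c^3+36*a*b*c - 2)
    (3 * (a^2*b + 6*b^2*c + 6*a*c^2)) (3 * (a^2*c + a*b^2 + 6*b*c^2)) (by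
      push_cast
      linear_combination hx - (b^3 + c^3 * (θ^3+6) + 3*b^2*c*θ + 3*a*c^2*θ + 3*b*c^2*θ^2 + 6*a*b*c) * hθ)
  obtain ⟨h1, h2, h3⟩ := this
  exact obstruction7_rat a b c (by linarith) (by linarith) (by linarith)

theorem no_theta_sq (B : Basis (Fin 3) ℚ K) (θ : K) (hθ : θ ^ 3 = 6)
    (hB : ∀ i, B i = θ ^ (i : ℕ)) (g : K) (x y : ℚ)
    (h : (-2 + 3 * θ - θ ^ 2) * g ^ 3 = x + y * θ) : g = 0 := by
  obtain ⟨a, b, c, rfl⟩ := coords B θ hB g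
  have h3 : ((a : K) + b * θ + c * θ ^ 2) ^ 3 = ((a^3+6*b^3+36*c^3+36*a*b*c : ℚ) : K) +
      ((3 * (a^2*b + 6*b^2*c + 6*a*c^2) : ℚ) : K) * θ +
      ((3 * (a^2*c + a*b^2 + 6*b*c^2) : ℚ) : K) * θ ^ 2 := by
    push_cast
    linear_combination (b^3 + c^3 * (θ^3+6) + 3*b^2*c*θ + 3*a*c^2*θ + 3*b*c^2*θ^2 + 6*a*b*c) * hθ
  rw [h3] at h
  generalize hA : a^3+6*b^3+36*c^3+36*a*b*c = A at *
  generalize hBB : 3 * (a^2*b + 6*b^2*c + 6*a*c^2) = BB at *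
  generalize hC : 3 * (a^2*c + a*b^2 + 6*b*c^2) = C at *
  have := coords_unique B θ hB (-2 * A + 18 * C - 6 * BB - x) (-2 * BB + 3 * A - 6 * C - y)
    (-2 * C + 3 * BB - A) (by
      push_cast
      linear_combination h - (3 * C - BB - C * θ) * hθ)
  obtain ⟨-, -, h0⟩ := this
  rw [← hA, ← hBB, ← hC] at h0
  obtain ⟨rfl, rfl, rfl⟩ := obstruction3_rat a b c h0
  simp

/-- every unit is, up to a power of `2`, a cube in `K`. -/
theorem unit_cube (B : Basis (Fin 3) ℚ K) (t : 𝓞 K) (ht : t ^ 3 = 6)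
    (hB : ∀ i, B i = (t : K) ^ (i : ℕ)) (u : (𝓞 K)ˣ) :
    ∃ (v : K) (m : ℚ), m ≠ 0 ∧ ((u : 𝓞 K) : K) = m * v ^ 3 := by
  obtain ⟨-, -, hrank⟩ := discr_bound B t ht hB
  have hθ := coe_cube t ht
  have hfr : finrank ℚ K = 3 := by simpa using finrank_eq_card_basis B
  obtain ⟨η, hη⟩ : ∃ η : (𝓞 K)ˣ, ∀ u : (𝓞 K)ˣ, ∃ (s : (𝓞 K)ˣ) (k : ℤ), u = s ^ 3 * η ^ k := by
    have hlt : 0 < Units.rank K := by omega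
    refine ⟨Units.fundSystem K ⟨0, hlt⟩, fun u => ?_⟩
    obtain ⟨⟨ζ, e⟩, he, -⟩ := Units.exist_unique_eq_mul_prod K u
    refine ⟨ζ, e ⟨0, hlt⟩, ?_⟩
    have hz : (ζ : (𝓞 K)ˣ) ^ 3 = ζ := by
      rcases Units.torsion_eq_one_or_neg_one_of_odd_finrank (by rw [hfr]; decide) ζ with h | h <;>
        rw [h]
      · simp
      · rw [Odd.neg_one_pow (by decide)]
    rw [hz, he]
    congr 1
    refine Finset.prod_eq_single_of_mem _ (Finset.mem_univ _) ?_
    intro b _ hb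
    exfalso; apply hb; apply Fin.ext; have := b.2; simp only; omega
  -- the unit `1 - 6θ + 3θ²`
  let ε : (𝓞 K)ˣ := Units.mkOfMulEqOne (1 - 6 * t + 3 * t ^ 2) (109 + 60 * t + 33 * t ^ 2)
    (by linear_combination (-18 + 99 * t) * ht)
  have hε : 2 * ((ε : 𝓞 K) : K) = (2 - (t : K)) ^ 3 := by
    have h : 2 * (ε : 𝓞 K) = (2 - t) ^ 3 := by
      change 2 * (1 - 6 * t + 3 * t ^ 2) = _
      linear_combination ht
    have := congrArg (algebraMap (𝓞 K) K) h
    rw [map_mul, map_pow, map_sub, map_ofNat] at this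
    exact this
  have c2 : ((2 : K) - t) ≠ 0 := by
    intro h; rw [h] at hε; simp at hε
  obtain ⟨s, n, hn⟩ := hη ε
  obtain ⟨r, k, hk⟩ := hη u
  have hval : ∀ (s : (𝓞 K)ˣ) (n : ℤ) (w : (𝓞 K)ˣ), w = s ^ 3 * η ^ n →
      ((w : 𝓞 K) : K) = ((s : 𝓞 K) : K) ^ 3 * ((η : 𝓞 K) : K) ^ n := by
    rintro s n w rfl
    change algebraMap (𝓞 K) K ((s ^ 3 * η ^ n : (𝓞 K)ˣ) : 𝓞 K) = (algebraMap (𝓞 K) K s) ^ 3 * _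
    rw [_root_.Units.val_mul, map_mul, _root_.Units.val_pow_eq_pow_val, map_pow]
    congr 1
    exact NumberField.Units.coe_zpow η n
  have hn' := hval _ _ _ hn
  have hk' := hval _ _ _ hk
  have hη0 : ((η : 𝓞 K) : K) ≠ 0 := by simp
  have hs0 : ((s : 𝓞 K) : K) ≠ 0 := by simp
  have hε0 : ((ε : 𝓞 K) : K) ≠ 0 := by simp
  generalize ((η : 𝓞 K) : K) = H at *
  generalize ((s : 𝓞 K) : K) = S at *
  generalize ((r : 𝓞 K) : K) = R at *
  generalize ((ε : 𝓞 K) : K) = E at *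
  have hn3 : ¬ (3 : ℤ) ∣ n := by
    rintro ⟨q, rfl⟩
    apply two_not_cube B (t : K) hθ hB ((2 - t) / (S * H ^ q))
    rw [div_pow, mul_pow, ← hε, hn', mul_comm 3 q, zpow_mul, zpow_ofNat]
    field_simp
  obtain ⟨i, q, hq⟩ : ∃ i q : ℤ, k = n * i + q * 3 := by
    have : n % 3 = 1 ∨ n % 3 = 2 := by omega
    rcases this with h | h
    · exact ⟨k, -(n / 3 * k), by
        have := Int.emod_add_mul_ediv n 3; rw [h] at this; linear_combination k * this⟩
    · exact ⟨-k, k * (n / 3 + 1), by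
        have := Int.emod_add_mul_ediv n 3; rw [h] at this; linear_combination -k * this⟩
  refine ⟨R * H ^ q * (S ^ i)⁻¹ * (2 - t) ^ i, 2 ^ (-i), by positivity, ?_⟩
  have e1 : H ^ n = (2 - (t : K)) ^ 3 / 2 / S ^ 3 := by
    rw [← hε, hn']; field_simp
  rw [hk', hq, zpow_add₀ hη0, zpow_mul, e1, zpow_mul]
  push_cast
  simp only [div_zpow, mul_pow, zpow_neg, inv_pow]
  rw [← zpow_natCast, ← zpow_natCast, ← zpow_natCast, ← zpow_mul, ← zpow_mul]
  simp only [← zpow_natCast, ← zpow_mul, mul_comm i]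
  push_cast
  field_simp

theorem primitive_core (B : Basis (Fin 3) ℚ K) (t : 𝓞 K) (ht : t ^ 3 = 6)
    (hB : ∀ i, B i = (t : K) ^ (i : ℕ)) (x y z k : ℤ)
    (h : 3 * x ^ 3 + 4 * y ^ 3 + 5 * z ^ 3 = 0) (hk : x = 5 * k - 2 * y)
    (hxy : IsCoprime (2 * y) x) (hz : IsCoprime 18 z) : False := by
  have := pid B t ht hB
  have hz0 : z ≠ 0 := by
    rintro rfl
    rw [isCoprime_zero_right, Int.isUnit_iff] at hz
    omega
  obtain ⟨p, q, hpq⟩ : IsCoprime ((2 * y) ^ 2) (x ^ 2) := hxy.pow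
  obtain ⟨r, s, hrs⟩ : IsCoprime 18 (z ^ 3) := hz.pow_right
  obtain ⟨a, ha⟩ : ∃ a : ℤ, a = 21 * k - 4 * y := ⟨_, rfl⟩
  obtain ⟨b, hb⟩ : ∃ b : ℤ, b = 11 * k - 2 * y := ⟨_, rfl⟩
  obtain ⟨c, hc⟩ : ∃ c : ℤ, c = 6 * k - y := ⟨_, rfl⟩
  have hN : a ^ 3 + 6 * b ^ 3 + 36 * c ^ 3 - 18 * a * b * c = (-z) ^ 3 := by
    subst hk ha hb hc
    apply mul_left_cancel₀ (show (5 : ℤ) ≠ 0 by norm_num)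
    linear_combination h
  obtain ⟨α, hα⟩ : ∃ α : 𝓞 K, α = a + b * t + c * t ^ 2 := ⟨_, rfl⟩
  obtain ⟨β, hβ⟩ : ∃ β : 𝓞 K, β = (a ^ 2 - 6 * b * c) + (6 * c ^ 2 - a * b) * t +
    (b ^ 2 - a * c) * t ^ 2 := ⟨_, rfl⟩
  have hαβ : α * β = ((-z : ℤ) : 𝓞 K) ^ 3 := by
    have : (((-z) ^ 3 : ℤ) : 𝓞 K) = a ^ 3 + 6 * b ^ 3 + 36 * c ^ 3 - 18 * a * b * c := by
      rw [← hN]; push_cast; ring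
    rw [← Int.cast_pow, this, hα, hβ]
    linear_combination ((b : 𝓞 K) * (b ^ 2 - a * c) + c * (6 * c ^ 2 - a * b)
      + c * (b ^ 2 - a * c) * t) * ht
  have hka : (x : 𝓞 K) = 5 * k - 2 * y := by rw [hk]; push_cast; ring
  have haa : (a : 𝓞 K) = 21 * k - 4 * y := by rw [ha]; push_cast; ring
  have hbb : (b : 𝓞 K) = 11 * k - 2 * y := by rw [hb]; push_cast; ring
  have hcc : (c : 𝓞 K) = 6 * k - y := by rw [hc]; push_cast; ring
  have hα' : (-2 + 3 * t - t ^ 2) * α = 2 * y + x * t := by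
    rw [hα, haa, hbb, hcc, hka]
    linear_combination (3 * (6 * k - y : 𝓞 K) - (11 * k - 2 * y) - (6 * k - y) * t) * ht
  have hβ' : ((4 + 2 * t + t ^ 2) * (t ^ 2 + t + 1)) * β =
      4 * (y : 𝓞 K) ^ 2 - 2 * y * x * t + x ^ 2 * t ^ 2 := by
    have e : (4 + 2 * t + t ^ 2) * (t ^ 2 + t + 1) = 22 + 12 * t + 7 * t ^ 2 := by
      linear_combination (t + 3) * ht
    rw [e, hβ, haa, hbb, hcc, hka]
    generalize (k : 𝓞 K) = k
    generalize (y : 𝓞 K) = y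
    linear_combination (12 * ((11 * k - 2 * y) ^ 2 - (21 * k - 4 * y) * (6 * k - y)) +
      7 * (6 * (6 * k - y) ^ 2 - (21 * k - 4 * y) * (11 * k - 2 * y)) +
      7 * ((11 * k - 2 * y) ^ 2 - (21 * k - 4 * y) * (6 * k - y)) * t) * ht
  have hpq' : (p : 𝓞 K) * (2 * y) ^ 2 + q * x ^ 2 = 1 := by exact_mod_cast congrArg (Int.cast : ℤ → 𝓞 K) hpq
  have hrs' : (r : 𝓞 K) * 18 + s * z ^ 3 = 1 := by exact_mod_cast congrArg (Int.cast : ℤ → 𝓞 K) hrs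
  have hcop : IsCoprime α β := by
    refine ⟨r * ((-2 + 3 * t - t ^ 2) * (p * 6 * (4 * y - x * t) + q * t * (2 * x * t - 2 * y)))
      - s * β,
      r * (((4 + 2 * t + t ^ 2) * (t ^ 2 + t + 1)) * (6 * p + q * t)), ?_⟩
    push_cast at hαβ
    linear_combination (r * (p * 6 * (4 * y - x * t) + q * t * (2 * x * t - 2 * y))) * hα' +
      (r * (6 * p + q * t)) * hβ' - s * hαβ + hrs' + 18 * r * hpq' + (3 * r * q * x ^ 2) * ht
  obtain ⟨d, u, hu⟩ := exists_associated_pow_of_mul_eq_pow' hcop hαβ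
  obtain ⟨v, m, hm, hv⟩ := unit_cube B t ht hB u
  have hθ := coe_cube t ht
  have hαK : ((α : 𝓞 K) : K) = m * ((d : K) * v) ^ 3 := by
    have h1 : algebraMap (𝓞 K) K α = algebraMap (𝓞 K) K d ^ 3 * algebraMap (𝓞 K) K u := by
      rw [← hu, map_mul, map_pow]
    refine h1.trans ?_
    change (d : K) ^ 3 * ((u : 𝓞 K) : K) = _
    rw [hv]; ring
  have hα2 : (-2 + 3 * (t : K) - (t : K) ^ 2) * (α : K) = 2 * y + x * t := by
    have := congrArg (algebraMap (𝓞 K) K) hα'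
    simpa only [map_mul, map_add, map_sub, map_neg, map_ofNat, map_intCast, map_pow] using this
  have hm' : (m : K) ≠ 0 := by exact_mod_cast hm
  have h0 := no_theta_sq B (t : K) hθ hB ((d : K) * v) (2 * y / m) (x / m) (by
    rw [hαK] at hα2
    push_cast
    field_simp
    linear_combination hα2)
  rw [h0] at hαK
  have hα0 : α = 0 := by
    apply RingOfIntegers.coe_injective
    exact hαK.trans (by simp)
  rw [hα0, zero_mul] at hαβ
  have := pow_eq_zero_iff (by norm_num) |>.mp hαβ.symm
  apply hz0
  have : (-z) = 0 := by exact_mod_cast this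
  omega

end cubic

theorem exists_field : ∃ (K : Type) (_ : Field K) (_ : NumberField K) (t : 𝓞 K)
    (B : Basis (Fin 3) ℚ K), t ^ 3 = 6 ∧ ∀ i, B i = (t : K) ^ (i : ℕ) := by
  open Polynomial in
  have hdeg : (X ^ 3 - C 6 : ℚ[X]).natDegree = 3 := natDegree_X_pow_sub_C
  have hirr : Irreducible (X ^ 3 - C 6 : ℚ[X]) := by
    refine X_pow_sub_C_irreducible_of_prime Nat.prime_three ?_
    intro b hb
    have hbi : IsIntegral ℤ b := by
      refine IsIntegral.of_pow (n := 3) (by norm_num) ?_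
      rw [hb]
      exact_mod_cast (isIntegral_algebraMap (R := ℤ) (A := ℚ) (x := 6))
    obtain ⟨n, rfl⟩ := IsIntegrallyClosed.isIntegral_iff.mp hbi
    have hn : n ^ 3 = 6 := by
      simp only [eq_intCast] at hb
      exact_mod_cast hb
    rcases le_or_gt n 1 with h | h
    · nlinarith [sq_nonneg n, sq_nonneg (n + 1)]
    · have : 2 ≤ n := h
      nlinarith [sq_nonneg n, sq_nonneg (n - 2)]
  have : Fact (Irreducible (X ^ 3 - C 6 : ℚ[X])) := ⟨hirr⟩
  have hne : (X ^ 3 - C 6 : ℚ[X]) ≠ 0 := hirr.ne_zero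
  let pb := AdjoinRoot.powerBasis hne
  have hfin : FiniteDimensional ℚ (AdjoinRoot (X ^ 3 - C 6 : ℚ[X])) := pb.finite
  have hnf : NumberField (AdjoinRoot (X ^ 3 - C 6 : ℚ[X])) := { to_finiteDimensional := hfin }
  have hroot : (AdjoinRoot.root (X ^ 3 - C 6 : ℚ[X])) ^ 3 = 6 := by
    have := AdjoinRoot.eval₂_root (X ^ 3 - C 6 : ℚ[X])
    rw [eval₂_sub, eval₂_pow, eval₂_X, eval₂_C] at this
    exact (sub_eq_zero.mp this).trans (map_ofNat (AdjoinRoot.of _) 6)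
  have hRootIntegral : IsIntegral ℤ (AdjoinRoot.root (X ^ 3 - C 6 : ℚ[X])) := by
    refine IsIntegral.of_pow (n := 3) (by norm_num) ?_
    rw [hroot]
    exact_mod_cast (isIntegral_algebraMap (R := ℤ) (x := 6))
  have hdim : pb.dim = 3 := hdeg
  obtain ⟨t, htr⟩ : ∃ t : 𝓞 (AdjoinRoot (X ^ 3 - C 6 : ℚ[X])),
      algebraMap _ (AdjoinRoot (X ^ 3 - C 6 : ℚ[X])) t = AdjoinRoot.root (X ^ 3 - C 6 : ℚ[X]) :=
    ⟨⟨_, hRootIntegral⟩, rfl⟩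
  refine ⟨AdjoinRoot (X ^ 3 - C 6 : ℚ[X]), inferInstance, hnf, t,
    pb.basis.reindex (finCongr hdim), ?_, ?_⟩
  · apply RingOfIntegers.coe_injective
    rw [map_pow, htr, hroot]
    exact (map_ofNat _ 6).symm
  · intro i
    refine Eq.trans ?_ (congrArg (· ^ (i : ℕ)) htr.symm)
    simp [PowerBasis.coe_basis, pb]

theorem primitive (x y z : ℤ) (h : 3 * x ^ 3 + 4 * y ^ 3 + 5 * z ^ 3 = 0)
    (hp : ∀ p : ℕ, p.Prime → (p : ℤ) ∣ x → (p : ℤ) ∣ y → (p : ℤ) ∣ z → False) : False := by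
  have p2 : Prime (2 : ℤ) := Int.prime_two
  have p3 : Prime (3 : ℤ) := Int.prime_three
  have hx2 : ¬ (2 : ℤ) ∣ x := by
    rintro ⟨x', rfl⟩
    have hz : (2 : ℤ) ∣ z := by
      have : (2 : ℤ) ∣ 5 * z ^ 3 := ⟨-(12 * x' ^ 3 + 2 * y ^ 3), by linear_combination h⟩
      exact p2.dvd_of_dvd_pow ((p2.dvd_or_dvd this).resolve_left (by decide))
    obtain ⟨z', rfl⟩ := hz
    have hy : (2 : ℤ) ∣ y := p2.dvd_of_dvd_pow (n := 3) ⟨-(3 * x' ^ 3 + 5 * z' ^ 3),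
      mul_left_cancel₀ (show (4 : ℤ) ≠ 0 by norm_num) (by linear_combination h)⟩
    exact hp 2 Nat.prime_two ⟨x', rfl⟩ hy ⟨z', rfl⟩
  have hz2 : ¬ (2 : ℤ) ∣ z := by
    rintro ⟨z', rfl⟩
    have : (2 : ℤ) ∣ 3 * x ^ 3 := ⟨-(20 * z' ^ 3 + 2 * y ^ 3), by linear_combination h⟩
    exact hx2 (p2.dvd_of_dvd_pow ((p2.dvd_or_dvd this).resolve_left (by decide)))
  have hz3 : ¬ (3 : ℤ) ∣ z := by
    rintro ⟨z', rfl⟩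
    have hy : (3 : ℤ) ∣ y := by
      have : (3 : ℤ) ∣ 4 * y ^ 3 := ⟨-(x ^ 3 + 45 * z' ^ 3), by linear_combination h⟩
      exact p3.dvd_of_dvd_pow ((p3.dvd_or_dvd this).resolve_left (by decide))
    obtain ⟨y', rfl⟩ := hy
    have hx : (3 : ℤ) ∣ x := p3.dvd_of_dvd_pow (n := 3) ⟨-(12 * y' ^ 3 + 15 * z' ^ 3),
      mul_left_cancel₀ (show (3 : ℤ) ≠ 0 by norm_num) (by linear_combination h)⟩
    exact hp 3 Nat.prime_three hx ⟨y', rfl⟩ ⟨z', rfl⟩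
  have hxy : IsCoprime y x := by
    rw [Int.isCoprime_iff_gcd_eq_one]
    by_contra hg
    obtain ⟨p, hpp, hpd⟩ := Nat.exists_prime_and_dvd hg
    have hpy : (p : ℤ) ∣ y := (Int.natCast_dvd_natCast.mpr hpd).trans (Int.gcd_dvd_left ..)
    have hpx : (p : ℤ) ∣ x := (Int.natCast_dvd_natCast.mpr hpd).trans (Int.gcd_dvd_right ..)
    refine hp p hpp hpx hpy ?_
    by_contra hpz
    have hpi : Prime (p : ℤ) := Nat.prime_iff_prime_int.mp hpp
    have hc : IsCoprime ((p : ℤ) ^ 3) (z ^ 3) := ((hpi.coprime_iff_not_dvd).mpr hpz).pow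
    have hd : (p : ℤ) ^ 3 ∣ 5 * z ^ 3 := by
      obtain ⟨x', rfl⟩ := hpx
      obtain ⟨y', rfl⟩ := hpy
      exact ⟨-(3 * x' ^ 3 + 4 * y' ^ 3), by linear_combination h⟩
    have h5 := Int.le_of_dvd (by norm_num) (hc.dvd_of_dvd_mul_right hd)
    have h8 : (2 : ℤ) ^ 3 ≤ (p : ℤ) ^ 3 := by
      have := hpp.two_le
      gcongr
      exact_mod_cast this
    omega
  have hk : (5 : ℤ) ∣ x + 2 * y := by
    have key : ∀ x y z : ZMod 5, 3 * x ^ 3 + 4 * y ^ 3 + 5 * z ^ 3 = 0 → x + 2 * y = 0 := by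
      decide +kernel
    have := key x y z (by exact_mod_cast congrArg (Int.cast : ℤ → ZMod 5) h)
    have h' : ((x + 2 * y : ℤ) : ZMod 5) = 0 := by exact_mod_cast this
    exact (ZMod.intCast_zmod_eq_zero_iff_dvd _ 5).mp h'
  obtain ⟨k, hk⟩ := hk
  have c2x : IsCoprime 2 x := (p2.coprime_iff_not_dvd).mpr hx2
  have c2z : IsCoprime 2 z := (p2.coprime_iff_not_dvd).mpr hz2
  have c3z : IsCoprime 3 z := (p3.coprime_iff_not_dvd).mpr hz3
  obtain ⟨K, _, _, t, B, ht, hB⟩ := exists_field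
  refine primitive_core B t ht hB x y z k h (by linarith) (c2x.mul_left hxy) ?_
  have := c2z.mul_left (c3z.mul_left c3z)
  norm_num at this
  exact this

theorem descent (n : ℕ) : ∀ x y z : ℤ, x.natAbs + y.natAbs + z.natAbs ≤ n →
    3 * x ^ 3 + 4 * y ^ 3 + 5 * z ^ 3 = 0 → x = 0 ∧ y = 0 ∧ z = 0 := by
  induction n with
  | zero => intro x y z h _; omega
  | succ n ih =>
    intro x y z hn h
    by_contra h0
    refine primitive x y z h ?_
    rintro p hp ⟨x, rfl⟩ ⟨y, rfl⟩ ⟨z, rfl⟩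
    have hp0 : (p : ℤ) ≠ 0 := by exact_mod_cast hp.ne_zero
    have h' : 3 * x ^ 3 + 4 * y ^ 3 + 5 * z ^ 3 = 0 := by
      apply mul_left_cancel₀ (pow_ne_zero 3 hp0)
      linear_combination h
    have hlt : x.natAbs + y.natAbs + z.natAbs ≤ n := by
      simp only [Int.natAbs_mul, Int.natAbs_natCast] at hn
      have := hp.two_le
      have hs : x.natAbs + y.natAbs + z.natAbs ≠ 0 := by
        intro hs
        apply h0
        have : x = 0 ∧ y = 0 ∧ z = 0 := by omega
        simp [this]
      have : 2 * (x.natAbs + y.natAbs + z.natAbs) ≤ p * (x.natAbs + y.natAbs + z.natAbs) := by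
        gcongr
      nlinarith
    have := ih x y z hlt h'
    apply h0
    simp [this]

end SelmerAux

/-- Selmer's example: `3x³ + 4y³ + 5z³ = 0` has no nontrivial rational solution. -/
theorem selmer_no_rational_points :
    ¬ ∃ x y z : ℚ, ¬(x = 0 ∧ y = 0 ∧ z = 0) ∧
      3 * x ^ 3 + 4 * y ^ 3 + 5 * z ^ 3 = 0 := by
  rintro ⟨x, y, z, h0, h⟩
  obtain ⟨A, B, C, N, hN, rfl, rfl, rfl⟩ := SelmerAux.common_denom x y z
  have hN' : (N : ℚ) ≠ 0 := by exact_mod_cast hN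
  field_simp at h
  have h' : 3 * A ^ 3 + 4 * B ^ 3 + 5 * C ^ 3 = 0 := by
    have : ((3 * A ^ 3 + 4 * B ^ 3 + 5 * C ^ 3 : ℤ) : ℚ) = 0 := by push_cast; linear_combination h
    exact_mod_cast this
  obtain ⟨rfl, rfl, rfl⟩ := SelmerAux.descent _ A B C le_rfl h'
  simp at h0
end

section
/- The only rational solutions of 60x³ + y³ + z³ = 0 up to scalar multiplication are the scalar multiples of (0, 1, −1); that is, if x, y, z ∈ Q satisfy 60x³ + y³ + z³ = 0 then x = 0 and z = −y. -/
open Polynomial NumberField Module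

/-- `θ` generates the pure cubic field `K` and `θ ^ 3 = d`. -/
structure PureCubic {K : Type} [Field K] [NumberField K] (d : ℤ) (θ : 𝓞 K) : Prop where
  cube : θ ^ 3 = (d : 𝓞 K)
  irr : Irreducible (X ^ 3 - C (d : ℚ) : ℚ[X])
  fin : finrank ℚ K = 3

theorem lift_root {K : Type} [Field K] [NumberField K] {d : ℤ} (r : K) (hr : r ^ 3 = (d : K)) :
    ∃ θ : 𝓞 K, θ ^ 3 = (d : 𝓞 K) := by
  have hi : IsIntegral ℤ r := by
    refine ⟨X ^ 3 - C d, monic_X_pow_sub_C _ (by norm_num), ?_⟩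
    simp only [eval₂_sub, eval₂_X_pow, eval₂_C, hr]
    simp
  obtain ⟨θ, rfl⟩ : ∃ θ : 𝓞 K, (θ : K) = r := ⟨⟨r, hi⟩, rfl⟩
  refine ⟨θ, ?_⟩
  apply RingOfIntegers.ext
  simpa using hr

theorem exists_pureCubic (d : ℤ) (hd : ∀ b : ℚ, b ^ 3 ≠ d) :
    ∃ (K : Type) (_ : Field K) (_ : NumberField K) (θ : 𝓞 K), PureCubic d θ := by
  have hirr : Irreducible (X ^ 3 - C (d : ℚ) : ℚ[X]) :=
    (X_pow_sub_C_irreducible_iff_of_prime Nat.prime_three).2 hd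
  have : Fact (Irreducible (X ^ 3 - C (d : ℚ) : ℚ[X])) := ⟨hirr⟩
  have hne : (X ^ 3 - C (d : ℚ) : ℚ[X]) ≠ 0 := hirr.ne_zero
  have hfd : FiniteDimensional ℚ (AdjoinRoot (X ^ 3 - C (d : ℚ) : ℚ[X])) :=
    (AdjoinRoot.powerBasis hne).finite
  have hnf : NumberField (AdjoinRoot (X ^ 3 - C (d : ℚ) : ℚ[X])) := 
    { to_charZero := charZero_of_injective_algebraMap (algebraMap ℚ _).injective
      to_finiteDimensional := hfd }
  have hroot : (AdjoinRoot.root (X ^ 3 - C (d : ℚ) : ℚ[X])) ^ 3 = ((d : ℤ) : AdjoinRoot (X ^ 3 - C (d : ℚ) : ℚ[X])) := by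
    have := AdjoinRoot.eval₂_root (X ^ 3 - C (d : ℚ) : ℚ[X])
    simp only [eval₂_sub, eval₂_X_pow, eval₂_C] at this
    rw [sub_eq_zero] at this
    rw [this]; simp
  obtain ⟨θ, hθ⟩ := lift_root _ hroot
  refine ⟨AdjoinRoot (X ^ 3 - C (d : ℚ) : ℚ[X]), inferInstance, hnf, θ, hθ, hirr, ?_⟩
  rw [(AdjoinRoot.powerBasis hne).finrank, AdjoinRoot.powerBasis_dim, natDegree_X_pow_sub_C]

namespace PureCubic
variable {K : Type} [Field K] [NumberField K] {d : ℤ} {θ : 𝓞 K}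

theorem cubeK (h : PureCubic d θ) : (θ : K) ^ 3 = (d : K) := by
  have := congrArg (fun x : 𝓞 K => (x : K)) h.cube
  simpa using this

theorem minpoly_eq (h : PureCubic d θ) : minpoly ℚ (θ : K) = X ^ 3 - C (d : ℚ) := by
  symm
  apply minpoly.eq_of_irreducible_of_monic h.irr
  · simp [h.cubeK]
  · exact monic_X_pow_sub_C _ (by norm_num)

theorem linInd (h : PureCubic d θ) : LinearIndependent ℚ ![(1 : K), θ, (θ : K) ^ 2] := by
  have h1 := linearIndependent_pow (K := ℚ) (θ : K)
  have hdeg : (minpoly ℚ (θ : K)).natDegree = 3 := by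
    rw [h.minpoly_eq, natDegree_X_pow_sub_C]
  have h2 := h1.comp (finCongr hdeg.symm) (finCongr hdeg.symm).injective
  have e : ((fun i : Fin (minpoly ℚ (θ : K)).natDegree => (θ : K) ^ (i : ℕ)) ∘
      (finCongr hdeg.symm)) = ![(1 : K), θ, (θ : K) ^ 2] := by
    funext i
    fin_cases i <;> simp
  rw [e] at h2
  exact h2

theorem indep (h : PureCubic d θ) {a b c : ℚ}
    (e : (a : K) + b * θ + c * (θ : K) ^ 2 = 0) : a = 0 ∧ b = 0 ∧ c = 0 := by
  have := Fintype.linearIndependent_iff.1 h.linInd ![a, b, c] (by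
    simp [Fin.sum_univ_three, Algebra.smul_def]; simpa using e)
  exact ⟨this 0, this 1, this 2⟩

theorem indepZ (h : PureCubic d θ) {a b c : ℤ}
    (e : (a : 𝓞 K) + b * θ + c * θ ^ 2 = 0) : a = 0 ∧ b = 0 ∧ c = 0 := by
  have e' := congrArg (fun x : 𝓞 K => (x : K)) e
  simp at e'
  have := h.indep (a := a) (b := b) (c := c) (by simpa using e')
  exact_mod_cast this

noncomputable def bas (h : PureCubic d θ) : Basis (Fin 3) ℚ K :=
  basisOfLinearIndependentOfCardEqFinrank h.linInd (by simp [h.fin])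

theorem bas_coe (h : PureCubic d θ) : ⇑h.bas = ![(1 : K), θ, (θ : K) ^ 2] := by
  simp [bas]

theorem repr_eq (h : PureCubic d θ) (a b c : ℚ) (x : K)
    (e : x = (a : K) + b * θ + c * (θ : K) ^ 2) : ⇑(h.bas.repr x) = ![a, b, c] := by
  have : x = ∑ i, ![a, b, c] i • h.bas i := by
    simp [Fin.sum_univ_three, Algebra.smul_def, h.bas_coe, e]
  rw [this]
  exact h.bas.repr_sum_self _

theorem exists_coords (h : PureCubic d θ) (x : K) :
    ∃ a b c : ℚ, x = (a : K) + b * θ + c * (θ : K) ^ 2 := by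
  refine ⟨h.bas.repr x 0, h.bas.repr x 1, h.bas.repr x 2, ?_⟩
  conv_lhs => rw [← h.bas.sum_repr x]
  simp [Fin.sum_univ_three, Algebra.smul_def, h.bas_coe]

theorem mulMatrix (h : PureCubic d θ) (a b c : ℚ) :
    Algebra.leftMulMatrix h.bas ((a : K) + b * θ + c * (θ : K) ^ 2) =
      !![a, d * c, d * b; b, a, d * c; c, b, a] := by
  have h3 := h.cubeK
  ext i j
  rw [Algebra.leftMulMatrix_eq_repr_mul]
  fin_cases j
  · rw [h.repr_eq a b c _ (by simp [h.bas_coe])]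
    fin_cases i <;> simp
  · rw [h.repr_eq (d * c) a b _ (by simp [h.bas_coe]; linear_combination (c : K) * h3)]
    fin_cases i <;> simp
  · rw [h.repr_eq (d * b) (d * c) a _ (by
      simp [h.bas_coe]; linear_combination ((b : K) + c * θ) * h3)]
    fin_cases i <;> simp

theorem trace_eq (h : PureCubic d θ) (a b c : ℚ) :
    Algebra.trace ℚ K ((a : K) + b * θ + c * (θ : K) ^ 2) = 3 * a := by
  rw [Algebra.trace_eq_matrix_trace h.bas, h.mulMatrix]
  simp [Matrix.trace, Fin.sum_univ_three]; ring

theorem norm_eq (h : PureCubic d θ) (a b c : ℚ) :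
    Algebra.norm ℚ ((a : K) + b * θ + c * (θ : K) ^ 2) =
      a ^ 3 + d * b ^ 3 + d ^ 2 * c ^ 3 - 3 * d * a * b * c := by
  rw [Algebra.norm_eq_matrix_det h.bas, h.mulMatrix, Matrix.det_fin_three]
  simp; ring

theorem absNorm_eq (h : PureCubic d θ) (a b c : ℤ) :
    Ideal.absNorm (Ideal.span {(a : 𝓞 K) + b * θ + c * θ ^ 2}) =
      (a ^ 3 + d * b ^ 3 + d ^ 2 * c ^ 3 - 3 * d * a * b * c).natAbs := by
  rw [Ideal.absNorm_span_singleton]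
  congr 1
  have := h.norm_eq a b c
  have h2 : ((Algebra.norm ℤ ((a : 𝓞 K) + b * θ + c * θ ^ 2) : ℤ) : ℚ) = _ :=
    Algebra.coe_norm_int _
  have h3 : (((a : 𝓞 K) + b * θ + c * θ ^ 2 : 𝓞 K) : K) = ((a : ℚ) : K) + ((b : ℚ) : K) * θ + ((c : ℚ) : K) * (θ : K) ^ 2 := by
    simp
  rw [h3, this] at h2
  exact_mod_cast h2

theorem discr_le (h : PureCubic d θ) : |discr K| ≤ 27 * d ^ 2 := by
  have h3 := h.cubeK
  have hd : Algebra.discr ℚ ![(1 : K), θ, (θ : K) ^ 2] = -27 * d ^ 2 := by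
    have hM : Algebra.traceMatrix ℚ ![(1 : K), θ, (θ : K) ^ 2] =
        !![(3 : ℚ), 0, 0; 0, 0, 3 * (d : ℚ); 0, 3 * (d : ℚ), 0] := by
      have t : ∀ (x : K) (a b c : ℚ), x = (a : K) + b * θ + c * (θ : K) ^ 2 →
          Algebra.trace ℚ K x = 3 * a := fun x a b c e => by rw [e, h.trace_eq]
      ext i j
      fin_cases i <;> fin_cases j <;> simp only [Algebra.traceMatrix_apply, Algebra.traceForm_apply]
      · rw [t _ 1 0 0 (by simp)]; simp
      · rw [t _ 0 1 0 (by simp)]; simp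
      · rw [t _ 0 0 1 (by simp)]; simp
      · rw [t _ 0 1 0 (by simp)]; simp
      · rw [t _ 0 0 1 (by simp; ring)]; simp
      · rw [t _ d 0 0 (by simp; linear_combination h3)]; simp
      · rw [t _ 0 0 1 (by simp)]; simp
      · rw [t _ d 0 0 (by simp; linear_combination h3)]; simp
      · rw [t _ 0 d 0 (by simp; linear_combination (θ : K) * h3)]; simp
    rw [Algebra.discr_def, hM, Matrix.det_fin_three]
    simp; ring
  have hcard : Fintype.card (Free.ChooseBasisIndex ℤ (𝓞 K)) = Fintype.card (Fin 3) := by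
    rw [← finrank_eq_card_chooseBasisIndex, RingOfIntegers.rank, h.fin]; simp
  let B : Basis (Fin 3) ℤ (𝓞 K) := (RingOfIntegers.basis K).reindex (Fintype.equivOfCardEq hcard)
  let f : Fin 3 → 𝓞 K := ![1, θ, θ ^ 2]
  have hB : Algebra.discr ℤ B = discr K := discr_eq_discr K B
  have hf : Algebra.discr ℤ f = (B.toMatrix f).det ^ 2 * discr K := by
    rw [← hB, ← Algebra.discr_of_matrix_vecMul]
    congr 1
    exact (Basis.toMatrix_map_vecMul B f).symm
  have hfd : Algebra.discr ℤ f = -27 * d ^ 2 := by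
    have : ((Algebra.discr ℤ f : ℤ) : ℚ) = Algebra.discr ℚ ![(1 : K), θ, (θ : K) ^ 2] := by
      rw [Algebra.discr_def, Algebra.discr_def]
      change Int.castRingHom ℚ _ = _
      rw [RingHom.map_det]
      congr 1
      ext i j
      simp only [RingHom.mapMatrix_apply, Matrix.map_apply, Algebra.traceMatrix_apply, Algebra.traceForm_apply, Int.coe_castRingHom]
      rw [Algebra.coe_trace_int]
      congr 1
      fin_cases i <;> fin_cases j <;> simp [f]
    rw [hd] at this
    exact_mod_cast this
  have hd0 : d ≠ 0 := by
    rintro rfl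
    have := h.cubeK
    have hz : (θ : K) = 0 := by simpa using this
    have := h.indep (a := 0) (b := 1) (c := 0) (by simp [hz])
    simp at this
  have hdet : (B.toMatrix f).det ^ 2 ≥ 1 := by
    have : (B.toMatrix f).det ≠ 0 := by
      intro h0
      rw [h0] at hf
      rw [hfd] at hf
      have : d ^ 2 = 0 := by linarith
      exact hd0 (by simpa using this)
    have := sq_nonneg (B.toMatrix f).det
    have : (B.toMatrix f).det ^ 2 ≠ 0 := by positivity
    omega
  have hk : |(-27 * d ^ 2 : ℤ)| = (B.toMatrix f).det ^ 2 * |discr K| := by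
    rw [← hfd, hf, abs_mul, abs_of_nonneg (sq_nonneg _)]
  have : |(-27 * d ^ 2 : ℤ)| = 27 * d ^ 2 := by
    rw [abs_mul, abs_of_nonneg (sq_nonneg d)]; norm_num
  rw [← this, hk]
  nlinarith [abs_nonneg (discr K)]

end PureCubic
open Polynomial NumberField Module

namespace PureCubic
variable {K : Type} [Field K] [NumberField K] {d : ℤ} {θ : 𝓞 K}

theorem exists_complex (h : PureCubic d θ) : InfinitePlace.nrComplexPlaces K ≠ 0 := by
  intro h0
  classical
  have hem : IsEmpty {w : InfinitePlace K // w.IsComplex} := Fintype.card_eq_zero_iff.1 h0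
  have hreal : ∀ φ : K →+* ℂ, ComplexEmbedding.IsReal φ := by
    intro φ
    rw [← InfinitePlace.isReal_mk_iff, ← InfinitePlace.not_isComplex_iff_isReal]
    exact fun hc => hem.false ⟨_, hc⟩
  have hval : ∀ φ : K →+* ℂ, ∃ r : ℝ, φ θ = r ∧ r ^ 3 = d := by
    intro φ
    have h1 : (starRingEnd ℂ) (φ θ) = φ θ := RingHom.congr_fun (hreal φ) (θ : K)
    obtain ⟨r, hr⟩ := Complex.conj_eq_iff_real.1 h1
    refine ⟨r, hr, ?_⟩
    have h2 := congrArg φ h.cubeK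
    rw [map_pow, hr, map_intCast] at h2
    exact_mod_cast h2
  have hsub : Subsingleton (K →+* ℂ) := by
    refine ⟨fun φ ψ => ?_⟩
    obtain ⟨r, hr, hr3⟩ := hval φ
    obtain ⟨s, hs, hs3⟩ := hval ψ
    have hrs : r = s := (Odd.strictMono_pow (R := ℝ) (n := 3) (by decide)).injective (hr3.trans hs3.symm)
    ext x
    obtain ⟨a, b, c, rfl⟩ := h.exists_coords x
    simp [hr, hs, hrs]
  have h3 := Embeddings.card K ℂ
  have := Fintype.card_le_one_iff_subsingleton.2 hsub
  rw [h3, h.fin] at this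
  omega

theorem places (h : PureCubic d θ) : InfinitePlace.nrRealPlaces K = 1 ∧ InfinitePlace.nrComplexPlaces K = 1 := by
  have h1 := InfinitePlace.card_add_two_mul_card_eq_rank (K := K)
  have h2 := h.exists_complex
  rw [h.fin] at h1
  omega

theorem rank_eq (h : PureCubic d θ) : Units.rank K = 1 := by
  rw [Units.rank, InfinitePlace.card_eq_nrRealPlaces_add_nrComplexPlaces, h.places.1, h.places.2]

theorem exists_fund (h : PureCubic d θ) : ∃ η : (𝓞 K)ˣ, ∀ u : (𝓞 K)ˣ, ∃ (s : (𝓞 K)ˣ) (k : ℤ),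
    s ^ 3 = s ∧ u = s * η ^ k := by
  have hr := h.rank_eq
  have hs : Subsingleton (Fin (Units.rank K)) := by rw [hr]; infer_instance
  refine ⟨Units.fundSystem K ⟨0, by omega⟩, fun u => ?_⟩
  obtain ⟨⟨ζ, e⟩, hu, -⟩ := Units.exist_unique_eq_mul_prod K u
  refine ⟨ζ, e ⟨0, by omega⟩, ?_, ?_⟩
  · rcases Units.torsion_eq_one_or_neg_one_of_odd_finrank (by rw [h.fin]; decide) ζ with hz | hz
    · rw [hz]; simp
    · rw [hz]; ext; simp; ring
  · rw [hu]
    simp only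
    rw [Fintype.prod_subsingleton _ (⟨0, by omega⟩ : Fin (Units.rank K))]

theorem units_mod_cubes (h : PureCubic d θ) (ε : (𝓞 K)ˣ) (hε : ∀ β : 𝓞 K, β ^ 3 ≠ ε)
    (u : (𝓞 K)ˣ) : ∃ v : (𝓞 K)ˣ, u = v ^ 3 ∨ u = ε * v ^ 3 ∨ u = ε⁻¹ * v ^ 3 := by
  obtain ⟨η, hη⟩ := h.exists_fund
  obtain ⟨s, k, hs, hk⟩ := hη ε
  obtain ⟨t, l, ht, hl⟩ := hη u
  have h0 : k % 3 ≠ 0 := by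
    intro h0
    apply hε ((s * η ^ (k / 3) : (𝓞 K)ˣ) : 𝓞 K)
    rw [← Units.val_pow_eq_pow_val, mul_pow, hs, hk, ← zpow_natCast, ← zpow_mul]
    congr 3
    push_cast; omega
  have key : ∀ j : ℤ, 3 ∣ (l - j * k) → ∃ v : (𝓞 K)ˣ, u = ε ^ j * v ^ 3 := by
    rintro j ⟨m, hm⟩
    refine ⟨t * s ^ (-j) * η ^ m, ?_⟩
    have e1 : (s ^ (-j)) ^ 3 = s ^ (-j) := by
      rw [← zpow_natCast, zpow_comm, zpow_natCast, hs]
    rw [hl, hk, mul_pow, mul_pow, e1, ht, mul_zpow]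
    have e2 : η ^ l = (η ^ k) ^ j * (η ^ m) ^ 3 := by
      rw [← zpow_natCast, ← zpow_mul, ← zpow_mul, ← zpow_add]
      congr 1; push_cast; linarith
    rw [e2]
    have e3 : s ^ j * s ^ (-j) = 1 := by rw [← zpow_add]; simp
    calc t * ((η ^ k) ^ j * (η ^ m) ^ 3) = (s ^ j * s ^ (-j)) * (t * ((η ^ k) ^ j * (η ^ m) ^ 3)) := by
          rw [e3, one_mul]
      _ = _ := by
          simp only [mul_assoc, mul_left_comm]
  have h3 : 3 ∣ (l - 0 * k) ∨ 3 ∣ (l - 1 * k) ∨ 3 ∣ (l - (-1) * k) := by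
    have k1 : k % 3 = 1 ∨ k % 3 = 2 := by omega
    have l1 : l % 3 = 0 ∨ l % 3 = 1 ∨ l % 3 = 2 := by omega
    rcases k1 with k1 | k1 <;> rcases l1 with l1 | l1 | l1 <;> omega
  rcases h3 with h3 | h3 | h3
  · obtain ⟨v, hv⟩ := key _ h3
    exact ⟨v, Or.inl (by simpa using hv)⟩
  · obtain ⟨v, hv⟩ := key _ h3
    exact ⟨v, Or.inr (Or.inl (by simpa using hv))⟩
  · obtain ⟨v, hv⟩ := key _ h3
    exact ⟨v, Or.inr (Or.inr (by simpa using hv))⟩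

open Ideal in
theorem pid_of (h : PureCubic d θ) (M : ℕ) (hd0 : 0 < d) (hM : 1.4719 * (d : ℝ) < M + 1)
    (hP : ∀ P : Ideal (𝓞 K), P.IsPrime → P ≠ ⊥ → absNorm P ≤ M → Submodule.IsPrincipal P) :
    IsPrincipalIdealRing (𝓞 K) := by
  apply RingOfIntegers.isPrincipalIdealRing_of_isPrincipal_of_norm_le_of_isPrime
  intro I hI hn
  apply hP _ hI (nonZeroDivisors.coe_ne_zero I)
  rw [h.places.2, h.fin] at hn
  have h1 : √|(discr K : ℝ)| ≤ 5.1962 * d := by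
    rw [Real.sqrt_le_iff]
    have hdr : (0 : ℝ) < d := by exact_mod_cast hd0
    refine ⟨by positivity, ?_⟩
    have : (|discr K| : ℝ) ≤ 27 * d ^ 2 := by exact_mod_cast h.discr_le
    nlinarith [sq_nonneg (d : ℝ)]
  have hpi : 4 / Real.pi ≤ 4 / 3.1415 := by
    have := Real.pi_gt_d4
    apply div_le_div_of_nonneg_left <;> linarith
  have hpi0 : 0 ≤ 4 / Real.pi := by positivity
  have h2 : (4 / Real.pi) ^ 1 * (((Nat.factorial 3 : ℕ) : ℝ) / ((3 : ℕ) : ℝ) ^ 3 * √|(discr K : ℝ)|) ≤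
      4 / 3.1415 * (6 / 27 * (5.1962 * d)) := by
    rw [pow_one]
    apply mul_le_mul hpi _ (by positivity) (by norm_num)
    simp only [Nat.factorial]
    norm_num at h1 ⊢
    linarith
  have h3 : ((absNorm (I : Ideal (𝓞 K)) : ℕ) : ℝ) < ((M + 1 : ℕ) : ℝ) := by
    push_cast
    have hdr : (0 : ℝ) < d := by exact_mod_cast hd0
    have h4 : 4 / 3.1415 * (6 / 27 * (5.1962 * (d : ℝ))) ≤ 1.4719 * d := by
      rw [show 4 / 3.1415 * (6 / 27 * (5.1962 * (d : ℝ))) = (4 / 3.1415 * (6 / 27) * 5.1962) * d by ring]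
      apply mul_le_mul_of_nonneg_right _ hdr.le
      norm_num
    exact lt_of_le_of_lt (hn.trans (h2.trans h4)) hM
  have := Nat.cast_lt.1 h3
  omega

open Ideal in
theorem principal_of_mem (h : PureCubic d θ) (P : Ideal (𝓞 K)) (hP : P.IsPrime) (a b c : ℤ)
    (hm : (a : 𝓞 K) + b * θ + c * θ ^ 2 ∈ P)
    (hn : (a ^ 3 + d * b ^ 3 + d ^ 2 * c ^ 3 - 3 * d * a * b * c).natAbs.Prime) :
    Submodule.IsPrincipal P := by
  have h1 := h.absNorm_eq a b c
  have hirr : Irreducible (absNorm (span {(a : 𝓞 K) + b * θ + c * θ ^ 2})) := by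
    rw [h1]; exact hn
  have hp := isPrime_of_irreducible_absNorm hirr
  have hne : span {(a : 𝓞 K) + b * θ + c * θ ^ 2} ≠ ⊥ := by
    intro h0
    rw [h0, absNorm_bot] at h1
    rw [← h1] at hn
    exact absurd hn (by decide)
  have hmax := hp.isMaximal hne
  have := hmax.eq_of_le hP.ne_top ((span_singleton_le_iff_mem P).2 hm)
  rw [← this]
  exact ⟨_, rfl⟩

open Ideal in
theorem exists_prime_mem (P : Ideal (𝓞 K)) (hP : P.IsPrime) (hb : P ≠ ⊥) (M : ℕ)
    (hM : absNorm P ≤ M) : ∃ p : ℕ, p.Prime ∧ p ≤ M ∧ (p : 𝓞 K) ∈ P := by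
  have hmem : ((absNorm P : ℕ) : 𝓞 K) ∈ P := absNorm_mem P
  have h0 : absNorm P ≠ 0 := fun h0 => hb (absNorm_eq_zero_iff.1 h0)
  have : ∀ n : ℕ, n ≠ 0 → n ≤ M → (n : 𝓞 K) ∈ P → ∃ p : ℕ, p.Prime ∧ p ≤ M ∧ (p : 𝓞 K) ∈ P := by
    intro n
    induction n using Nat.strong_induction_on with
    | _ n ih =>
      intro h0 hn hm
      by_cases h1 : n = 1
      · subst h1
        exact absurd ((eq_top_iff_one P).2 (by simpa using hm)) hP.ne_top
      · obtain ⟨p, hp, k, rfl⟩ := Nat.exists_prime_and_dvd h1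
        have hk0 : k ≠ 0 := by rintro rfl; simp at h0
        push_cast at hm
        rcases hP.mem_or_mem hm with hm | hm
        · exact ⟨p, hp, le_trans (Nat.le_mul_of_pos_right _ (by omega)) hn, hm⟩
        · have := hp.two_le
          exact ih k (by nlinarith [Nat.pos_of_ne_zero hk0]) hk0
            (le_trans (Nat.le_mul_of_pos_left _ (by omega)) hn) hm
  exact this _ h0 hM hmem

open Ideal in
theorem pow_card_mem (P : Ideal (𝓞 K)) (hP : P.IsPrime) (hb : P ≠ ⊥) (q : ℕ)
    (hq : absNorm P = q) (x : 𝓞 K) : x ^ q - x ∈ P := by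
  have hmax := hP.isMaximal hb
  let := Ideal.Quotient.field P
  have hfin : Finite (𝓞 K ⧸ P) := by
    apply Nat.finite_of_card_ne_zero
    have : absNorm P = Nat.card (𝓞 K ⧸ P) := by rw [absNorm_apply, Submodule.cardQuot_apply]
    rw [← this]
    exact fun h0 => hb (absNorm_eq_zero_iff.1 h0)
  let := Fintype.ofFinite (𝓞 K ⧸ P)
  have hc : Fintype.card (𝓞 K ⧸ P) = q := by
    rw [← hq, absNorm_apply, Submodule.cardQuot_apply, Nat.card_eq_fintype_card]
  rw [← Ideal.Quotient.eq_zero_iff_mem, map_sub, map_pow, ← hc, FiniteField.pow_card, sub_self]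

open Ideal in
theorem absNorm_dvd (h : PureCubic d θ) (P : Ideal (𝓞 K)) (a b c : ℤ)
    (hm : (a : 𝓞 K) + b * θ + c * θ ^ 2 ∈ P) :
    absNorm P ∣ (a ^ 3 + d * b ^ 3 + d ^ 2 * c ^ 3 - 3 * d * a * b * c).natAbs := by
  rw [← h.absNorm_eq a b c]
  exact absNorm_dvd_absNorm_of_le ((span_singleton_le_iff_mem P).2 hm)

end PureCubic
open Polynomial NumberField Module

namespace PureCubic
variable {K : Type} [Field K] [NumberField K] {d : ℤ} {θ : 𝓞 K}

theorem not_mem_of_isCoprime {R : Type} [CommRing R] {P : Ideal R} (hP : P.IsPrime) {a b : ℤ}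
    (hab : IsCoprime a b) (ha : (a : R) ∈ P) : (b : R) ∉ P := by
  intro hb
  obtain ⟨s, t, e⟩ := hab
  apply hP.ne_top
  rw [Ideal.eq_top_iff_one]
  have : (1 : R) = s * a + t * b := by exact_mod_cast (congrArg (Int.cast (R := R)) e).symm
  rw [this]
  exact P.add_mem (P.mul_mem_left _ ha) (P.mul_mem_left _ hb)

open Ideal in
theorem pid2 {θ : 𝓞 K} (h : PureCubic 2 θ) : IsPrincipalIdealRing (𝓞 K) := by
  have h3 := h.cube
  push_cast at h3
  refine h.pid_of 2 (by norm_num) (by norm_num) fun P hP hb hn => ?_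
  obtain ⟨p, hp, hpM, hpP⟩ := exists_prime_mem P hP hb 2 hn
  have : p = 2 := le_antisymm hpM hp.two_le
  subst this
  have hθ : θ ∈ P := hP.mem_of_pow_mem 3 (by rw [h3]; simpa using hpP)
  exact h.principal_of_mem P hP 0 1 0 (by simpa using hθ) (by norm_num)

open Ideal in
theorem pid3 {θ : 𝓞 K} (h : PureCubic 3 θ) : IsPrincipalIdealRing (𝓞 K) := by
  have h3 := h.cube
  push_cast at h3
  refine h.pid_of 4 (by norm_num) (by norm_num) fun P hP hb hn => ?_
  obtain ⟨p, hp, hpM, hpP⟩ := exists_prime_mem P hP hb 4 hn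
  have : p = 2 ∨ p = 3 := by
    interval_cases p <;> first | omega | exact absurd hp (by norm_num)
  rcases this with rfl | rfl
  · have h2 : (θ - 1) * (1 + θ + θ ^ 2) ∈ P := by
      have : (θ - 1) * (1 + θ + θ ^ 2) = 2 := by linear_combination h3
      rw [this]; simpa using hpP
    rcases hP.mem_or_mem h2 with h2 | h2
    · exact h.principal_of_mem P hP (-1) 1 0 (by convert h2 using 1; push_cast; ring) (by norm_num)
    · have hd := h.absNorm_dvd P 1 1 1 (by simpa using h2)
      norm_num at hd
      have hd2 := (Nat.dvd_prime_pow Nat.prime_two (m := 2)).1 (by simpa using hd)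
      obtain ⟨k, hk, hk'⟩ := hd2
      interval_cases k
      · exact absurd (absNorm_eq_one_iff.1 (by simpa using hk')) hP.ne_top
      · have := pow_card_mem P hP hb 2 (by simpa using hk') θ
        have h4 : θ * (θ - 1) ∈ P := by convert this using 1; ring
        rcases hP.mem_or_mem h4 with h4 | h4
        · have h5 : ((3 : ℤ) : 𝓞 K) ∈ P := by
            push_cast
            rw [← h3]
            exact P.pow_mem_of_mem h4 3 (by norm_num)
          exact absurd (by simpa using hpP) (not_mem_of_isCoprime hP (b := 2) (by norm_num) h5)
        · exact h.principal_of_mem P hP (-1) 1 0 (by convert h4 using 1; push_cast; ring) (by norm_num)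
      · have hle : span {1 + θ + θ ^ 2} ≤ P := (span_singleton_le_iff_mem P).2 h2
        obtain ⟨J, hJ⟩ := dvd_iff_le.2 hle
        have hN : absNorm (span {1 + θ + θ ^ 2}) = 4 := by
          have := h.absNorm_eq 1 1 1
          rw [show ((1 : ℤ) : 𝓞 K) + (1 : ℤ) * θ + (1 : ℤ) * θ ^ 2 = 1 + θ + θ ^ 2 by
            push_cast; ring] at this
          rw [this]; norm_num
        rw [hJ, map_mul, hk'] at hN
        have : absNorm J = 1 := by omega
        rw [absNorm_eq_one_iff.1 this, mul_top] at hJ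
        rw [← hJ]
        exact ⟨_, rfl⟩
  · have hθ : θ ∈ P := hP.mem_of_pow_mem 3 (by rw [h3]; simpa using hpP)
    exact h.principal_of_mem P hP 0 1 0 (by simpa using hθ) (by norm_num)

open Ideal in
theorem pid5 {θ : 𝓞 K} (h : PureCubic 5 θ) : IsPrincipalIdealRing (𝓞 K) := by
  have h3 := h.cube
  push_cast at h3
  refine h.pid_of 7 (by norm_num) (by norm_num) fun P hP hb hn => ?_
  obtain ⟨p, hp, hpM, hpP⟩ := exists_prime_mem P hP hb 7 hn
  have : p = 2 ∨ p = 3 ∨ p = 5 ∨ p = 7 := by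
    interval_cases p <;> first | omega | exact absurd hp (by norm_num)
  rcases this with rfl | rfl | rfl | rfl
  · have h2 : (3 - θ ^ 2) * (9 + 5 * θ + 3 * θ ^ 2) ∈ P := by
      have : (3 - θ ^ 2) * (9 + 5 * θ + 3 * θ ^ 2) = 2 := by linear_combination (-5 - 3 * θ) * h3
      rw [this]; simpa using hpP
    rcases hP.mem_or_mem h2 with h2 | h2
    · exact h.principal_of_mem P hP 3 0 (-1) (by convert h2 using 1; push_cast; ring) (by norm_num)
    · have hd := h.absNorm_dvd P 9 5 3 (by simpa using h2)
      norm_num at hd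
      have hd2 := (Nat.dvd_prime_pow Nat.prime_two (m := 2)).1 (by simpa using hd)
      obtain ⟨k, hk, hk'⟩ := hd2
      interval_cases k
      · exact absurd (absNorm_eq_one_iff.1 (by simpa using hk')) hP.ne_top
      · have := pow_card_mem P hP hb 2 (by simpa using hk') θ
        have h4 : θ * (θ - 1) ∈ P := by convert this using 1; ring
        rcases hP.mem_or_mem h4 with h4 | h4
        · have h5 : ((5 : ℤ) : 𝓞 K) ∈ P := by
            push_cast
            rw [← h3]
            exact P.pow_mem_of_mem h4 3 (by norm_num)
          exact absurd (by simpa using hpP) (not_mem_of_isCoprime hP (b := 2) (by norm_num) h5)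
        · have h6 : ((2 : ℕ) : 𝓞 K) - (θ + 1) * (θ - 1) ∈ P :=
            P.sub_mem hpP (P.mul_mem_left _ h4)
          exact h.principal_of_mem P hP 3 0 (-1) (by convert h6 using 1; push_cast; ring) (by norm_num)
      · have hle : span {9 + 5 * θ + 3 * θ ^ 2} ≤ P := (span_singleton_le_iff_mem P).2 h2
        obtain ⟨J, hJ⟩ := dvd_iff_le.2 hle
        have hN : absNorm (span {9 + 5 * θ + 3 * θ ^ 2}) = 4 := by
          have := h.absNorm_eq 9 5 3
          rw [show ((9 : ℤ) : 𝓞 K) + (5 : ℤ) * θ + (3 : ℤ) * θ ^ 2 = 9 + 5 * θ + 3 * θ ^ 2 by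
            push_cast; ring] at this
          rw [this]; norm_num
        rw [hJ, map_mul, hk'] at hN
        have : absNorm J = 1 := by omega
        rw [absNorm_eq_one_iff.1 this, mul_top] at hJ
        rw [← hJ]
        exact ⟨_, rfl⟩
  · have h4 : (2 - θ) ^ 3 ∈ P := by
      have : (2 - θ) ^ 3 = (1 - 4 * θ + 2 * θ ^ 2) * ((3 : ℕ) : 𝓞 K) := by
        push_cast; linear_combination -h3
      rw [this]
      exact P.mul_mem_left _ hpP
    have h5 := hP.mem_of_pow_mem 3 h4
    exact h.principal_of_mem P hP 2 (-1) 0 (by convert h5 using 1; push_cast; ring) (by norm_num)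
  · have hθ : θ ∈ P := hP.mem_of_pow_mem 3 (by rw [h3]; simpa using hpP)
    exact h.principal_of_mem P hP 0 1 0 (by simpa using hθ) (by norm_num)
  · exfalso
    have hd := h.absNorm_dvd P 7 0 0 (by simpa using hpP)
    norm_num at hd
    have hd2 := (Nat.dvd_prime_pow (by norm_num : Nat.Prime 7) (m := 3)).1 (by simpa using hd)
    obtain ⟨k, hk, hk'⟩ := hd2
    have h7 : ((7 : ℤ) : 𝓞 K) ∈ P := by simpa using hpP
    interval_cases k
    · exact absurd (absNorm_eq_one_iff.1 (by simpa using hk')) hP.ne_top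
    · have := pow_card_mem P hP hb 7 (by simpa using hk') θ
      have h4 : ((24 : ℤ) : 𝓞 K) * θ ∈ P := by
        convert this using 1; push_cast; linear_combination (-θ ^ 4 - 5 * θ) * h3
      rcases hP.mem_or_mem h4 with h4 | h4
      · exact not_mem_of_isCoprime hP (by norm_num) h7 h4
      · have h5 : ((5 : ℤ) : 𝓞 K) ∈ P := by
          push_cast
          rw [← h3]
          exact P.pow_mem_of_mem h4 3 (by norm_num)
        exact not_mem_of_isCoprime hP (by norm_num) h7 h5
    · omega
    · omega

open Ideal in
theorem pid6 {θ : 𝓞 K} (h : PureCubic 6 θ) : IsPrincipalIdealRing (𝓞 K) := by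
  have h3 := h.cube
  push_cast at h3
  refine h.pid_of 8 (by norm_num) (by norm_num) fun P hP hb hn => ?_
  obtain ⟨p, hp, hpM, hpP⟩ := exists_prime_mem P hP hb 8 hn
  have : p = 2 ∨ p = 3 ∨ p = 5 ∨ p = 7 := by
    interval_cases p <;> first | omega | exact absurd hp (by norm_num)
  rcases this with rfl | rfl | rfl | rfl
  · have hθ : θ ∈ P := hP.mem_of_pow_mem 3 (by
      rw [h3, show (6 : 𝓞 K) = 3 * ((2 : ℕ) : 𝓞 K) by norm_num]; exact P.mul_mem_left _ hpP)
    have h5 := P.sub_mem hpP hθ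
    exact h.principal_of_mem P hP 2 (-1) 0 (by convert h5 using 1; push_cast; ring) (by norm_num)
  · have hθ : θ ∈ P := hP.mem_of_pow_mem 3 (by
      rw [h3, show (6 : 𝓞 K) = 2 * ((3 : ℕ) : 𝓞 K) by norm_num]; exact P.mul_mem_left _ hpP)
    have h5 := P.add_mem hpP (P.mul_mem_left (2 + θ) hθ)
    exact h.principal_of_mem P hP 3 2 1 (by convert h5 using 1; push_cast; ring) (by norm_num)
  · have hd := h.absNorm_dvd P 5 0 0 (by simpa using hpP)
    norm_num at hd
    have hd2 := (Nat.dvd_prime_pow (by norm_num : Nat.Prime 5) (m := 3)).1 (by simpa using hd)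
    obtain ⟨k, hk, hk'⟩ := hd2
    have h7 : ((5 : ℤ) : 𝓞 K) ∈ P := by simpa using hpP
    interval_cases k
    · exact absurd (absNorm_eq_one_iff.1 (by simpa using hk')) hP.ne_top
    · have := pow_card_mem P hP hb 5 (by simpa using hk') θ
      have h4 : θ * (6 * θ - 1) ∈ P := by
        convert this using 1; linear_combination (-θ ^ 2) * h3
      rcases hP.mem_or_mem h4 with h4 | h4
      · have h5 : ((6 : ℤ) : 𝓞 K) ∈ P := by
          push_cast
          rw [← h3]
          exact P.pow_mem_of_mem h4 3 (by norm_num)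
        exact absurd h5 (not_mem_of_isCoprime hP (by norm_num) h7)
      · have h5 := P.sub_mem (P.mul_mem_left θ h7) h4
        exact h.principal_of_mem P hP 1 (-1) 0 (by convert h5 using 1; push_cast; ring) (by norm_num)
    · omega
    · omega
  · have h4 : (θ + 1) * ((θ + 2) * (θ + 4)) ∈ P := by
      have : (θ + 1) * ((θ + 2) * (θ + 4)) = (2 + θ ^ 2 + 2 * θ) * ((7 : ℕ) : 𝓞 K) := by
        push_cast; linear_combination h3
      rw [this]
      exact P.mul_mem_left _ hpP
    rcases hP.mem_or_mem h4 with h4 | h4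
    · exact h.principal_of_mem P hP 1 1 0 (by convert h4 using 1; push_cast; ring) (by norm_num)
    rcases hP.mem_or_mem h4 with h4 | h4
    · have h5 := P.sub_mem hpP (P.mul_mem_left θ h4)
      exact h.principal_of_mem P hP 7 (-2) (-1) (by convert h5 using 1; push_cast; ring) (by norm_num)
    · have h5 := P.sub_mem (P.mul_mem_left (3 - θ) h4) hpP
      exact h.principal_of_mem P hP 5 (-1) (-1) (by convert h5 using 1; push_cast; ring) (by norm_num)

theorem descent [IsPrincipalIdealRing (𝓞 K)] {D : ℤ} {φ : 𝓞 K} (hφ : φ ^ 3 = (D : 𝓞 K))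
    {x y z m r : ℤ} (hxy : IsCoprime x y) (hz : IsCoprime z (3 * D))
    (e : x ^ 3 + D * y ^ 3 = m * z ^ 3) (hm : m ≠ 0) (hr : m ∣ x - r * y) {α β : 𝓞 K}
    (hαβ : α * β = (m : 𝓞 K)) (hα : α ∣ r + φ) (hβ : β ∣ (r : 𝓞 K) ^ 2 - r * φ + φ ^ 2) :
    ∃ (u : (𝓞 K)ˣ) (b : 𝓞 K), (x : 𝓞 K) + y * φ = α * u * b ^ 3 := by
  obtain ⟨k, hk⟩ := hr
  have hx : (x : 𝓞 K) = r * y + m * k := by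
    have : x = r * y + m * k := by linarith
    exact_mod_cast congrArg (Int.cast (R := 𝓞 K)) this
  have hm0 : (m : 𝓞 K) ≠ 0 := by exact_mod_cast hm
  have ha : α ∣ (x : 𝓞 K) + y * φ := by
    have : (x : 𝓞 K) + y * φ = α * (β * k) + y * (r + φ) := by
      rw [hx]; linear_combination (-k : 𝓞 K) * hαβ
    rw [this]
    exact dvd_add (dvd_mul_right _ _) (hα.mul_left _)
  have hb : β ∣ (x : 𝓞 K) ^ 2 - x * y * φ + y ^ 2 * φ ^ 2 := by
    have : (x : 𝓞 K) ^ 2 - x * y * φ + y ^ 2 * φ ^ 2 =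
        β * (α * k * (2 * r * y + m * k - y * φ)) + y ^ 2 * ((r : 𝓞 K) ^ 2 - r * φ + φ ^ 2) := by
      rw [hx]; linear_combination (-k * (2 * r * y + m * k - y * φ) : 𝓞 K) * hαβ
    rw [this]
    exact dvd_add (dvd_mul_right _ _) (hβ.mul_left _)
  obtain ⟨a', ha'⟩ := ha
  obtain ⟨b', hb'⟩ := hb
  have eK : (x : 𝓞 K) ^ 3 + D * y ^ 3 = m * z ^ 3 := by exact_mod_cast congrArg (Int.cast (R := 𝓞 K)) e
  have hab : a' * b' = (z : 𝓞 K) ^ 3 := by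
    apply mul_left_cancel₀ hm0
    rw [← eK, ← hαβ]
    have : α * β * (a' * b') = (α * a') * (β * b') := by ring
    rw [this, ← ha', ← hb']
    linear_combination (y : 𝓞 K) ^ 3 * hφ
  have hcop : IsCoprime a' b' := by
    obtain ⟨s, t, hst⟩ := hxy.pow (m := 2) (n := 2)
    obtain ⟨s', t', hst'⟩ := hz.pow_left (m := 3)
    have hst1 : (s : 𝓞 K) * x ^ 2 + t * y ^ 2 = 1 := by exact_mod_cast congrArg (Int.cast (R := 𝓞 K)) hst
    have hst2 : (s' : 𝓞 K) * z ^ 3 + t' * (3 * D) = 1 := by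
      exact_mod_cast congrArg (Int.cast (R := 𝓞 K)) hst'
    have e1 : β * b' - α * a' * (y * φ - 2 * x) = 3 * x ^ 2 := by
      rw [← ha', ← hb']; ring
    have e2 : φ * (β * b' - α * a' * (x - 2 * y * φ)) = 3 * D * y ^ 2 := by
      rw [← ha', ← hb']; linear_combination 3 * (y : 𝓞 K) ^ 2 * hφ
    have e3 : D * s * (β * b' - α * a' * (y * φ - 2 * x)) +
        t * (φ * (β * b' - α * a' * (x - 2 * y * φ))) = 3 * D := by
      rw [e1, e2]; linear_combination (3 * D : 𝓞 K) * hst1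
    refine ⟨s' * b' + t' * (D * s * (- α * (y * φ - 2 * x)) + t * φ * (- α * (x - 2 * y * φ))),
      t' * (D * s * β + t * φ * β), ?_⟩
    linear_combination hst2 + t' * e3 + s' * hab
  obtain ⟨b, u, hu⟩ := exists_associated_pow_of_mul_eq_pow' hcop hab
  exact ⟨u, b, by rw [ha', ← hu]; ring⟩

theorem coords (h : PureCubic d θ) (b : 𝓞 K) (hb : b ≠ 0) : ∃ n g u v w : ℤ, n ≠ 0 ∧ g ≠ 0 ∧
    IsCoprime n g ∧ (∀ p : ℕ, p.Prime → ¬ ((p : ℤ) ∣ u ∧ (p : ℤ) ∣ v ∧ (p : ℤ) ∣ w)) ∧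
    (n : 𝓞 K) * b = g * (u + v * θ + w * θ ^ 2) := by
  obtain ⟨q0, q1, q2, hq⟩ := h.exists_coords (b : K)
  obtain ⟨N, hN, u0, v0, w0, hu0, hv0, hw0⟩ : ∃ N : ℤ, N ≠ 0 ∧ ∃ u0 v0 w0 : ℤ,
      (N : ℚ) * q0 = u0 ∧ (N : ℚ) * q1 = v0 ∧ (N : ℚ) * q2 = w0 := by
    refine ⟨q0.den * q1.den * q2.den, by positivity, q0.num * q1.den * q2.den,
      q1.num * q0.den * q2.den, q2.num * q0.den * q1.den, ?_, ?_, ?_⟩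
    · push_cast
      linear_combination (q1.den * q2.den : ℚ) * Rat.mul_den_eq_num q0
    · push_cast
      linear_combination (q0.den * q2.den : ℚ) * Rat.mul_den_eq_num q1
    · push_cast
      linear_combination (q0.den * q1.den : ℚ) * Rat.mul_den_eq_num q2
  have e0 : (N : 𝓞 K) * b = u0 + v0 * θ + w0 * θ ^ 2 := by
    apply RingOfIntegers.ext
    have a1 : (N : K) * q0 = u0 := by exact_mod_cast congrArg (Rat.cast (K := K)) hu0
    have a2 : (N : K) * q1 = v0 := by exact_mod_cast congrArg (Rat.cast (K := K)) hv0
    have a3 : (N : K) * q2 = w0 := by exact_mod_cast congrArg (Rat.cast (K := K)) hw0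
    have hq' : algebraMap (𝓞 K) K b = _ := hq
    simp only [map_mul, map_add, map_pow, map_intCast]
    rw [hq', ← a1, ← a2, ← a3]; ring
  obtain ⟨g1, hg1⟩ : ∃ g1 : ℕ, g1 = Int.gcd u0 (Int.gcd v0 w0) := ⟨_, rfl⟩
  have hg10 : g1 ≠ 0 := by
    intro h0
    rw [h0] at hg1
    have h1 := Int.gcd_eq_zero_iff.1 hg1.symm
    have h2 := Int.gcd_eq_zero_iff.1 (by exact_mod_cast h1.2 : Int.gcd v0 w0 = 0)
    rw [h1.1, h2.1, h2.2] at e0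
    simp at e0
    exact e0.elim hN hb
  have d1 : (g1 : ℤ) ∣ u0 := by rw [hg1]; exact Int.gcd_dvd_left ..
  have d23 : (g1 : ℤ) ∣ (Int.gcd v0 w0 : ℤ) := by rw [hg1]; exact Int.gcd_dvd_right ..
  obtain ⟨u, hu⟩ := d1
  obtain ⟨v, hv⟩ := d23.trans (Int.gcd_dvd_left ..)
  obtain ⟨w, hw⟩ := d23.trans (Int.gcd_dvd_right ..)
  obtain ⟨g2, hg2⟩ : ∃ g2 : ℕ, g2 = Int.gcd N g1 := ⟨_, rfl⟩
  have hg20 : (g2 : ℤ) ≠ 0 := by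
    intro h0
    have h0' : g2 = 0 := by exact_mod_cast h0
    rw [h0'] at hg2
    exact hN (Int.gcd_eq_zero_iff.1 hg2.symm).1
  obtain ⟨n, hn⟩ : (g2 : ℤ) ∣ N := by rw [hg2]; exact Int.gcd_dvd_left ..
  obtain ⟨g, hg⟩ : (g2 : ℤ) ∣ g1 := by rw [hg2]; exact Int.gcd_dvd_right ..
  refine ⟨n, g, u, v, w, ?_, ?_, ?_, ?_, ?_⟩
  · rintro rfl; simp at hn; exact hN hn
  · rintro rfl; simp at hg; exact hg10 hg
  · rw [Int.isCoprime_iff_gcd_eq_one]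
    have h1 : Int.gcd ((g2 : ℤ) * n) (g2 * g) = g2 * Int.gcd n g := by
      rw [Int.gcd_mul_left]; simp
    rw [← hn, ← hg, ← hg2] at h1
    have : g2 ≠ 0 := by exact_mod_cast hg20
    exact Nat.eq_of_mul_eq_mul_left (by omega : 0 < g2) (by rw [mul_one]; exact h1.symm)
  · rintro p hp ⟨p1, p2, p3⟩
    have h1 : ((g1 : ℤ) * p) ∣ g1 := by
      conv_rhs => rw [hg1]
      refine Int.dvd_coe_gcd ?_ (Int.dvd_coe_gcd ?_ ?_)
      · rw [hu]; exact mul_dvd_mul_left _ p1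
      · rw [hv]; exact mul_dvd_mul_left _ p2
      · rw [hw]; exact mul_dvd_mul_left _ p3
    have h2 : g1 * p ∣ g1 := by exact_mod_cast h1
    have h3 := Nat.le_of_dvd (by omega) h2
    have := hp.two_le
    nlinarith [Nat.pos_of_ne_zero hg10]
  · have hK : ((g2 : ℤ) : 𝓞 K) ≠ 0 := by exact_mod_cast hg20
    apply mul_left_cancel₀ hK
    have q1 : ((N : ℤ) : 𝓞 K) = (g2 : ℤ) * n := by exact_mod_cast congrArg (Int.cast (R := 𝓞 K)) hn
    have q2 : (((g1 : ℤ) : ℤ) : 𝓞 K) = (g2 : ℤ) * g := by rw [hg]; push_cast; ring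
    have q3 : (u0 : 𝓞 K) = (g1 : ℤ) * u := by rw [hu]; push_cast; ring
    have q4 : (v0 : 𝓞 K) = (g1 : ℤ) * v := by rw [hv]; push_cast; ring
    have q5 : (w0 : 𝓞 K) = (g1 : ℤ) * w := by rw [hw]; push_cast; ring
    rw [q1, q3, q4, q5, q2] at e0
    linear_combination e0

/-- Compare coordinates in `X₀ + X₁ θ + X₂ θ² = (g₀ + g₁ θ + g₂ θ²) b³`. -/
theorem coords_cube (h : PureCubic d θ) {X0 X1 X2 g0 g1 g2 : ℤ} {b : 𝓞 K} (hb : b ≠ 0)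
    (e : (X0 : 𝓞 K) + X1 * θ + X2 * θ ^ 2 = (g0 + g1 * θ + g2 * θ ^ 2) * b ^ 3) :
    ∃ n g u v w A B C : ℤ, n ≠ 0 ∧ g ≠ 0 ∧
    IsCoprime n g ∧ (∀ p : ℕ, p.Prime → ¬ ((p : ℤ) ∣ u ∧ (p : ℤ) ∣ v ∧ (p : ℤ) ∣ w)) ∧
    A = u ^ 3 + d * v ^ 3 + d ^ 2 * w ^ 3 + 6 * d * u * v * w ∧
    B = 3 * (u ^ 2 * v + d * (u * w ^ 2 + v ^ 2 * w)) ∧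
    C = 3 * (u ^ 2 * w + u * v ^ 2 + d * v * w ^ 2) ∧
    n ^ 3 * X0 = g ^ 3 * (g0 * A + d * g1 * C + d * g2 * B) ∧
    n ^ 3 * X1 = g ^ 3 * (g0 * B + g1 * A + d * g2 * C) ∧
    n ^ 3 * X2 = g ^ 3 * (g0 * C + g1 * B + g2 * A) := by
  obtain ⟨n, g, u, v, w, hn, hg, hc, hp, he⟩ := h.coords b hb
  refine ⟨n, g, u, v, w, _, _, _, hn, hg, hc, hp, rfl, rfl, rfl, ?_⟩
  have h3 := h.cube
  have hcube : ((n : 𝓞 K) * b) ^ 3 = g ^ 3 * ((u : 𝓞 K) + v * θ + w * θ ^ 2) ^ 3 := by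
    rw [he]; ring
  obtain ⟨A, hA⟩ : ∃ A : ℤ, A = u ^ 3 + d * v ^ 3 + d ^ 2 * w ^ 3 + 6 * d * u * v * w := ⟨_, rfl⟩
  obtain ⟨B, hB⟩ : ∃ B : ℤ, B = 3 * (u ^ 2 * v + d * (u * w ^ 2 + v ^ 2 * w)) := ⟨_, rfl⟩
  obtain ⟨C, hC⟩ : ∃ C : ℤ, C = 3 * (u ^ 2 * w + u * v ^ 2 + d * v * w ^ 2) := ⟨_, rfl⟩
  have h4 : ((u : 𝓞 K) + v * θ + w * θ ^ 2) ^ 3 = A + B * θ + C * θ ^ 2 := by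
    rw [hA, hB, hC]
    push_cast
    linear_combination ((v : 𝓞 K) ^ 3 + 6 * u * v * w + w ^ 3 * (θ ^ 3 + d) +
      3 * (u * w ^ 2 + v ^ 2 * w) * θ + 3 * v * w ^ 2 * θ ^ 2) * h3
  rw [h4] at hcube
  rw [← hA, ← hB, ← hC]
  have key : ((n ^ 3 * X0 - g ^ 3 * (g0 * A + d * g1 * C + d * g2 * B) : ℤ) : 𝓞 K) +
      ((n ^ 3 * X1 - g ^ 3 * (g0 * B + g1 * A + d * g2 * C) : ℤ) : 𝓞 K) * θ +
      ((n ^ 3 * X2 - g ^ 3 * (g0 * C + g1 * B + g2 * A) : ℤ) : 𝓞 K) * θ ^ 2 = 0 := by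
    push_cast
    linear_combination (n : 𝓞 K) ^ 3 * e + (g0 + g1 * θ + g2 * θ ^ 2) * hcube +
      (g : 𝓞 K) ^ 3 * (g1 * C + g2 * B + g2 * C * θ) * h3
  obtain ⟨k0, k1, k2⟩ := h.indepZ key
  exact ⟨by linarith, by linarith, by linarith⟩

/-- A unit that is not a cube modulo a split prime is not a cube. -/
theorem not_cube (h : PureCubic d θ) {e0 e1 e2 : ℤ} (p : ℕ) (hp : p.Prime) (r s t : ZMod p)
    (hr : r ^ 3 = d)
    (hs : s ^ 3 = d) (ht : t ^ 3 = d)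
    (hrs : ∀ u v w : ZMod p, u + v * r + w * r ^ 2 = 0 → u + v * s + w * s ^ 2 = 0 →
      u + v * t + w * t ^ 2 = 0 → u = 0 ∧ v = 0 ∧ w = 0)
    (hnc : ∀ n a : ZMod p, n ^ 3 * (e0 + e1 * r + e2 * r ^ 2) = a ^ 3 → n = 0)
    (β : 𝓞 K) : β ^ 3 ≠ (e0 : 𝓞 K) + e1 * θ + e2 * θ ^ 2 := by
  intro hβ
  have hb : β ≠ 0 := by
    rintro rfl
    obtain ⟨z0, z1, z2⟩ := h.indepZ (a := e0) (b := e1) (c := e2) (by rw [← hβ]; ring)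
    have := hnc 1 0 (by rw [z0, z1, z2]; simp)
    have : Fact p.Prime := ⟨hp⟩
    simp at *
  obtain ⟨n, g, u, v, w, A, B, C, hn, hg, hc, hpr, hA, hB, hC, x0, x1, x2⟩ :=
    h.coords_cube (X0 := e0) (X1 := e1) (X2 := e2) (g0 := 1) (g1 := 0) (g2 := 0) hb
      (by rw [← hβ]; push_cast; ring)
  have cst : ∀ {a b : ℤ}, a = b → (a : ZMod p) = b := fun h => congrArg _ h
  replace hA := cst hA
  replace hB := cst hB
  replace hC := cst hC
  replace x0 := cst x0
  replace x1 := cst x1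
  replace x2 := cst x2
  push_cast at hA hB hC x0 x1 x2
  have ev : ∀ q : ZMod p, q ^ 3 = d → (n : ZMod p) ^ 3 * (e0 + e1 * q + e2 * q ^ 2) =
      (g * (u + v * q + w * q ^ 2)) ^ 3 := by
    intro q hq
    rw [hA, hB, hC] at x0
    rw [hA, hB, hC] at x1
    rw [hA, hB, hC] at x2
    linear_combination x0 + q * x1 + q ^ 2 * x2 -
      (g : ZMod p) ^ 3 * ((v : ZMod p) ^ 3 + 6 * u * v * w + w ^ 3 * (q ^ 3 + d) +
      3 * (u * w ^ 2 + v ^ 2 * w) * q + 3 * v * w ^ 2 * q ^ 2) * hq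
  have hn0 : (n : ZMod p) = 0 := hnc _ _ (ev r hr)
  have : Fact p.Prime := ⟨hp⟩
  have hg0 : (g : ZMod p) ≠ 0 := by
    intro hg0
    obtain ⟨i, j, hij⟩ := hc
    have := cst hij
    push_cast at this
    rw [hn0, hg0] at this
    simp at this
  have ev0 : ∀ q : ZMod p, q ^ 3 = d → (u : ZMod p) + v * q + w * q ^ 2 = 0 := by
    intro q hq
    have h1 := ev q hq
    rw [hn0] at h1
    have h2 : ((g : ZMod p) * (u + v * q + w * q ^ 2)) ^ 3 = 0 := by rw [← h1]; ring
    have h3 := pow_eq_zero_iff (by norm_num) |>.1 h2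
    exact (mul_eq_zero.1 h3).resolve_left hg0
  obtain ⟨z0, z1, z2⟩ := hrs _ _ _ (ev0 r hr) (ev0 s hs) (ev0 t ht)
  exact hpr p hp ⟨(ZMod.intCast_zmod_eq_zero_iff_dvd _ _).1 z0,
    (ZMod.intCast_zmod_eq_zero_iff_dvd _ _).1 z1, (ZMod.intCast_zmod_eq_zero_iff_dvd _ _).1 z2⟩

end PureCubic
open Polynomial NumberField Module

namespace PureCubic
variable {K : Type} [Field K] [NumberField K] {d : ℤ} {θ : 𝓞 K}

theorem master (h : PureCubic d θ) [IsPrincipalIdealRing (𝓞 K)] {D : ℤ} {φ : 𝓞 K}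
    (hφ : φ ^ 3 = (D : 𝓞 K))
    {x y z m r : ℤ} (hxy : IsCoprime x y) (hz : IsCoprime z (3 * D))
    (e : x ^ 3 + D * y ^ 3 = m * z ^ 3) (hm : m ≠ 0) (hr : m ∣ x - r * y) (α β α' β' ε ε' : 𝓞 K)
    (hαβ : α * β = (m : 𝓞 K)) (hα : r + φ = α * α')
    (hβ : (r : 𝓞 K) ^ 2 - r * φ + φ ^ 2 = β * β')
    (hε : ε * ε' = 1) (hnc : ∀ β : 𝓞 K, β ^ 3 ≠ ε) :
    ∃ b : 𝓞 K, b ≠ 0 ∧ ((x : 𝓞 K) + y * φ = α * b ^ 3 ∨ (x : 𝓞 K) + y * φ = α * ε * b ^ 3 ∨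
      (x : 𝓞 K) + y * φ = α * ε' * b ^ 3) := by
  have hne : (x : 𝓞 K) + y * φ ≠ 0 := by
    intro h0
    have h1 : ((m * z ^ 3 : ℤ) : 𝓞 K) = 0 := by
      rw [← e]
      push_cast
      linear_combination (x ^ 2 - x * y * φ + y ^ 2 * φ ^ 2) * h0 - (y : 𝓞 K) ^ 3 * hφ
    have h2 : m * z ^ 3 = 0 := by exact_mod_cast h1
    have h3 : z = 0 := by simpa [hm] using h2
    rw [h3, isCoprime_zero_left, Int.isUnit_iff] at hz
    omega
  obtain ⟨u, b, hub⟩ := descent hφ hxy hz e hm hr hαβ ⟨_, hα⟩ ⟨_, hβ⟩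
  obtain ⟨v, hv⟩ := h.units_mod_cubes (Units.mkOfMulEqOne ε ε' hε) hnc u
  refine ⟨v * b, ?_, ?_⟩
  · rintro h0
    have : b = 0 := by simpa using h0
    rw [hub, this] at hne
    simp at hne
  · rw [hub]
    rcases hv with rfl | rfl | rfl
    · left; push_cast; ring
    · right; left; push_cast; rw [Units.val_mkOfMulEqOne]; ring
    · right; right; push_cast
      rw [show ((Units.mkOfMulEqOne ε ε' hε)⁻¹ : (𝓞 K)ˣ).val = ε' from rfl]; ring

theorem finish1 (h : PureCubic d θ) {x y : ℤ} (g0 g1 g2 : ℤ) {b γ : 𝓞 K} (hb : b ≠ 0)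
    (e : (x : 𝓞 K) + y * θ = γ * b ^ 3) (hγ : γ = g0 + g1 * θ + g2 * θ ^ 2) (p : ℕ) (hp : p.Prime)
    (hloc : ∀ u v w : ℤ, g0 * (3 * (u ^ 2 * w + u * v ^ 2 + d * v * w ^ 2)) +
      g1 * (3 * (u ^ 2 * v + d * (u * w ^ 2 + v ^ 2 * w))) +
      g2 * (u ^ 3 + d * v ^ 3 + d ^ 2 * w ^ 3 + 6 * d * u * v * w) = 0 →
      (p : ℤ) ∣ u ∧ (p : ℤ) ∣ v ∧ (p : ℤ) ∣ w) : False := by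
  obtain ⟨n, g, u, v, w, A, B, C, hn, hg, hc, hpr, hA, hB, hC, x0, x1, x2⟩ :=
    h.coords_cube (X0 := x) (X1 := y) (X2 := 0) (g0 := g0) (g1 := g1) (g2 := g2) hb
      (by rw [← hγ, ← e]; push_cast; ring)
  rw [mul_zero] at x2
  have := (mul_eq_zero.1 x2.symm).resolve_left (pow_ne_zero 3 hg)
  rw [hA, hB, hC] at this
  exact hpr p hp (hloc u v w this)

theorem finish2 (h : PureCubic d θ) {x y : ℤ} (g0 g1 g2 : ℤ) {b γ : 𝓞 K} (hb : b ≠ 0)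
    (e : (x : 𝓞 K) + y * θ ^ 2 = γ * b ^ 3) (hγ : γ = g0 + g1 * θ + g2 * θ ^ 2) (p : ℕ)
    (hp : p.Prime)
    (hloc : ∀ u v w : ℤ, g0 * (3 * (u ^ 2 * v + d * (u * w ^ 2 + v ^ 2 * w))) +
      g1 * (u ^ 3 + d * v ^ 3 + d ^ 2 * w ^ 3 + 6 * d * u * v * w) +
      d * g2 * (3 * (u ^ 2 * w + u * v ^ 2 + d * v * w ^ 2)) = 0 →
      (p : ℤ) ∣ u ∧ (p : ℤ) ∣ v ∧ (p : ℤ) ∣ w) : False := by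
  obtain ⟨n, g, u, v, w, A, B, C, hn, hg, hc, hpr, hA, hB, hC, x0, x1, x2⟩ :=
    h.coords_cube (X0 := x) (X1 := 0) (X2 := y) (g0 := g0) (g1 := g1) (g2 := g2) hb
      (by rw [← hγ, ← e]; push_cast; ring)
  rw [mul_zero] at x1
  have := (mul_eq_zero.1 x1.symm).resolve_left (pow_ne_zero 3 hg)
  rw [hA, hB, hC] at this
  exact hpr p hp (hloc u v w this)

theorem not_rat_cube (p : ℕ) (hp : p.Prime) (k : ℤ) (hk : ¬ (p : ℤ) ∣ k) (b : ℚ) :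
    b ^ 3 ≠ ((p * k : ℤ) : ℚ) := by
  intro hb
  have : Fact p.Prime := ⟨hp⟩
  have hk0 : k ≠ 0 := by rintro rfl; simp at hk
  have hp0 : (p : ℤ) ≠ 0 := by exact_mod_cast hp.ne_zero
  have h1 := congrArg (padicValRat p) hb
  rw [padicValRat.of_int, padicValInt.mul hp0 hk0, padicValInt.eq_zero_of_not_dvd hk,
    padicValInt.self hp.one_lt] at h1
  rw [padicValRat.pow] at h1
  push_cast at h1
  omega

theorem dvd_of_zmod {k p q : ℕ} (hq : q = k * p) (hk : k ≠ 0) {x : ℤ}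
    (hx : (k : ZMod q) * (x : ZMod q) = 0) : (p : ℤ) ∣ x := by
  have h1 : ((k * x : ℤ) : ZMod q) = 0 := by push_cast; exact hx
  rw [ZMod.intCast_zmod_eq_zero_iff_dvd, hq] at h1
  push_cast at h1
  exact Int.dvd_of_mul_dvd_mul_left (by exact_mod_cast hk) h1

theorem not_both {p : ℕ} (hp : p.Prime) {x y : ℤ} (hxy : IsCoprime x y) (hx : (p : ℤ) ∣ x)
    (hy : (p : ℤ) ∣ y) : False := by
  have := hxy.isUnit_of_dvd' hx hy
  exact (Nat.prime_iff_prime_int.1 hp).not_isUnit this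

theorem cop_of (k p q : ℕ) (hp : p.Prime) (hq : q = k * p) (hk : k ≠ 0) {x y z D m : ℤ}
    (hxy : IsCoprime x y) (e : x ^ 3 + D * y ^ 3 = m * z ^ 3) (hm : (q : ℤ) ∣ m * p ^ 3)
    (hdec : ∀ x y : ZMod q, x ^ 3 + D * y ^ 3 = 0 → (k : ZMod q) * x = 0 ∧ (k : ZMod q) * y = 0) :
    IsCoprime z p := by
  rw [isCoprime_comm, (Nat.prime_iff_prime_int.1 hp).coprime_iff_not_dvd]
  rintro ⟨z', rfl⟩
  have h1 : ((x ^ 3 + D * y ^ 3 : ℤ) : ZMod q) = 0 := by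
    rw [ZMod.intCast_zmod_eq_zero_iff_dvd, e, mul_pow, ← mul_assoc]
    exact hm.mul_right _
  obtain ⟨a, b⟩ := hdec x y (by push_cast at h1; exact h1)
  exact not_both hp hxy (dvd_of_zmod hq hk a) (dvd_of_zmod hq hk b)

theorem cong_of (k p q : ℕ) (hp : p.Prime) (hq : q = k * p) (hk : k ≠ 0) {x y z D r : ℤ}
    (hxy : IsCoprime x y) (e : x ^ 3 + D * y ^ 3 = q * z ^ 3)
    (hdec : ∀ x y : ZMod q, x ^ 3 + D * y ^ 3 = 0 → x - r * y = 0 ∨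
      (k : ZMod q) * x = 0 ∧ (k : ZMod q) * y = 0) : (q : ℤ) ∣ x - r * y := by
  have h1 : ((x ^ 3 + D * y ^ 3 : ℤ) : ZMod q) = 0 := by
    rw [ZMod.intCast_zmod_eq_zero_iff_dvd, e]
    exact dvd_mul_right _ _
  rcases hdec x y (by push_cast at h1; exact h1) with h | ⟨a, b⟩
  · rw [← ZMod.intCast_zmod_eq_zero_iff_dvd]; push_cast; exact h
  · exact (not_both hp hxy (dvd_of_zmod hq hk a) (dvd_of_zmod hq hk b)).elim

theorem eisenstein {k g0 g1 g2 : ℤ} (hk : ¬ 3 ∣ k) (hg : ¬ 3 ∣ g2) (u v w : ℤ)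
    (e : g0 * (3 * (u ^ 2 * w + u * v ^ 2 + (3 * k) * v * w ^ 2)) +
      g1 * (3 * (u ^ 2 * v + (3 * k) * (u * w ^ 2 + v ^ 2 * w))) +
      g2 * (u ^ 3 + (3 * k) * v ^ 3 + (3 * k) ^ 2 * w ^ 3 + 6 * (3 * k) * u * v * w) = 0) :
    ((3 : ℕ) : ℤ) ∣ u ∧ ((3 : ℕ) : ℤ) ∣ v ∧ ((3 : ℕ) : ℤ) ∣ w := by
  have P : Prime (3 : ℤ) := Int.prime_three
  have hu : (3 : ℤ) ∣ u := by
    have : (3 : ℤ) ∣ g2 * u ^ 3 := by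
      refine ⟨-(g0 * (u ^ 2 * w + u * v ^ 2 + (3 * k) * v * w ^ 2) +
        g1 * (u ^ 2 * v + (3 * k) * (u * w ^ 2 + v ^ 2 * w)) + g2 * (k * v ^ 3 + 3 * k ^ 2 * w ^ 3
        + 6 * k * u * v * w)), ?_⟩
      linear_combination e
    exact P.dvd_of_dvd_pow ((P.dvd_or_dvd this).resolve_left hg)
  obtain ⟨u, rfl⟩ := hu
  have hv : (3 : ℤ) ∣ v := by
    have : (3 : ℤ) ∣ g2 * (k * v ^ 3) := by
      refine ⟨-(g0 * (3 * u ^ 2 * w + u * v ^ 2 + k * v * w ^ 2) +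
        g1 * (3 * u ^ 2 * v + k * (3 * u * w ^ 2 + v ^ 2 * w)) + g2 * (3 * u ^ 3 + k ^ 2 * w ^ 3
        + 6 * k * u * v * w)), ?_⟩
      linarith
    exact P.dvd_of_dvd_pow ((P.dvd_or_dvd ((P.dvd_or_dvd this).resolve_left hg)).resolve_left hk)
  obtain ⟨v, rfl⟩ := hv
  have hw : (3 : ℤ) ∣ w := by
    have : (3 : ℤ) ∣ g2 * (k ^ 2 * w ^ 3) := by
      refine ⟨-(g0 * (u ^ 2 * w + 3 * u * v ^ 2 + k * v * w ^ 2) +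
        g1 * (3 * u ^ 2 * v + k * (u * w ^ 2 + 3 * v ^ 2 * w)) + g2 * (u ^ 3 + 3 * k * v ^ 3
        + 6 * k * u * v * w)), ?_⟩
      linarith
    exact P.dvd_of_dvd_pow ((P.dvd_or_dvd ((P.dvd_or_dvd this).resolve_left hg)).resolve_left
      (fun h => hk (P.dvd_of_dvd_pow h)))
  obtain ⟨w, rfl⟩ := hw
  exact ⟨dvd_mul_right _ _, dvd_mul_right _ _, dvd_mul_right _ _⟩

theorem vander {p : ℕ} (hp : p.Prime) {r s t : ZMod p} (hrs : r ≠ s) (hrt : r ≠ t) (hst : s ≠ t)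
    (u v w : ZMod p) (a : u + v * r + w * r ^ 2 = 0) (b : u + v * s + w * s ^ 2 = 0)
    (c : u + v * t + w * t ^ 2 = 0) : u = 0 ∧ v = 0 ∧ w = 0 := by
  have : Fact p.Prime := ⟨hp⟩
  have h1 : v + w * (r + s) = 0 := by
    apply (mul_eq_zero.1 (?_ : (r - s) * (v + w * (r + s)) = 0)).resolve_left (sub_ne_zero.2 hrs)
    linear_combination a - b
  have h2 : v + w * (r + t) = 0 := by
    apply (mul_eq_zero.1 (?_ : (r - t) * (v + w * (r + t)) = 0)).resolve_left (sub_ne_zero.2 hrt)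
    linear_combination a - c
  have h3 : w = 0 := by
    apply (mul_eq_zero.1 (?_ : (s - t) * w = 0)).resolve_left (sub_ne_zero.2 hst)
    linear_combination h1 - h2
  subst h3
  have h4 : v = 0 := by simpa using h1
  subst h4
  exact ⟨by simpa using a, rfl, rfl⟩

theorem mod8 {d g0 g1 g2 : ℤ} (hdec : ∀ u v w : ZMod 8,
      (g0 : ZMod 8) * (3 * (u ^ 2 * w + u * v ^ 2 + d * v * w ^ 2)) +
      g1 * (3 * (u ^ 2 * v + d * (u * w ^ 2 + v ^ 2 * w))) +
      g2 * (u ^ 3 + d * v ^ 3 + d ^ 2 * w ^ 3 + 6 * d * u * v * w) = 0 →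
      4 * u = 0 ∧ 4 * v = 0 ∧ 4 * w = 0) (u v w : ℤ)
    (e : g0 * (3 * (u ^ 2 * w + u * v ^ 2 + d * v * w ^ 2)) +
      g1 * (3 * (u ^ 2 * v + d * (u * w ^ 2 + v ^ 2 * w))) +
      g2 * (u ^ 3 + d * v ^ 3 + d ^ 2 * w ^ 3 + 6 * d * u * v * w) = 0) :
    ((2 : ℕ) : ℤ) ∣ u ∧ ((2 : ℕ) : ℤ) ∣ v ∧ ((2 : ℕ) : ℤ) ∣ w := by
  have e' := congrArg (Int.cast (R := ZMod 8)) e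
  push_cast at e'
  obtain ⟨a, b, c⟩ := hdec u v w e'
  exact ⟨dvd_of_zmod (k := 4) (p := 2) (q := 8) rfl (by norm_num) (by exact_mod_cast a),
    dvd_of_zmod (k := 4) (p := 2) (q := 8) rfl (by norm_num) (by exact_mod_cast b),
    dvd_of_zmod (k := 4) (p := 2) (q := 8) rfl (by norm_num) (by exact_mod_cast c)⟩

theorem mod5 {g0 g1 g2 k : ℤ} (hdec : ∀ u v w : ZMod 5,
      (g0 : ZMod 5) * (3 * (u ^ 2 * v + 2 * (u * w ^ 2 + v ^ 2 * w))) +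
      g1 * (u ^ 3 + 2 * v ^ 3 + 2 ^ 2 * w ^ 3 + 6 * 2 * u * v * w) +
      2 * g2 * (3 * (u ^ 2 * w + u * v ^ 2 + 2 * v * w ^ 2)) = 0 → v - 2 * u = 0 ∧ w - 4 * u = 0)
    (hk : ¬ 5 ∣ k)
    (hlin : ∀ u v w : ℤ, ∃ t, g0 * (3 * (u ^ 2 * (2 * u + 5 * v) + 2 * (u * (4 * u + 5 * w) ^ 2 + (2 * u + 5 * v) ^ 2 * (4 * u + 5 * w)))) +
      g1 * (u ^ 3 + 2 * (2 * u + 5 * v) ^ 3 + 2 ^ 2 * (4 * u + 5 * w) ^ 3 + 6 * 2 * u * (2 * u + 5 * v) * (4 * u + 5 * w)) +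
      2 * g2 * (3 * (u ^ 2 * (4 * u + 5 * w) + u * (2 * u + 5 * v) ^ 2 + 2 * (2 * u + 5 * v) * (4 * u + 5 * w) ^ 2)) = 5 * (k * u ^ 3 + 5 * t))
    (u v w : ℤ)
    (e : g0 * (3 * (u ^ 2 * v + 2 * (u * w ^ 2 + v ^ 2 * w))) +
      g1 * (u ^ 3 + 2 * v ^ 3 + 2 ^ 2 * w ^ 3 + 6 * 2 * u * v * w) +
      2 * g2 * (3 * (u ^ 2 * w + u * v ^ 2 + 2 * v * w ^ 2)) = 0) :
    ((5 : ℕ) : ℤ) ∣ u ∧ ((5 : ℕ) : ℤ) ∣ v ∧ ((5 : ℕ) : ℤ) ∣ w := by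
  have e' := congrArg (Int.cast (R := ZMod 5)) e
  push_cast at e'
  obtain ⟨b, c⟩ := hdec u v w e'
  have b' : ((v - 2 * u : ℤ) : ZMod 5) = 0 := by push_cast; exact b
  have c' : ((w - 4 * u : ℤ) : ZMod 5) = 0 := by push_cast; exact c
  rw [ZMod.intCast_zmod_eq_zero_iff_dvd] at b' c'
  obtain ⟨v', hv⟩ := b'
  obtain ⟨w', hw⟩ := c'
  push_cast at hv hw
  obtain rfl : v = 2 * u + 5 * v' := by linarith
  obtain rfl : w = 4 * u + 5 * w' := by linarith
  obtain ⟨t, ht⟩ := hlin u v' w'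
  rw [ht] at e
  have P : Prime (5 : ℤ) := Int.prime_ofNat_iff.2 (by norm_num)
  have h5 : (5 : ℤ) ∣ k * u ^ 3 := ⟨-t, by linarith⟩
  have := P.dvd_of_dvd_pow ((P.dvd_or_dvd h5).resolve_left hk)
  push_cast
  omega

end PureCubic

open PureCubic

theorem curve3 (x y z : ℤ) (hxy : IsCoprime x y) (e : x ^ 3 + 3 * y ^ 3 = 20 * z ^ 3) : False := by
  obtain ⟨K, _, _, θ, h⟩ := exists_pureCubic 3 (by
    have := not_rat_cube 3 (by norm_num) 1 (by norm_num); simpa using this)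
  have := pid3 h
  have h3 := h.cube
  push_cast at h3
  have hz3 : IsCoprime z (3 : ℤ) := cop_of 3 3 9 (by norm_num) rfl (by norm_num) hxy e (by norm_num)
    (by decide +kernel)
  have hr := cong_of 10 2 20 (r := 13) (by norm_num) rfl (by norm_num) hxy e (by decide +kernel)
  obtain ⟨b, hb, hc⟩ := h.master (D := 3) (φ := θ) (m := 20) (r := 13) h.cube hxy
    (by simpa using hz3.mul_right hz3) e (by norm_num) hr
    (2 + θ - θ ^ 2) (7 + θ + 3 * θ ^ 2) (5 + θ + 2 * θ ^ 2) (19 + 7 * θ - 9 * θ ^ 2)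
    (-2 + θ ^ 2) (4 + 3 * θ + 2 * θ ^ 2)
    (by push_cast; linear_combination (2 - 3 * θ) * h3)
    (by push_cast; linear_combination (-1 + 2 * θ) * h3)
    (by push_cast; linear_combination (-12 + 27 * θ) * h3)
    (by linear_combination (3 + 2 * θ) * h3)
    (by
      have := h.not_cube (e0 := -2) (e1 := 0) (e2 := 1) 61 (by norm_num) 4 5 52
        (by decide +kernel) (by decide +kernel) (by decide +kernel) (vander (by norm_num) (by decide +kernel)
          (by decide +kernel) (by decide +kernel)) (by decide +kernel)
      intro β hβ
      apply this β
      rw [hβ]; push_cast; ring)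
  rcases hc with hc | hc | hc
  · exact h.finish1 2 1 (-1) hb hc (by push_cast; ring) 2 Nat.prime_two (mod8 (by decide +kernel))
  · exact h.finish1 (-1) (-5) 4 hb hc (by push_cast; linear_combination (1 - θ) * h3) 3
      Nat.prime_three (eisenstein (k := 1) (by norm_num) (by norm_num))
  · exact h.finish1 5 4 3 hb hc (by push_cast; linear_combination (-1 - 2 * θ) * h3) 2
      Nat.prime_two (mod8 (by decide +kernel))

theorem curve4 (x y z : ℤ) (hxy : IsCoprime x y) (e : x ^ 3 + 4 * y ^ 3 = 15 * z ^ 3) : False := by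
  obtain ⟨K, _, _, θ, h⟩ := exists_pureCubic 2 (by
    have := not_rat_cube 2 (by norm_num) 1 (by norm_num); simpa using this)
  have := pid2 h
  have h3 := h.cube
  push_cast at h3
  have hz2 : IsCoprime z (2 : ℤ) := cop_of 4 2 8 (by norm_num) rfl (by norm_num) hxy e (by norm_num)
    (by decide +kernel)
  have hz3 : IsCoprime z (3 : ℤ) := cop_of 3 3 9 (by norm_num) rfl (by norm_num) hxy e (by norm_num)
    (by decide +kernel)
  have hr := cong_of 5 3 15 (r := 11) (by norm_num) rfl (by norm_num) hxy e (by decide +kernel)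
  obtain ⟨b, hb, hc⟩ := h.master (D := 4) (φ := θ ^ 2) (m := 15) (r := 11)
    (by push_cast; linear_combination (θ ^ 3 + 2) * h3) hxy
    (by simpa using hz3.mul_right (hz2.mul_right hz2)) e (by norm_num) hr
    (-1 + 2 * θ) (1 + 2 * θ + 4 * θ ^ 2) (1 + 2 * θ + 3 * θ ^ 2) (-11 + 16 * θ + θ ^ 2)
    (-1 + θ) (1 + θ + θ ^ 2)
    (by push_cast; linear_combination 8 * h3)
    (by push_cast; linear_combination (-6) * h3)
    (by push_cast; linear_combination (-66 - 4 * θ + θ) * h3)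
    (by linear_combination h3)
    (by
      have := h.not_cube (e0 := -1) (e1 := 1) (e2 := 0) 31 (by norm_num) 4 7 20
        (by decide +kernel) (by decide +kernel) (by decide +kernel)
        (vander (by norm_num) (by decide +kernel) (by decide +kernel) (by decide +kernel))
        (by decide +kernel)
      intro β hβ
      apply this β
      rw [hβ]; push_cast; ring)
  rcases hc with hc | hc | hc
  · exact h.finish2 (-1) 2 0 hb hc (by push_cast; ring) 5 Nat.prime_five
      (mod5 (k := 108) (by decide +kernel) (by norm_num) fun u v w =>
        ⟨(9) * u ^ 2 * v + (72) * u ^ 2 * w + (90) * u * w ^ 2 + (-30) * v ^ 2 * w + (20) * v ^ 3 + (40) * w ^ 3, by ring⟩)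
  · exact h.finish2 1 (-3) 2 hb hc (by push_cast; ring) 5 Nat.prime_five
      (mod5 (k := -9) (by decide +kernel) (by norm_num) fun u v w =>
        ⟨(63) * u ^ 2 * v + (-36) * u ^ 2 * w + (-90) * u * w ^ 2 + (180) * u * v * w + (30) * v ^ 2 * w + (-30) * v ^ 3 + (-60) * w ^ 3 + (120) * v * w ^ 2, by ring⟩)
  · exact h.finish2 3 1 1 hb hc (by push_cast; linear_combination 2 * h3) 5 Nat.prime_five
      (mod5 (k := 279) (by decide +kernel) (by norm_num) fun u v w =>
        ⟨(117) * u ^ 2 * v + (126) * u ^ 2 * w + (90) * u * w ^ 2 + (180) * u * v * w + (90) * u * v ^ 2 + (90) * v ^ 2 * w + (10) * v ^ 3 + (20) * w ^ 3 + (60) * v * w ^ 2, by ring⟩)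

theorem curve5 (x y z : ℤ) (hxy : IsCoprime x y) (e : x ^ 3 + 5 * y ^ 3 = 12 * z ^ 3) : False := by
  obtain ⟨K, _, _, θ, h⟩ := exists_pureCubic 5 (by
    have := not_rat_cube 5 (by norm_num) 1 (by norm_num); simpa using this)
  have := pid5 h
  have h3 := h.cube
  push_cast at h3
  have hz5 : IsCoprime z (5 : ℤ) := cop_of 5 5 25 (by norm_num) rfl (by norm_num) hxy e
    (by norm_num) (by decide +kernel)
  have hz3 : IsCoprime z (3 : ℤ) := cop_of 3 3 9 (by norm_num) rfl (by norm_num) hxy e (by norm_num)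
    (by decide +kernel)
  have hr := cong_of 6 2 12 (r := 7) (by norm_num) rfl (by norm_num) hxy e (by decide +kernel)
  obtain ⟨b, hb, hc⟩ := h.master (D := 5) (φ := θ) (m := 12) (r := 7) h.cube hxy
    (by simpa using hz3.mul_right hz5) e (by norm_num) hr
    (-2 + 3 * θ - θ ^ 2) (19 + 11 * θ + 7 * θ ^ 2) (14 + 8 * θ + 5 * θ ^ 2) (-4 + 13 * θ - 6 * θ ^ 2)
    (1 - 4 * θ + 2 * θ ^ 2) (41 + 24 * θ + 14 * θ ^ 2)
    (by push_cast; linear_combination (10 - 7 * θ) * h3)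
    (by push_cast; linear_combination (-7 + 5 * θ) * h3)
    (by push_cast; linear_combination (-25 + 42 * θ) * h3)
    (by linear_combination (-8 + 28 * θ) * h3)
    (by
      have := h.not_cube (e0 := 1) (e1 := -4) (e2 := 2) 13 (by norm_num) 7 8 11
        (by decide +kernel) (by decide +kernel) (by decide +kernel)
        (vander (by norm_num) (by decide +kernel) (by decide +kernel) (by decide +kernel))
        (by decide +kernel)
      intro β hβ
      apply this β
      rw [hβ]; push_cast; ring)
  rcases hc with hc | hc | hc
  · exact h.finish1 (-2) 3 (-1) hb hc (by push_cast; ring) 2 Nat.prime_two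
      (mod8 (by decide +kernel))
  · exact h.finish1 48 1 (-17) hb hc (by push_cast; linear_combination (10 - 2 * θ) * h3) 2
      Nat.prime_two (mod8 (by decide +kernel))
  · exact h.finish1 8 5 3 hb hc (by push_cast; linear_combination (18 - 14 * θ) * h3) 2
      Nat.prime_two (mod8 (by decide +kernel))

theorem curve6 (x y z : ℤ) (hxy : IsCoprime x y) (e : x ^ 3 + 6 * y ^ 3 = 10 * z ^ 3) : False := by
  obtain ⟨K, _, _, θ, h⟩ := exists_pureCubic 6 (by
    have := not_rat_cube 2 (by norm_num) 3 (by norm_num)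
    intro b; convert this b; norm_num)
  have := pid6 h
  have h3 := h.cube
  push_cast at h3
  have hz2 : IsCoprime z (2 : ℤ) := cop_of 2 2 4 (by norm_num) rfl (by norm_num) hxy e
    (by norm_num) (by decide +kernel)
  have hz3 : IsCoprime z (3 : ℤ) := cop_of 3 3 9 (by norm_num) rfl (by norm_num) hxy e (by norm_num)
    (by decide +kernel)
  have hr := cong_of 5 2 10 (r := 4) (by norm_num) rfl (by norm_num) hxy e (by decide +kernel)
  obtain ⟨b, hb, hc⟩ := h.master (D := 6) (φ := θ) (m := 10) (r := 4) h.cube hxy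
    (by simpa using hz3.mul_right (hz2.mul_right hz3)) e (by norm_num) hr
    (-2 + 3 * θ - θ ^ 2) (22 + 12 * θ + 7 * θ ^ 2) (13 + 7 * θ + 4 * θ ^ 2) (1 + 5 * θ - 3 * θ ^ 2)
    (1 - 6 * θ + 3 * θ ^ 2) (109 + 60 * θ + 33 * θ ^ 2)
    (by push_cast; linear_combination (9 - 7 * θ) * h3)
    (by push_cast; linear_combination (-5 + 4 * θ) * h3)
    (by push_cast; linear_combination (1 + 21 * θ) * h3)
    (by linear_combination (-18 + 99 * θ) * h3)
    (by
      have := h.not_cube (e0 := 1) (e1 := -6) (e2 := 3) 7 (by norm_num) 6 5 3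
        (by decide +kernel) (by decide +kernel) (by decide +kernel)
        (vander (by norm_num) (by decide +kernel) (by decide +kernel) (by decide +kernel))
        (by decide +kernel)
      intro β hβ
      apply this β
      rw [hβ]; push_cast; ring)
  rcases hc with hc | hc | hc
  · exact h.finish1 (-2) 3 (-1) hb hc (by push_cast; ring) 3 Nat.prime_three
      (eisenstein (k := 2) (by norm_num) (by norm_num))
  · exact h.finish1 88 (-3) (-25) hb hc (by push_cast; linear_combination (15 - 3 * θ) * h3) 3
      Nat.prime_three (eisenstein (k := 2) (by norm_num) (by norm_num))
  · exact h.finish1 16 9 5 hb hc (by push_cast; linear_combination (39 - 33 * θ) * h3) 3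
      Nat.prime_three (eisenstein (k := 2) (by norm_num) (by norm_num))
open NumberField

theorem eisenstein_ring : ∃ (R : Type) (_ : CommRing R) (_ : IsDomain R) (_ : CharZero R)
    (_ : IsPrincipalIdealRing R) (η : R), η ^ 2 + η + 1 = 0 ∧ (∀ x : R, ∃ a b : ℤ, x = a + b * η) ∧
    (∀ u : Rˣ, (u : R) = 1 ∨ (u : R) = -1 ∨ (u : R) = η ∨ (u : R) = -η ∨ (u : R) = η ^ 2 ∨
      (u : R) = - η ^ 2) := by
  have : NeZero ((3 : ℕ) : ℚ) := ⟨by norm_num⟩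
  have : IsCyclotomicExtension {3} ℚ (CyclotomicField 3 ℚ) :=
    CyclotomicField.isCyclotomicExtension 3 ℚ
  have hζ := IsCyclotomicExtension.zeta_spec 3 ℚ (CyclotomicField 3 ℚ)
  have hη : hζ.toInteger ^ 2 + hζ.toInteger + 1 = 0 := by
    have := IsCyclotomicExtension.Rat.Three.eta_sq hζ
    rw [IsCyclotomicExtension.Rat.Three.coe_eta] at this
    rw [this]; ring
  refine ⟨𝓞 (CyclotomicField 3 ℚ), inferInstance, inferInstance, inferInstance,
    IsCyclotomicExtension.Rat.three_pid _, hζ.toInteger, hη, ?_, ?_⟩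
  · intro x
    have hx : x ∈ Algebra.adjoin ℤ {hζ.toInteger} := by
      have := hζ.integralPowerBasis.adjoin_gen_eq_top
      rw [hζ.integralPowerBasis_gen] at this
      rw [this]; trivial
    induction hx using Algebra.adjoin_induction with
    | mem x hx => exact ⟨0, 1, by rw [Set.mem_singleton_iff.1 hx]; simp⟩
    | algebraMap r => exact ⟨r, 0, by simp⟩
    | add x y _ _ hx hy =>
      obtain ⟨a, b, rfl⟩ := hx
      obtain ⟨c, d, rfl⟩ := hy
      exact ⟨a + c, b + d, by push_cast; ring⟩
    | mul x y _ _ hx hy =>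
      obtain ⟨a, b, rfl⟩ := hx
      obtain ⟨c, d, rfl⟩ := hy
      exact ⟨a * c - b * d, a * d + b * c - b * d, by
        push_cast; linear_combination (b * d : 𝓞 (CyclotomicField 3 ℚ)) * hη⟩
  · intro u
    have := IsCyclotomicExtension.Rat.Three.Units.mem hζ u
    simp only [List.mem_cons, List.not_mem_nil, or_false] at this
    rcases this with rfl | rfl | rfl | rfl | rfl | rfl <;> simp

theorem norm_cube {c e v : ℤ} (hce : IsCoprime c e) (h3 : 3 ∣ e)
    (h : c ^ 2 - c * e + e ^ 2 = v ^ 3) :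
    ∃ r t : ℤ, IsCoprime r t ∧ 3 * (r * t * (r - t)) = e := by
  obtain ⟨R, _, _, _, _, η, hη, hR, hU⟩ := eisenstein_ring
  have indep : ∀ a b : ℤ, (a : R) + b * η = 0 → a = 0 ∧ b = 0 := by
    intro a b hab
    have h1 : ((a ^ 2 - a * b + b ^ 2 : ℤ) : R) = 0 := by
      push_cast
      linear_combination ((a : R) - b - b * η) * hab + b ^ 2 * hη
    have h2 : a ^ 2 - a * b + b ^ 2 = 0 := by exact_mod_cast h1
    constructor <;> nlinarith [sq_nonneg (a - b), sq_nonneg a, sq_nonneg b, sq_nonneg (a - 2 * b), sq_nonneg (2 * a - b)]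
  have hve : IsCoprime (v ^ 3) e := by
    rw [← h]
    have h1 : IsCoprime (c ^ 2) e := hce.pow_left
    have : c ^ 2 - c * e + e ^ 2 = c ^ 2 + e * (e - c) := by ring
    rw [this]
    exact h1.add_mul_left_left _
  have hv3 : IsCoprime (v ^ 3) 3 := hve.of_isCoprime_of_dvd_right h3
  obtain ⟨i, j, hij⟩ := hve.mul_right hv3
  have hij' : (i : R) * v ^ 3 + j * (e * 3) = 1 := by exact_mod_cast congrArg (Int.cast (R := R)) hij
  have hprod : ((c : R) + e * η) * (c - e - e * η) = v ^ 3 := by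
    have h' : (c : R) ^ 2 - c * e + e ^ 2 = v ^ 3 := by exact_mod_cast congrArg (Int.cast (R := R)) h
    linear_combination h' - (e : R) ^ 2 * hη
  have hcop : IsCoprime ((c : R) + e * η) (c - e - e * η) := by
    refine ⟨i * (c - e - e * η) - j * (1 + 2 * η), j * (1 + 2 * η), ?_⟩
    linear_combination hij' + (i : R) * hprod - 4 * (j : R) * e * hη
  obtain ⟨b, u, hu⟩ := exists_associated_pow_of_mul_eq_pow' hcop hprod
  obtain ⟨r, t, rfl⟩ := hR b
  have hb : ((r : R) + t * η) ^ 3 = (r ^ 3 + t ^ 3 - 3 * r * t ^ 2) + 3 * (r * t * (r - t)) * η := by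
    linear_combination (3 * (r : R) * t ^ 2 + t ^ 3 * (η - 1)) * hη
  rw [hb] at hu
  have hcop' : ∀ A B : ℤ, A = r ^ 3 + t ^ 3 - 3 * r * t ^ 2 → B = 3 * (r * t * (r - t)) →
      (∃ k l : ℤ, k * A + l * B = 1) → IsCoprime r t := by
    rintro A B rfl rfl ⟨k, l, hkl⟩
    exact ⟨k * r ^ 2 + l * (3 * (t * (r - t))), k * (t ^ 2 - 3 * r * t), by linear_combination hkl⟩
  obtain ⟨k, l, hkl⟩ := hce
  obtain ⟨A, hA⟩ : ∃ A : ℤ, A = r ^ 3 + t ^ 3 - 3 * r * t ^ 2 := ⟨_, rfl⟩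
  obtain ⟨B, hB⟩ : ∃ B : ℤ, B = 3 * (r * t * (r - t)) := ⟨_, rfl⟩
  have hu' : ((A : R) + B * η) * u = c + e * η := by rw [← hu, hA, hB]; push_cast; ring
  have hB3 : 3 ∣ B := ⟨_, hB⟩
  have fin : ∀ c' e' : ℤ, (c : R) + e * η = c' + e' * η → c = c' ∧ e = e' := by
    intro c' e' he
    have := indep (c - c') (e - e') (by push_cast; linear_combination he)
    omega
  have bad : ¬ (3 : ℤ) ∣ c := by
    intro hd
    have : IsCoprime c e := ⟨k, l, hkl⟩
    have := this.isUnit_of_dvd' hd h3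
    rw [Int.isUnit_iff] at this; omega
  rcases hU u with q | q | q | q | q | q <;> rw [q] at hu'
  · obtain ⟨h1, h2⟩ := fin A B (by rw [← hu']; ring)
    exact ⟨r, t, hcop' A B hA hB ⟨k, l, by rw [← h1, ← h2]; exact hkl⟩, by rw [h2, hB]⟩
  · obtain ⟨h1, h2⟩ := fin (-A) (-B) (by rw [← hu']; push_cast; ring)
    refine ⟨-r, -t, (hcop' A B hA hB ⟨-k, -l, by rw [h1, h2] at hkl; linarith⟩).neg_neg, ?_⟩
    rw [h2, hB]; ring
  · obtain ⟨h1, h2⟩ := fin (-B) (A - B) (by rw [← hu']; push_cast; linear_combination (B : R) * hη)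
    omega
  · obtain ⟨h1, h2⟩ := fin B (B - A) (by rw [← hu']; push_cast; linear_combination (-B : R) * hη)
    omega
  · obtain ⟨h1, h2⟩ := fin (B - A) (-A) (by
      rw [← hu']; push_cast; linear_combination ((A : R) + B * (η - 1)) * hη)
    omega
  · obtain ⟨h1, h2⟩ := fin (A - B) A (by
      rw [← hu']; push_cast; linear_combination (-(A : R) - B * (η - 1)) * hη)
    omega

theorem pull (p j : ℕ) (hp : p.Prime) {r s t m : ℤ} (hrs : IsCoprime r s) (hrt : IsCoprime r t)
    (hst : IsCoprime s t) (h : r * s * t = p ^ j * m) :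
    ∃ a b c r' s' t' : ℤ, r = a * r' ∧ s = b * s' ∧ t = c * t' ∧ r' * s' * t' = m ∧
    ((a = p ^ j ∧ b = 1 ∧ c = 1) ∨ (a = 1 ∧ b = p ^ j ∧ c = 1) ∨ (a = 1 ∧ b = 1 ∧ c = p ^ j)) := by
  have P := Nat.prime_iff_prime_int.1 hp
  have hp0 : (p : ℤ) ^ j ≠ 0 := pow_ne_zero _ P.ne_zero
  have key : ∀ x y : ℤ, IsCoprime x y → (p : ℤ) ^ j ∣ x * y → (p : ℤ) ^ j ∣ x ∨ (p : ℤ) ^ j ∣ y := by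
    intro x y hxy hd
    by_cases hx : (p : ℤ) ∣ x
    · left
      have : ¬ (p : ℤ) ∣ y := fun hy => PureCubic.not_both hp hxy hx hy
      exact (((P.coprime_iff_not_dvd).2 this).pow_left).dvd_of_dvd_mul_right hd
    · right
      exact (((P.coprime_iff_not_dvd).2 hx).pow_left).dvd_of_dvd_mul_left hd
  rcases key (r * s) t (hrt.mul_left hst) ⟨m, h⟩ with h1 | ⟨t', rfl⟩
  · rcases key r s hrs h1 with ⟨r', rfl⟩ | ⟨s', rfl⟩
    · exact ⟨_, 1, 1, r', s, t, rfl, by ring, by ring, mul_left_cancel₀ hp0 (by rw [← h]; ring),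
        by simp⟩
    · exact ⟨1, _, 1, r, s', t, by ring, rfl, by ring, mul_left_cancel₀ hp0 (by rw [← h]; ring),
        by simp⟩
  · exact ⟨1, 1, _, r, s, t', by ring, by ring, rfl, mul_left_cancel₀ hp0 (by rw [← h]; ring),
      by simp⟩

theorem sorted_case (a b c A B C w : ℤ)
    (hS : (a, b, c) ∈ [((60, 1, 1) : ℤ × ℤ × ℤ), (20, 3, 1), (15, 4, 1), (12, 5, 1), (3, 4, 5)])
    (hAB : IsCoprime (a * A) (b * B)) (hBC : IsCoprime (b * B) (c * C))
    (e : a * A ^ 3 + b * B ^ 3 + c * C ^ 3 = 0) (hA : A ∣ w) (hw : w ≠ 0) :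
    ∃ x y z : ℤ, IsCoprime y z ∧ x ≠ 0 ∧ y ^ 3 + z ^ 3 = 60 * x ^ 3 ∧ x.natAbs ≤ w.natAbs := by
  simp only [List.mem_cons, List.not_mem_nil, or_false, Prod.mk.injEq] at hS
  have hCB := (hBC.of_mul_left_right).of_mul_right_right.symm
  rcases hS with ⟨rfl, rfl, rfl⟩ | ⟨rfl, rfl, rfl⟩ | ⟨rfl, rfl, rfl⟩ | ⟨rfl, rfl, rfl⟩ | ⟨rfl, rfl, rfl⟩
  · refine ⟨-A, B, C, hCB.symm, ?_, by linear_combination e, ?_⟩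
    · intro h0
      rw [neg_eq_zero.1 h0] at hA
      exact hw (zero_dvd_iff.1 hA)
    · rw [Int.natAbs_neg]
      exact Nat.le_of_dvd (Int.natAbs_pos.2 hw) (Int.natAbs_dvd_natAbs.2 hA)
  · exact (curve3 C B (-A) hCB (by linear_combination e)).elim
  · exact (curve4 C B (-A) hCB (by linear_combination e)).elim
  · exact (curve5 C B (-A) hCB (by linear_combination e)).elim
  · refine (curve6 (2 * B) A (-C) ?_ (by linear_combination 2 * e)).elim
    have h1 : IsCoprime A (2 * (2 * B)) := by
      convert hAB.of_mul_left_right using 1; ring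
    exact h1.of_mul_right_right.symm

theorem second_step {r s w : ℤ} (hrs : IsCoprime r s) (hw : w ≠ 0)
    (h : r * s * (r - s) = 60 * w ^ 3) :
    ∃ x y z : ℤ, IsCoprime y z ∧ x ≠ 0 ∧ y ^ 3 + z ^ 3 = 60 * x ^ 3 ∧ x.natAbs ≤ w.natAbs := by
  obtain ⟨t, ht⟩ : ∃ t, t = r - s := ⟨_, rfl⟩
  have hrt : IsCoprime r t := by
    have := hrs.neg_right.add_mul_left_right 1
    rw [ht]; rwa [show -s + r * 1 = r - s by ring] at this
  have hst : IsCoprime s t := by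
    have := hrs.symm.add_mul_left_right (-1)
    rw [ht]; rwa [show r + s * -1 = r - s by ring] at this
  rw [← ht] at h
  obtain ⟨a, b, c, r', s', t', rfl, rfl, rfl, h1, d1⟩ := pull 2 2 Nat.prime_two hrs hrt hst
    (m := 15 * w ^ 3) (by rw [h]; ring)
  obtain ⟨a', b', c', r', s', t', rfl, rfl, rfl, h2, d2⟩ := pull 3 1 Nat.prime_three
    hrs.of_mul_left_right.of_mul_right_right hrt.of_mul_left_right.of_mul_right_right
    hst.of_mul_left_right.of_mul_right_right
    (m := 5 * w ^ 3) (by rw [h1]; ring)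
  obtain ⟨a3, b3, c3, r', s', t', rfl, rfl, rfl, h3, d3⟩ := pull 5 1 Nat.prime_five
    hrs.of_mul_left_right.of_mul_right_right.of_mul_left_right.of_mul_right_right
    hrt.of_mul_left_right.of_mul_right_right.of_mul_left_right.of_mul_right_right
    hst.of_mul_left_right.of_mul_right_right.of_mul_left_right.of_mul_right_right
    (m := w ^ 3) (by rw [h2]; ring)
  have c1 : IsCoprime r' s' :=
    hrs.of_mul_left_right.of_mul_right_right.of_mul_left_right.of_mul_right_right.of_mul_left_right.of_mul_right_right
  have c2 : IsCoprime r' t' :=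
    hrt.of_mul_left_right.of_mul_right_right.of_mul_left_right.of_mul_right_right.of_mul_left_right.of_mul_right_right
  have cc3 : IsCoprime s' t' :=
    hst.of_mul_left_right.of_mul_right_right.of_mul_left_right.of_mul_right_right.of_mul_left_right.of_mul_right_right
  have odd3 : Odd 3 := by decide
  obtain ⟨A, rfl⟩ := Int.eq_pow_of_mul_eq_pow_odd_left (c1.mul_right c2) odd3
    (by rw [← mul_assoc]; exact h3)
  obtain ⟨B, rfl⟩ := Int.eq_pow_of_mul_eq_pow_odd_left (c1.symm.mul_right cc3) odd3
    (by rw [← h3]; ring)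
  obtain ⟨C, rfl⟩ := Int.eq_pow_of_mul_eq_pow_odd_left (c2.symm.mul_right cc3.symm) odd3
    (by rw [← h3]; ring)
  have hAw : A ∣ w := by
    rw [← Int.pow_dvd_pow_iff (n := 3) (by norm_num), ← h3]; exact ⟨B ^ 3 * C ^ 3, by ring⟩
  have hBw : -B ∣ w := by
    rw [neg_dvd, ← Int.pow_dvd_pow_iff (n := 3) (by norm_num), ← h3]; exact ⟨A ^ 3 * C ^ 3, by ring⟩
  have hCw : -C ∣ w := by
    rw [neg_dvd, ← Int.pow_dvd_pow_iff (n := 3) (by norm_num), ← h3]; exact ⟨A ^ 3 * B ^ 3, by ring⟩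
  have red : ∀ {a b c a' b' c' X Y : ℤ},
      IsCoprime (a * (b * (c * X ^ 3))) (a' * (b' * (c' * Y ^ 3))) →
      IsCoprime (a * b * c * X) (a' * b' * c' * Y) := by
    intro a b c a' b' c' X Y hc
    refine hc.of_isCoprime_of_dvd_left (x := _) ⟨X ^ 2, by ring⟩ |>.of_isCoprime_of_dvd_right
      ⟨Y ^ 2, by ring⟩
  have k1 : IsCoprime (a * a' * a3 * A) (b * b' * b3 * -B) := by
    rw [mul_neg]; exact (red hrs).neg_right
  have k2 : IsCoprime (a * a' * a3 * A) (c * c' * c3 * -C) := by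
    rw [mul_neg]; exact (red hrt).neg_right
  have k3 : IsCoprime (b * b' * b3 * -B) (c * c' * c3 * -C) := by
    rw [mul_neg, mul_neg]; exact (red hst).neg_neg
  have e : a * a' * a3 * A ^ 3 + b * b' * b3 * (-B) ^ 3 + c * c' * c3 * (-C) ^ 3 = 0 := by
    linear_combination -ht
  clear ht h hrs hrt hst h1 h2 h3 c1 c2 cc3 red
  rcases d1 with ⟨rfl, rfl, rfl⟩ | ⟨rfl, rfl, rfl⟩ | ⟨rfl, rfl, rfl⟩ <;>
  rcases d2 with ⟨rfl, rfl, rfl⟩ | ⟨rfl, rfl, rfl⟩ | ⟨rfl, rfl, rfl⟩ <;>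
  rcases d3 with ⟨rfl, rfl, rfl⟩ | ⟨rfl, rfl, rfl⟩ | ⟨rfl, rfl, rfl⟩ <;>
  first
  | exact sorted_case _ _ _ A (-B) (-C) w (by decide) k1 k3 e hAw hw
  | exact sorted_case _ _ _ A (-C) (-B) w (by decide) k2 k3.symm (by linear_combination e) hAw hw
  | exact sorted_case _ _ _ (-B) A (-C) w (by decide) k1.symm k2 (by linear_combination e) hBw hw
  | exact sorted_case _ _ _ (-B) (-C) A w (by decide) k3 k2.symm (by linear_combination e) hBw hw
  | exact sorted_case _ _ _ (-C) A (-B) w (by decide) k2.symm k1 (by linear_combination e) hCw hw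
  | exact sorted_case _ _ _ (-C) (-B) A w (by decide) k3.symm k1.symm (by linear_combination e) hCw hw

theorem first_step {x y z : ℤ} (hyz : IsCoprime y z) (hx : x ≠ 0)
    (h : y ^ 3 + z ^ 3 = 60 * x ^ 3) :
    ∃ r t u : ℤ, IsCoprime r t ∧ u ≠ 0 ∧ r * t * (r - t) = 60 * u ^ 3 ∧ u.natAbs < x.natAbs := by
  have P3 : Prime (3 : ℤ) := Int.prime_three
  -- 3 divides y + z
  have hyz3 : (3 : ℤ) ∣ y + z := by
    have dec : ∀ y z : ZMod 3, y ^ 3 + z ^ 3 = 0 → y + z = 0 := by decide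
    have h1 : ((y ^ 3 + z ^ 3 : ℤ) : ZMod 3) = 0 := by
      rw [h, ZMod.intCast_zmod_eq_zero_iff_dvd]; exact ⟨20 * x ^ 3, by ring⟩
    have h2 := dec y z (by exact_mod_cast h1)
    have h3 : ((y + z : ℤ) : ZMod 3) = 0 := by push_cast; exact h2
    exact_mod_cast (ZMod.intCast_zmod_eq_zero_iff_dvd _ _).1 h3
  obtain ⟨s, hs⟩ := hyz3
  obtain ⟨q, hq⟩ : ∃ q, q = 3 * s ^ 2 - y * z := ⟨_, rfl⟩
  obtain rfl : z = 3 * s - y := by linarith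
  have hys : IsCoprime y (3 * s) := by
    have := hyz.add_mul_left_right 1
    rwa [show 3 * s - y + y * 1 = 3 * s by ring] at this
  have hsq : IsCoprime (3 * s) q := by
    have h1 : IsCoprime (3 * s) (y ^ 2) := hys.symm.pow_right
    have := h1.add_mul_left_right (s - y)
    rwa [show y ^ 2 + 3 * s * (s - y) = q by rw [hq]; ring] at this
  have e1 : 3 * s * q = 20 * x ^ 3 := by rw [hq]; linarith
  have hx3 : (3 : ℤ) ∣ x := by
    have : (3 : ℤ) ∣ 20 * x ^ 3 := ⟨s * q, by rw [← e1]; ring⟩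
    exact P3.dvd_of_dvd_pow ((P3.dvd_or_dvd this).resolve_left (by norm_num))
  obtain ⟨x, rfl⟩ := hx3
  have e2 : s * q = 180 * x ^ 3 := by linarith
  have hq3 : IsCoprime q 3 := hsq.of_mul_left_left.symm
  have loc : ∀ p : ℕ, p.Prime → (∀ y s : ZMod p, 3 * s ^ 2 - y * (3 * s - y) = 0 → y = 0 ∧ 3 * s = 0) →
      IsCoprime q p := by
    intro p hp dec
    rw [isCoprime_comm, (Nat.prime_iff_prime_int.1 hp).coprime_iff_not_dvd]
    intro hd
    have h1 : ((3 * s ^ 2 - y * (3 * s - y) : ℤ) : ZMod p) = 0 := by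
      rw [← hq, ZMod.intCast_zmod_eq_zero_iff_dvd]; exact hd
    obtain ⟨a, b⟩ := dec y s (by push_cast at h1; exact h1)
    refine PureCubic.not_both hp hys ((ZMod.intCast_zmod_eq_zero_iff_dvd _ _).1 a)
      ((ZMod.intCast_zmod_eq_zero_iff_dvd _ _).1 ?_)
    push_cast; exact b
  have hq2 : IsCoprime q 2 := loc 2 Nat.prime_two (by decide)
  have hq5 : IsCoprime q 5 := loc 5 Nat.prime_five (by decide)
  have hq180 : IsCoprime q 180 := by
    have := (hq2.mul_right hq2).mul_right ((hq3.mul_right hq3).mul_right hq5)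
    norm_num at this; exact this
  obtain ⟨a, rfl⟩ : (180 : ℤ) ∣ s := hq180.symm.dvd_of_dvd_mul_right ⟨x ^ 3, e2⟩
  have e3 : a * q = x ^ 3 := by linarith
  have haq : IsCoprime a q := hsq.of_mul_left_right.of_mul_left_right
  obtain ⟨⟨u, hu⟩, ⟨v, hv⟩⟩ := Int.eq_pow_of_mul_eq_pow_odd haq (by decide : Odd 3) e3
  have hx0 : x ≠ 0 := by rintro rfl; simp at hx
  have hu0 : u ≠ 0 := by
    rintro rfl
    rw [hu] at e3
    have : x ^ 3 = 0 := by rw [← e3]; ring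
    exact hx0 (by simpa using this)
  have hux : u ∣ x := by
    rw [← Int.pow_dvd_pow_iff (n := 3) (by norm_num), ← hu]; exact ⟨q, e3.symm⟩
  have hule : u.natAbs ≤ x.natAbs :=
    Nat.le_of_dvd (Int.natAbs_pos.2 hx0) (Int.natAbs_dvd_natAbs.2 hux)
  have hce : IsCoprime (y - 180 * a) (180 * a) := by
    have := (hys.of_mul_right_right).add_mul_left_left (-1)
    rwa [show y + 180 * a * -1 = y - 180 * a by ring] at this
  obtain ⟨r, t, hrt, ert⟩ := norm_cube (v := v) hce ⟨60 * a, by ring⟩ (by rw [← hv, hq]; ring)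
  refine ⟨r, t, u, hrt, hu0, by rw [← hu]; linarith, ?_⟩
  rw [Int.natAbs_mul]
  have := Int.natAbs_pos.2 hx0
  norm_num
  omega

theorem no_int_sol (n : ℕ) : ∀ x y z : ℤ, x.natAbs = n → IsCoprime y z → x ≠ 0 →
    y ^ 3 + z ^ 3 = 60 * x ^ 3 → False := by
  induction n using Nat.strong_induction_on with
  | _ n ih =>
    rintro x y z rfl hyz hx h
    obtain ⟨r, t, u, hrt, hu, e, hlt⟩ := first_step hyz hx h
    obtain ⟨x', y', z', c, hx', e', hle⟩ := second_step hrt hu e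
    exact ih _ (lt_of_le_of_lt hle hlt) x' y' z' rfl c hx' e'

theorem dvd_of_cube_dvd {g x : ℤ} (hx : x ≠ 0) (h : g ^ 3 ∣ 60 * x ^ 3) : g ∣ x := by
  have hd : 0 < Int.gcd g x := Nat.pos_of_ne_zero fun h0 => hx (Int.gcd_eq_zero_iff.1 h0).2
  obtain ⟨g', x', hc, hg, hx'⟩ := Int.exists_gcd_one hd
  obtain ⟨k, hk⟩ : ∃ k : ℤ, k = Int.gcd g x := ⟨_, rfl⟩
  have hk0 : k ≠ 0 := by rw [hk]; exact_mod_cast hd.ne'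
  rw [← hk] at hg hx'
  have h1 : g' ^ 3 ∣ 60 * x' ^ 3 := by
    rw [hg, hx', mul_pow, mul_pow, ← mul_assoc] at h
    exact Int.dvd_of_mul_dvd_mul_right (pow_ne_zero 3 hk0) h
  have h2 : g' ^ 3 ∣ 60 :=
    ((Int.isCoprime_iff_gcd_eq_one.2 hc).pow (m := 3) (n := 3)).dvd_of_dvd_mul_right h1
  have h3 : g'.natAbs ^ 3 ∣ 60 := by
    have := Int.natAbs_dvd_natAbs.2 h2
    rwa [Int.natAbs_pow] at this
  have h4 : g'.natAbs ≤ 3 := by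
    by_contra hlt
    have := Nat.le_of_dvd (by norm_num) h3
    have h5 : 4 ^ 3 ≤ g'.natAbs ^ 3 := Nat.pow_le_pow_left (by omega) 3
    omega
  have h5 : IsUnit g' := by
    rw [Int.isUnit_iff_natAbs_eq]
    interval_cases g'.natAbs <;> revert h3 <;> decide
  rw [hg, hx']
  exact mul_dvd_mul_right h5.dvd k

theorem no_int_sol' (x y z : ℤ) (hx : x ≠ 0) (h : y ^ 3 + z ^ 3 = 60 * x ^ 3) : False := by
  have hg : Int.gcd y z ≠ 0 := by
    intro h0
    obtain ⟨rfl, rfl⟩ := Int.gcd_eq_zero_iff.1 h0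
    simp at h; exact hx h
  obtain ⟨y', z', hc', hy, hz⟩ := Int.exists_gcd_one (Nat.pos_of_ne_zero hg)
  obtain ⟨g, hgg⟩ : ∃ g : ℤ, g = Int.gcd y z := ⟨_, rfl⟩
  have hg0 : g ≠ 0 := by rw [hgg]; exact_mod_cast hg
  have hc : IsCoprime y' z' := Int.isCoprime_iff_gcd_eq_one.2 hc'
  rw [← hgg] at hy hz
  have h1 : g ^ 3 ∣ 60 * x ^ 3 := ⟨y' ^ 3 + z' ^ 3, by rw [← h, hy, hz]; ring⟩
  have hgx : g ∣ x := dvd_of_cube_dvd hx h1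
  obtain ⟨x', rfl⟩ := hgx
  refine no_int_sol _ x' y' z' rfl hc (by rintro rfl; simp at hx) ?_
  apply mul_left_cancel₀ (pow_ne_zero 3 hg0)
  rw [hy, hz] at h
  linear_combination h

theorem jacobian_unique_rational_point (x y z : ℚ) (h : 60 * x ^ 3 + y ^ 3 + z ^ 3 = 0) :
    x = 0 ∧ z = -y := by
  have hx : x = 0 := by
    by_contra hx
    refine no_int_sol' (-(x.num * y.den * z.den)) (y.num * x.den * z.den) (z.num * x.den * y.den)
      ?_ ?_
    · have := Rat.num_ne_zero.2 hx
      simp [this]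
    · have : (((y.num * x.den * z.den) ^ 3 + (z.num * x.den * y.den) ^ 3 : ℤ) : ℚ) =
          ((60 * (-(x.num * y.den * z.den)) ^ 3 : ℤ) : ℚ) := by
        push_cast
        rw [← Rat.mul_den_eq_num x, ← Rat.mul_den_eq_num y, ← Rat.mul_den_eq_num z]
        linear_combination (x.den * y.den * z.den : ℚ) ^ 3 * h
      exact_mod_cast this
  refine ⟨hx, ?_⟩
  subst hx
  have h1 : z ^ 3 = (-y) ^ 3 := by linear_combination h
  exact (Odd.strictMono_pow (by decide : Odd 3)).injective h1
end

section
/- Let n ≥ 2 and let V ⊂ P^n over C be a smooth hypersurface defined by a homogeneous form F of degree d ≥ 3. Then the subgroup Φ of PGL_{n+1}(C) stabilizing V is finite. -/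
open MvPolynomial Matrix

lemma aux_finite_of_bounded {σ : Type} [Fintype σ] (S : Set (MvPolynomial σ ℂ)) (R : ℝ)
    (hb : ∀ x : σ → ℂ, (∀ p ∈ S, eval x p = 0) → ∀ i, ‖x i‖ ≤ R) :
    {x : σ → ℂ | ∀ p ∈ S, eval x p = 0}.Finite := by
  classical
  set Z := {x : σ → ℂ | ∀ p ∈ S, eval x p = 0} with hZ
  rcases Z.eq_empty_or_nonempty with h0 | ⟨x0, hx0⟩
  · rw [h0]; exact Set.finite_empty
  set I := Ideal.span S with hI
  have hZI : zeroLocus ℂ I = Z := by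
    rw [hI, zeroLocus_span]; simp [hZ, aeval_eq_eval]
  have hItop : I ≠ ⊤ := by
    intro h
    rw [h, zeroLocus_top] at hZI
    rw [← hZI] at hx0
    exact hx0
  have : Nontrivial (MvPolynomial σ ℂ ⧸ I) := Ideal.Quotient.nontrivial_iff.mpr hItop
  obtain ⟨s, g, ginj, gfin⟩ := exists_finite_inj_algHom_of_fg ℂ (MvPolynomial σ ℂ ⧸ I)
  rcases Nat.eq_zero_or_pos s with rfl | hs
  · have hfin : Module.Finite ℂ (MvPolynomial σ ℂ ⧸ I) := by
      have h1 : (g.comp (isEmptyAlgEquiv ℂ (Fin 0)).symm.toAlgHom).Finite :=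
        gfin.comp (AlgHom.Finite.of_surjective _ (isEmptyAlgEquiv ℂ (Fin 0)).symm.surjective)
      rw [← RingHom.finite_algebraMap]
      have h2 : algebraMap ℂ (MvPolynomial σ ℂ ⧸ I) =
          (g.comp (isEmptyAlgEquiv ℂ (Fin 0)).symm.toAlgHom).toRingHom :=
        (g.comp (isEmptyAlgEquiv ℂ (Fin 0)).symm.toAlgHom).comp_algebraMap.symm
      rw [h2]
      exact h1
    have hA : Finite ((MvPolynomial σ ℂ ⧸ I) →ₐ[ℂ] ℂ) :=
      (linearIndependent_toLinearMap ℂ (MvPolynomial σ ℂ ⧸ I) ℂ).finite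
    have hZ' : ∀ x : Z, ∀ a ∈ I, aeval (R := ℂ) (x : σ → ℂ) a = 0 := by
      intro x a ha
      have hx : (x : σ → ℂ) ∈ zeroLocus ℂ I := by rw [hZI]; exact x.2
      exact hx a ha
    let f : Z → ((MvPolynomial σ ℂ ⧸ I) →ₐ[ℂ] ℂ) := fun x =>
      Ideal.Quotient.liftₐ I (aeval (x : σ → ℂ)) (hZ' x)
    have hf : Function.Injective f := by
      intro x y hxy
      ext i
      have := DFunLike.congr_fun hxy (Ideal.Quotient.mk I (X i))
      simpa [f] using this
    have := Finite.of_injective f hf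
    exact Set.toFinite Z
  · exfalso
    let y : MvPolynomial (Fin s) ℂ := X ⟨0, hs⟩
    obtain ⟨p, hp⟩ := Ideal.Quotient.mk_surjective (g y)
    have hcomp : IsCompact (Metric.closedBall (0 : σ → ℂ) |R|) := isCompact_closedBall _ _
    obtain ⟨B, hB⟩ := hcomp.exists_bound_of_continuousOn
      (f := fun x => eval x p) (MvPolynomial.continuous_eval p).continuousOn
    have hBZ : ∀ x ∈ Z, ‖eval x p‖ ≤ B := by
      intro x hx
      apply hB
      rw [mem_closedBall_zero_iff, pi_norm_le_iff_of_nonneg (abs_nonneg R)]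
      exact fun i => (hb x hx i).trans (le_abs_self R)
    let t : ℂ := ((|B| + 1 : ℝ) : ℂ)
    have hnu : ¬ IsUnit (y - C t) := by
      intro hu
      have := hu.map (eval (fun _ => t))
      simp [y] at this
    have hgloc : IsLocalHom g.toRingHom := gfin.to_isIntegral.isLocalHom ginj
    have hnu2 : ¬ IsUnit (g (y - C t)) := fun h => hnu (hgloc.map_nonunit _ h)
    have hJ : I ⊔ Ideal.span {p - C t} ≠ ⊤ := by
      intro h
      apply hnu2
      have h1 : (1 : MvPolynomial σ ℂ) ∈ I ⊔ Ideal.span {p - C t} := h ▸ Submodule.mem_top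
      obtain ⟨a, ha, b, hbb, hab⟩ := Submodule.mem_sup.mp h1
      obtain ⟨c, rfl⟩ := Ideal.mem_span_singleton'.mp hbb
      have h2 := congrArg (Ideal.Quotient.mk I) hab
      have h3 : g (C t) = Ideal.Quotient.mk I (C t) := by
        have := g.commutes t
        exact this
      simp only [map_add, map_mul, map_sub, map_one, Ideal.Quotient.eq_zero_iff_mem.mpr ha, hp,
        zero_add] at h2
      rw [← h3, ← map_sub] at h2
      exact IsUnit.of_mul_eq_one_right _ h2
    have hne : (zeroLocus ℂ (I ⊔ Ideal.span {p - C t})).Nonempty := by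
      by_contra hcon
      rw [Set.not_nonempty_iff_eq_empty] at hcon
      have := vanishingIdeal_zeroLocus_eq_radical (k := ℂ) (K := ℂ) (I ⊔ Ideal.span {p - C t})
      rw [hcon, vanishingIdeal_empty] at this
      exact hJ (Ideal.radical_eq_top.mp this.symm)
    obtain ⟨x, hx⟩ := hne
    have hxZ : x ∈ Z := hZI ▸ (fun q hq => hx q (Ideal.mem_sup_left hq))
    have hxp := hx (p - C t) (Ideal.mem_sup_right (Ideal.mem_span_singleton_self _))
    have hxt : eval x p = t := by
      rw [aeval_eq_eval] at hxp
      simpa [sub_eq_zero] using hxp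
    have := hBZ x hxZ
    rw [hxt] at this
    simp only [t, Complex.norm_real, Real.norm_eq_abs] at this
    have h5 := le_abs_self (|B| + 1)
    have h6 := le_abs_self B
    linarith

lemma aux_eval_smul {σ : Type} {F : MvPolynomial σ ℂ} {d : ℕ} (hF : F.IsHomogeneous d)
    (c : ℂ) (v : σ → ℂ) : eval (c • v) F = c ^ d * eval v F := by
  rw [eval_eq, eval_eq, Finset.mul_sum]
  refine Finset.sum_congr rfl fun m hm => ?_
  have h := hF (mem_support_iff.mp hm)
  rw [show Finsupp.weight (1 : σ → ℕ) m = m.degree from (DFunLike.congr_fun Finsupp.degree_eq_weight_one m).symm] at h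
  simp only [Pi.smul_apply, smul_eq_mul, mul_pow, Finset.prod_mul_distrib,
    Finset.prod_pow_eq_pow_sum]
  have : ∑ i ∈ m.support, m i = d := h
  rw [this]; ring

lemma aux_chain {m : ℕ} (F : MvPolynomial (Fin m) ℂ) (A : Matrix (Fin m) (Fin m) ℂ)
    (j : Fin m) :
    pderiv j (bind₁ (fun i => ∑ k, C (A i k) * X k) F) =
      ∑ i, bind₁ (fun i => ∑ k, C (A i k) * X k) (pderiv i F) * C (A i j) := by
  induction F using MvPolynomial.induction_on with
  | C a => simp
  | add p q hp hq => simp [hp, hq, add_mul, Finset.sum_add_distrib]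
  | mul_X p n hp =>
    have hX : ∀ i, pderiv i (X n : MvPolynomial (Fin m) ℂ) = if i = n then 1 else 0 := by
      intro i; rw [pderiv_X]; simp [Pi.single_apply, eq_comm]
    simp only [map_mul, bind₁_X_right, Derivation.leibniz, hp, smul_eq_mul, map_sum, pderiv_C,
      map_add, add_mul, Finset.sum_add_distrib, mul_zero, add_zero]
    congr 1
    · simp only [pderiv_X, Pi.single_apply, apply_ite, map_one, map_zero, mul_one,
        mul_zero, ite_mul, zero_mul]
      simp
    · rw [Finset.mul_sum]
      exact Finset.sum_congr rfl fun i _ => by ring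

lemma aux_eval_bind {m : ℕ} (F : MvPolynomial (Fin m) ℂ) (A : Matrix (Fin m) (Fin m) ℂ)
    (v : Fin m → ℂ) :
    eval v (bind₁ (fun i => ∑ k, C (A i k) * X k) F) = eval (A *ᵥ v) F := by
  have h := aeval_bind₁ (R := ℂ) v (fun i => ∑ k, C (A i k) * X k) F
  simp only [aeval_eq_eval] at h
  refine h.trans ?_
  congr 2
  ext i
  simp [Matrix.mulVec, dotProduct]

lemma aux_grad {m : ℕ} {F : MvPolynomial (Fin m) ℂ} {A : Matrix (Fin m) (Fin m) ℂ}
    (hA : ∀ v, eval (A *ᵥ v) F = eval v F) (v : Fin m → ℂ) :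
    (fun j => eval v (pderiv j F)) = (fun i => eval (A *ᵥ v) (pderiv i F)) ᵥ* A := by
  have h1 : bind₁ (fun i => ∑ k, C (A i k) * X k) F = F :=
    MvPolynomial.funext fun w => by rw [aux_eval_bind, hA]
  ext j
  have h2 := aux_chain F A j
  rw [h1] at h2
  simp only [h2, map_sum, map_mul, aux_eval_bind, eval_C, Matrix.vecMul, dotProduct]

lemma aux_key {n : ℕ} (F : MvPolynomial (Fin (n + 1)) ℂ) (d : ℕ) (hd : 3 ≤ d)
    (hF : F.IsHomogeneous d)
    (hsm : ∀ v : Fin (n + 1) → ℂ, (∀ i, eval v (pderiv i F) = 0) → v = 0) :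
    ∃ K : ℝ, ∀ A B : Matrix (Fin (n + 1)) (Fin (n + 1)) ℂ,
      (∀ v, eval (A *ᵥ v) F = eval v F) → A * B = 1 → ∀ b : ℝ, (∀ i j, ‖B i j‖ ≤ b) →
      ∀ i j, ‖A i j‖ ^ (d - 1) ≤ K * b := by
  let G : (Fin (n + 1) → ℂ) → (Fin (n + 1) → ℂ) := fun v i => eval v (pderiv i F)
  have hGc : Continuous G := continuous_pi fun i => MvPolynomial.continuous_eval _
  have hGs : ∀ (c : ℂ) v, G (c • v) = c ^ (d - 1) • G v := by
    intro c v
    ext i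
    exact aux_eval_smul hF.pderiv c v
  obtain ⟨u, hu, hmin⟩ := (isCompact_sphere (0 : Fin (n + 1) → ℂ) 1).exists_isMinOn
    (NormedSpace.sphere_nonempty.mpr zero_le_one) (f := fun v => ‖G v‖) hGc.norm.continuousOn
  have hu1 : ‖u‖ = 1 := by simpa using hu
  have hc : 0 < ‖G u‖ := by
    rw [norm_pos_iff]
    intro h
    have := hsm u (fun i => congrFun h i)
    rw [this] at hu1
    simp at hu1
  have hlow : ∀ v, ‖G u‖ * ‖v‖ ^ (d - 1) ≤ ‖G v‖ := by
    intro v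
    by_cases hv : v = 0
    · subst hv
      rw [norm_zero, zero_pow (by omega)]
      simp
    · have hvn : ‖v‖ ≠ 0 := norm_ne_zero_iff.mpr hv
      have h1 : v = (‖v‖ : ℂ) • ((‖v‖ : ℂ)⁻¹ • v) := by
        rw [smul_smul, mul_inv_cancel₀ (by exact_mod_cast hvn), one_smul]
      have h2 : ‖((‖v‖ : ℂ)⁻¹ • v)‖ = 1 := by
        rw [norm_smul]; simp [hvn]
      have h3 : ‖G u‖ ≤ ‖G ((‖v‖ : ℂ)⁻¹ • v)‖ := hmin (by simpa using h2)
      have h4 : ‖G v‖ = ‖v‖ ^ (d - 1) * ‖G ((‖v‖ : ℂ)⁻¹ • v)‖ := by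
        conv_lhs => rw [h1, hGs, norm_smul]
        simp
      rw [h4, mul_comm]
      gcongr
  let C0 : ℝ := ∑ j, ‖G (Pi.single j 1)‖
  have hC0 : ∀ j, ‖G (Pi.single j 1)‖ ≤ C0 := fun j =>
    Finset.single_le_sum (f := fun j => ‖G (Pi.single j 1)‖) (fun _ _ => norm_nonneg _)
      (Finset.mem_univ j)
  have hC0n : 0 ≤ C0 := Finset.sum_nonneg fun _ _ => norm_nonneg _
  clear_value C0
  refine ⟨(n + 1) * C0 / ‖G u‖, fun A B hA hAB b hb a j => ?_⟩
  have hbn : 0 ≤ b := (norm_nonneg _).trans (hb 0 0)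
  let e : Fin (n + 1) → ℂ := Pi.single j 1
  have h1 : G (A *ᵥ e) = G e ᵥ* B := by
    have : G e = G (A *ᵥ e) ᵥ* A := aux_grad hA e
    rw [this, Matrix.vecMul_vecMul, hAB, Matrix.vecMul_one]
  have h2 : ‖G (A *ᵥ e)‖ ≤ (n + 1) * C0 * b := by
    have hpos : 0 ≤ ((n : ℝ) + 1) * C0 * b :=
      mul_nonneg (mul_nonneg (by positivity) hC0n) hbn
    rw [h1]
    refine (pi_norm_le_iff_of_nonneg hpos).mpr fun i => ?_
    rw [show (G e ᵥ* B) i = ∑ k, G e k * B k i from rfl]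
    refine (norm_sum_le _ _).trans ?_
    refine (Finset.sum_le_card_nsmul _ _ (C0 * b) ?_).trans ?_
    · intro k _
      rw [norm_mul]
      exact mul_le_mul ((norm_le_pi_norm _ k).trans (hC0 j)) (hb k i) (norm_nonneg _) hC0n
    · simp [mul_assoc]
  have h3 : ‖A a j‖ ≤ ‖A *ᵥ e‖ := by
    have : A a j = (A *ᵥ e) a := by simp [e]
    rw [this]
    exact norm_le_pi_norm _ a
  have h4 := (hlow (A *ᵥ e)).trans h2
  have h5 : ‖A a j‖ ^ (d - 1) ≤ ‖A *ᵥ e‖ ^ (d - 1) := by gcongr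
  rw [div_mul_eq_mul_div, le_div_iff₀ hc]
  calc _ ≤ ‖A *ᵥ e‖ ^ (d - 1) * ‖G u‖ := by gcongr
    _ ≤ _ := by rw [mul_comm]; exact h4

lemma aux_bdd {n : ℕ} (F : MvPolynomial (Fin (n + 1)) ℂ) (d : ℕ) (hd : 3 ≤ d)
    (hF : F.IsHomogeneous d)
    (hsm : ∀ v : Fin (n + 1) → ℂ, (∀ i, eval v (pderiv i F) = 0) → v = 0) :
    ∃ R : ℝ, ∀ A : Matrix (Fin (n + 1)) (Fin (n + 1)) ℂ,
      (∀ v, eval (A *ᵥ v) F = eval v F) → ∀ i j, ‖A i j‖ ≤ R := by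
  obtain ⟨K, hK⟩ := aux_key F d hd hF hsm
  refine ⟨max 1 K, fun A hA => ?_⟩
  have hinj : Function.Injective A.mulVec := by
    rw [← Matrix.coe_mulVecLin, ← LinearMap.ker_eq_bot, LinearMap.ker_eq_bot']
    intro u hu
    have hu' : A *ᵥ u = 0 := hu
    apply hsm
    intro j
    have h1 := congrFun (aux_grad hA u) j
    have h0 : ∀ i, eval (0 : Fin (n + 1) → ℂ) (pderiv i F) = 0 := by
      intro i
      have := aux_eval_smul (hF.pderiv (i := i)) 0 (0 : Fin (n + 1) → ℂ)
      rwa [zero_smul, zero_pow (by omega), zero_mul] at this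
    rw [hu'] at h1
    simp only [Matrix.vecMul, dotProduct, h0, zero_mul, Finset.sum_const_zero] at h1
    exact h1
  have hunit : IsUnit A := Matrix.mulVec_injective_iff_isUnit.mp hinj
  have hdet : IsUnit A.det := (Matrix.isUnit_iff_isUnit_det A).mp hunit
  have hAB : A * A⁻¹ = 1 := Matrix.mul_nonsing_inv A hdet
  have hBA : A⁻¹ * A = 1 := Matrix.nonsing_inv_mul A hdet
  have hB : ∀ v, eval (A⁻¹ *ᵥ v) F = eval v F := by
    intro v
    rw [← hA, Matrix.mulVec_mulVec, hAB, Matrix.one_mulVec]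
  let h : Bool × Fin (n + 1) × Fin (n + 1) → ℝ := fun x =>
    if x.1 then ‖A x.2.1 x.2.2‖ else ‖A⁻¹ x.2.1 x.2.2‖
  obtain ⟨x, hx⟩ := Finite.exists_max h
  have hxA : ∀ i j, ‖A i j‖ ≤ h x := fun i j => hx (true, i, j)
  have hxB : ∀ i j, ‖A⁻¹ i j‖ ≤ h x := fun i j => hx (false, i, j)
  have hx2 : h x ^ (d - 1) ≤ K * h x := by
    obtain ⟨b, i, j⟩ := x
    cases b
    · exact hK A⁻¹ A hB hBA _ hxA i j
    · exact hK A A⁻¹ hA hAB _ hxB i j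
  intro i j
  refine (hxA i j).trans ?_
  by_cases h1 : h x ≤ 1
  · exact h1.trans (le_max_left _ _)
  · push Not at h1
    refine le_trans ?_ (le_max_right _ _)
    have h2 : h x ^ 2 ≤ h x ^ (d - 1) := pow_le_pow_right₀ h1.le (by omega)
    nlinarith

lemma aux_squarefree {n : ℕ} (hn : 2 ≤ n) (F : MvPolynomial (Fin (n + 1)) ℂ) (hF0 : F ≠ 0)
    (hsm : ∀ v : Fin (n + 1) → ℂ, (∀ i, eval v (pderiv i F) = 0) → v = 0) :
    Squarefree F := by
  rw [squarefree_iff_irreducible_sq_not_dvd_of_ne_zero hF0]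
  rintro p hp ⟨q, rfl⟩
  have hz : ∀ v, eval v p = 0 → v = 0 := by
    intro v hv
    apply hsm
    intro i
    simp [Derivation.leibniz, hv]
  have hX : ∀ i, p ∣ X i := by
    intro i
    have h1 : (X i : MvPolynomial (Fin (n + 1)) ℂ) ∈
        vanishingIdeal ℂ (zeroLocus ℂ (Ideal.span {p})) := by
      intro v hv
      have h2 := hv p (Ideal.mem_span_singleton_self p)
      rw [aeval_eq_eval] at h2
      rw [hz v h2]
      simp
    rw [vanishingIdeal_zeroLocus_eq_radical] at h1
    obtain ⟨k, hk⟩ := h1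
    exact hp.prime.dvd_of_dvd_pow (Ideal.mem_span_singleton.mp hk)
  let i0 : Fin (n + 1) := ⟨0, by omega⟩
  let i1 : Fin (n + 1) := ⟨1, by omega⟩
  have a0 := hp.associated_of_dvd (X_prime (R := ℂ) (i := i0)).irreducible (hX i0)
  have a1 := hp.associated_of_dvd (X_prime (R := ℂ) (i := i1)).irreducible (hX i1)
  have h := (a0.symm.trans a1).dvd
  rw [X_dvd_X] at h
  simp [i0, i1] at h

lemma aux_semi {n : ℕ} (hn : 2 ≤ n) (F : MvPolynomial (Fin (n + 1)) ℂ) (d : ℕ)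
    (hF : F.IsHomogeneous d)
    (hsm : ∀ v : Fin (n + 1) → ℂ, (∀ i, eval v (pderiv i F) = 0) → v = 0)
    (g : GL (Fin (n + 1)) ℂ)
    (hg : ∀ v : Fin (n + 1) → ℂ, eval v F = 0 ↔
      eval ((g : Matrix (Fin (n + 1)) (Fin (n + 1)) ℂ).mulVec v) F = 0) :
    ∃ c : ℂ, c ≠ 0 ∧ ∀ v, eval ((g : Matrix (Fin (n + 1)) (Fin (n + 1)) ℂ).mulVec v) F =
      c * eval v F := by
  have hF0 : F ≠ 0 := by
    rintro rfl
    have := congrFun (hsm (fun _ => 1) (by simp)) 0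
    simp at this
  set A : Matrix (Fin (n + 1)) (Fin (n + 1)) ℂ := g.val with hAdef
  set H := bind₁ (fun i => ∑ k, C (A i k) * X k) F with hH
  have hHe : ∀ v, eval v H = eval (A *ᵥ v) F := aux_eval_bind F A
  have hHh : H.IsHomogeneous d := by
    have := hF.aeval (fun i => ∑ k, C (A i k) * X k) (n := 1) (fun i =>
      IsHomogeneous.sum _ _ _ fun k _ => by
        simpa using (isHomogeneous_C _ (A i k)).mul (isHomogeneous_X ℂ k))
    simpa using this
  have hAinv : ∀ v, A *ᵥ ((g⁻¹ : GL (Fin (n + 1)) ℂ) : Matrix _ _ ℂ) *ᵥ v = v := by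
    intro v
    rw [Matrix.mulVec_mulVec, hAdef, ← Units.val_mul, mul_inv_cancel]
    simp
  have hH0 : H ≠ 0 := by
    intro h
    apply hF0
    apply MvPolynomial.funext
    intro v
    rw [← hAinv v, ← hHe, h]
    simp
  have hdvd : F ∣ H := by
    have h1 : H ∈ vanishingIdeal ℂ (zeroLocus ℂ (Ideal.span {F})) := by
      intro v hv
      have h2 := hv F (Ideal.mem_span_singleton_self F)
      rw [aeval_eq_eval] at h2 ⊢
      exact (hHe v).trans ((hg v).mp h2)
    rw [vanishingIdeal_zeroLocus_eq_radical] at h1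
    obtain ⟨k, hk⟩ := h1
    exact (aux_squarefree hn F hF0 hsm).isRadical k H (Ideal.mem_span_singleton.mp hk)
  obtain ⟨Q, hQ⟩ := hdvd
  have hQ0 : Q ≠ 0 := by rintro rfl; exact hH0 (by simpa using hQ)
  have hdeg := totalDegree_mul_of_isDomain hF0 hQ0
  rw [← hQ, hHh.totalDegree hH0, hF.totalDegree hF0] at hdeg
  have hQc := totalDegree_eq_zero_iff_eq_C.mp (show Q.totalDegree = 0 by omega)
  refine ⟨coeff 0 Q, ?_, fun v => ?_⟩
  · intro h
    rw [h] at hQc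
    exact hQ0 (by simpa using hQc)
  · rw [← hHe, hQ, hQc]
    simp [mul_comm]

/-- Jordan's theorem: the subgroup of `PGL_{n+1}(ℂ)` stabilizing a smooth hypersurface of
degree `d ≥ 3` in `ℙⁿ` is finite.  We realize `PGL_{n+1}(ℂ)` as the quotient of
`GL_{n+1}(ℂ)` by its center, and the stabilizer as the image of the set of invertible
matrices preserving the zero locus of the defining form `F`. -/
theorem stabilizer_of_smooth_hypersurface_finite (n : ℕ) (hn : 2 ≤ n)
    (F : MvPolynomial (Fin (n + 1)) ℂ) (d : ℕ) (hd : 3 ≤ d) (hF : F.IsHomogeneous d)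
    (hsm : ∀ v : Fin (n + 1) → ℂ, (∀ i, eval v (pderiv i F) = 0) → v = 0) :
    Set.Finite
      ((QuotientGroup.mk' (Subgroup.center (GL (Fin (n + 1)) ℂ))) ''
        {g : GL (Fin (n + 1)) ℂ |
          ∀ v : Fin (n + 1) → ℂ, eval v F = 0 ↔ eval ((g : Matrix (Fin (n + 1)) (Fin (n + 1)) ℂ).mulVec v) F = 0}) := by
  classical
  obtain ⟨R, hR⟩ := aux_bdd F d hd hF hsm
  -- the finite set of matrices fixing `F`
  let P : (Fin (n + 1) → ℂ) → MvPolynomial (Fin (n + 1) × Fin (n + 1)) ℂ := fun v =>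
    bind₁ (fun i => ∑ k, C (v k) * X (i, k)) F - C (eval v F)
  have hP : ∀ (v : Fin (n + 1) → ℂ) (x : Fin (n + 1) × Fin (n + 1) → ℂ), eval x (P v) =
      eval ((Matrix.of fun i j => x (i, j)) *ᵥ v) F - eval v F := by
    intro v x
    have h := aeval_bind₁ (R := ℂ) x (fun i => ∑ k, C (v k) * X (i, k)) F
    simp only [aeval_eq_eval] at h
    simp only [P, map_sub, eval_C]
    rw [sub_left_inj]
    refine h.trans ?_
    congr 2
    ext i
    simp [Matrix.mulVec, dotProduct, mul_comm]
  have hfin := aux_finite_of_bounded (Set.range P) R (by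
    rintro x hx ⟨i, j⟩
    refine hR (Matrix.of fun i j => x (i, j)) (fun v => ?_) i j
    have := hx _ ⟨v, rfl⟩
    rw [hP] at this
    exact sub_eq_zero.mp this)
  have hfin2 : {h : GL (Fin (n + 1)) ℂ | ∀ v,
      eval ((h : Matrix (Fin (n + 1)) (Fin (n + 1)) ℂ) *ᵥ v) F = eval v F}.Finite := by
    refine Set.Finite.of_finite_image (f := fun h => fun x : Fin (n + 1) × Fin (n + 1) =>
      (h : Matrix (Fin (n + 1)) (Fin (n + 1)) ℂ) x.1 x.2) (hfin.subset ?_) ?_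
    · rintro _ ⟨h, hh, rfl⟩ _ ⟨v, rfl⟩
      rw [hP]
      exact sub_eq_zero.mpr (hh v)
    · intro a _ b _ hab
      ext i j
      exact congrFun hab (i, j)
  refine (hfin2.image (QuotientGroup.mk' (Subgroup.center (GL (Fin (n + 1)) ℂ)))).subset ?_
  rintro _ ⟨g, hg, rfl⟩
  obtain ⟨c, hc, hgc⟩ := aux_semi hn F d hF hsm g hg
  obtain ⟨z, hz⟩ := IsAlgClosed.exists_pow_nat_eq c⁻¹ (show 0 < d by omega)
  have hz0 : z ≠ 0 := by
    rintro rfl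
    rw [zero_pow (by omega)] at hz
    exact hc (inv_eq_zero.mp hz.symm)
  let s : GL (Fin (n + 1)) ℂ := Matrix.GeneralLinearGroup.scalar (Fin (n + 1)) (Units.mk0 z hz0)
  have hs : (s : Matrix (Fin (n + 1)) (Fin (n + 1)) ℂ) = Matrix.scalar (Fin (n + 1)) z := rfl
  refine ⟨g * s, fun v => ?_, ?_⟩
  · rw [Units.val_mul, ← Matrix.mulVec_mulVec, hgc, hs]
    have : Matrix.scalar (Fin (n + 1)) z *ᵥ v = z • v := by
      ext i
      simp [Matrix.mulVec_diagonal]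
    rw [this, aux_eval_smul hF, hz, ← mul_assoc, mul_inv_cancel₀ hc, one_mul]
  · rw [QuotientGroup.mk'_apply, QuotientGroup.mk'_apply, eq_comm, QuotientGroup.eq]
    rw [inv_mul_cancel_left]
    exact Matrix.GeneralLinearGroup.mem_center_iff_val_mem_range_scalar.mpr ⟨z, rfl⟩
end

section
/- Let F(X₀,…,X_n) be a homogeneous polynomial over C whose partial derivatives ∂F/∂X₀,…,∂F/∂X_n have only the origin as a common zero in C^{n+1}, and suppose deg F = d ≥ 3. If ρ₀,…,ρ_n are linear forms in X₀,…,X_n with Σ_j ρ_j · ∂F/∂X_j = 0, then every ρ_j vanishes identically. -/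
open MvPolynomial

lemma aux_pderiv_comm {n : ℕ} (i j : Fin n) (P : MvPolynomial (Fin n) ℂ) :
    pderiv i (pderiv j P) = pderiv j (pderiv i P) := by
  have h : ⁅(pderiv i : Derivation ℂ (MvPolynomial (Fin n) ℂ) (MvPolynomial (Fin n) ℂ)),
      (pderiv j : Derivation ℂ (MvPolynomial (Fin n) ℂ) (MvPolynomial (Fin n) ℂ))⁆ = 0 := by
    apply derivation_ext
    intro l
    rw [Derivation.commutator_apply, pderiv_X, pderiv_X]
    by_cases h1 : j = l <;> by_cases h2 : i = l <;> simp [Pi.single_apply, h1, h2]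
  have := congrArg (fun D => D P) h
  rw [Derivation.commutator_apply] at this
  exact sub_eq_zero.mp this

lemma aux_chain_s8 {n : ℕ} (x : Fin n → Polynomial ℂ) (P : MvPolynomial (Fin n) ℂ) :
    Polynomial.derivative (aeval x P) =
      ∑ i, aeval x (pderiv i P) * Polynomial.derivative (x i) := by
  induction P using MvPolynomial.induction_on with
  | C a => simp [← Polynomial.C_eq_algebraMap]
  | add p q hp hq => simp [hp, hq, add_mul, Finset.sum_add_distrib]
  | mul_X p l hp =>
    rw [map_mul, Polynomial.derivative_mul, hp]
    simp only [pderiv_mul, map_add, map_mul, aeval_X, add_mul, Finset.sum_add_distrib, pderiv_X]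
    congr 1
    · rw [Finset.sum_mul]
      exact Finset.sum_congr rfl fun _ _ => by ring
    · rw [Finset.sum_eq_single l]
      · simp
      · intro b _ hb
        simp [Pi.single_apply, hb, hb.symm]
      · simp

lemma aux_coeff_prod {n k : ℕ} (x : Fin n → Polynomial ℂ) (hx : ∀ i, (x i).natDegree ≤ k)
    (m : Fin n → ℕ) (s : Finset (Fin n)) :
    (∏ i ∈ s, x i ^ m i).natDegree ≤ (∑ i ∈ s, m i) * k ∧
    (∏ i ∈ s, x i ^ m i).coeff ((∑ i ∈ s, m i) * k) = ∏ i ∈ s, (x i).coeff k ^ m i := by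
  induction s using Finset.induction_on with
  | empty => simp
  | insert a s ha ih =>
    rw [Finset.prod_insert ha, Finset.sum_insert ha, Finset.prod_insert ha, add_mul]
    have h1 : (x a ^ m a).natDegree ≤ m a * k := Polynomial.natDegree_pow_le_of_le _ (hx a)
    refine ⟨Polynomial.natDegree_mul_le_of_le h1 ih.1, ?_⟩
    rw [Polynomial.coeff_mul_add_eq_of_natDegree_le h1 ih.1, ih.2,
      Polynomial.coeff_pow_of_natDegree_le (hx a)]

lemma aux_coeff {n k e : ℕ} (x : Fin n → Polynomial ℂ) (hx : ∀ i, (x i).natDegree ≤ k)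
    (P : MvPolynomial (Fin n) ℂ) (hP : P.IsHomogeneous e) :
    (aeval x P).coeff (e * k) = eval (fun i => (x i).coeff k) P := by
  rw [aeval_def, eval₂_eq', eval_eq', Polynomial.finsetSum_coeff]
  refine Finset.sum_congr rfl fun m hm => ?_
  have hdeg : ∑ i, m i = e := by
    have := hP (mem_support_iff.mp hm)
    rw [Finsupp.weight_apply, Finsupp.sum_fintype _ _ (by simp)] at this
    simpa using this
  rw [← Polynomial.C_eq_algebraMap, Polynomial.coeff_C_mul, ← hdeg,
    (aux_coeff_prod x hx m Finset.univ).2]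

lemma aux_linear {n : ℕ} (P : MvPolynomial (Fin n) ℂ) (hP : P.IsHomogeneous 1) :
    P = ∑ l, C (coeff 0 (pderiv l P)) * X l := by
  have h := hP.sum_X_mul_pderiv
  rw [one_smul] at h
  conv_lhs => rw [← h]
  refine Finset.sum_congr rfl fun l _ => ?_
  have h2 : (pderiv l P).IsHomogeneous 0 := hP.pderiv
  rw [← totalDegree_zero_iff_isHomogeneous, totalDegree_eq_zero_iff_eq_C] at h2
  conv_lhs => rw [h2]
  ring

lemma aux_eig {n : ℕ} (A : Matrix (Fin n) (Fin n) ℂ) (z : ℂ) :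
    A.charpoly.IsRoot z ↔ ∃ v, v ≠ 0 ∧ A.mulVec v = z • v := by
  rw [Polynomial.IsRoot, Matrix.eval_charpoly, ← Matrix.exists_mulVec_eq_zero_iff]
  refine exists_congr fun v => and_congr_right fun _ => ?_
  rw [Matrix.sub_mulVec, sub_eq_zero, Matrix.scalar_apply, ← Matrix.smul_one_eq_diagonal,
    Matrix.smul_mulVec, Matrix.one_mulVec, eq_comm]

set_option maxHeartbeats 1000000 in
/-- If `F` is a form of degree `d ≥ 3` over `ℂ` whose partial derivatives have only the
origin as common zero, then any relation `Σ ρⱼ · ∂F/∂Xⱼ = 0` with the `ρⱼ` linear forms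
forces all `ρⱼ` to vanish. -/
theorem linear_relation_among_partials_vanishes (n : ℕ)
    (F : MvPolynomial (Fin (n + 1)) ℂ) (d : ℕ) (hd : 3 ≤ d) (hF : F.IsHomogeneous d)
    (hsm : ∀ v : Fin (n + 1) → ℂ, (∀ i, eval v (pderiv i F) = 0) → v = 0)
    (ρ : Fin (n + 1) → MvPolynomial (Fin (n + 1)) ℂ)
    (hρ : ∀ j, (ρ j).IsHomogeneous 1)
    (hrel : ∑ j, ρ j * pderiv j F = 0) :
    ∀ j, ρ j = 0 := by
  obtain ⟨A, hA⟩ : ∃ A : Matrix (Fin (n + 1)) (Fin (n + 1)) ℂ,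
      ∀ i, ρ i = ∑ l, C (A i l) * X l :=
    ⟨fun i l => coeff 0 (pderiv l (ρ i)), fun i => aux_linear _ (hρ i)⟩
  have hpd : ∀ i j, pderiv j (ρ i) = C (A i j) := by
    intro i j
    rw [hA, map_sum, Finset.sum_eq_single j]
    · simp
    · intro b _ hb
      simp [pderiv_C_mul, pderiv_X_of_ne hb]
    · simp
  -- the differentiated relation
  have hdiff : ∀ j, ∑ i, ρ i * pderiv i (pderiv j F) = - ∑ i, C (A i j) * pderiv i F := by
    intro j
    have h := congrArg (pderiv j) hrel
    rw [map_sum, map_zero] at h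
    simp only [pderiv_mul, hpd, Finset.sum_add_distrib] at h
    have e : ∑ i, ρ i * pderiv i (pderiv j F) = ∑ i, ρ i * pderiv j (pderiv i F) :=
      Finset.sum_congr rfl fun i _ => by rw [aux_pderiv_comm]
    rw [e]
    exact eq_neg_of_add_eq_zero_right h
  have hpF : ∀ j, (pderiv j F).IsHomogeneous (d - 1) := fun j => hF.pderiv
  -- all eigenvalues vanish
  have key : ∀ z : ℂ, A.charpoly.IsRoot z → A.charpoly.IsRoot (-((d - 1 : ℕ) : ℂ) * z) := by
    intro z hz
    obtain ⟨v, hv0, hv⟩ := (aux_eig A z).mp hz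
    rw [← Matrix.charpoly_transpose, aux_eig]
    refine ⟨fun j => eval v (pderiv j F), fun h => hv0 (hsm v fun i => congrFun h i), ?_⟩
    funext j
    have h1 := congrArg (eval v) (hdiff j)
    have h2 := congrArg (eval v) (hpF j).sum_X_mul_pderiv
    have h3 : ∀ i, eval v (ρ i) = z * v i := by
      intro i
      have := congrFun hv i
      simp only [Matrix.mulVec, dotProduct, Pi.smul_apply, smul_eq_mul] at this
      rw [hA, ← this]
      simp
    simp only [map_sum, map_neg, map_mul, h3, eval_C, eval_X, nsmul_eq_mul, map_natCast,
      mul_assoc, ← Finset.mul_sum] at h1 h2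
    rw [h2] at h1
    simp only [Matrix.mulVec, dotProduct, Matrix.transpose_apply, Pi.smul_apply, smul_eq_mul]
    linear_combination h1
  have hne : A.charpoly ≠ 0 := A.charpoly_monic.ne_zero
  have hzero : ∀ z : ℂ, A.charpoly.IsRoot z → z = 0 := by
    intro z hz
    obtain ⟨w, hw, hmax⟩ := Finset.exists_max_image A.charpoly.roots.toFinset (fun z => ‖z‖)
      ⟨z, by simp only [Multiset.mem_toFinset]; exact (Polynomial.mem_roots hne).mpr hz⟩
    simp only [Multiset.mem_toFinset, Polynomial.mem_roots hne] at hw hmax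
    have h1 := hmax _ (key w hw)
    have h2 := hmax _ hz
    rw [norm_mul, norm_neg, Complex.norm_natCast] at h1
    have h3 : (2 : ℝ) ≤ ((d - 1 : ℕ) : ℝ) := by
      exact_mod_cast (by omega : 2 ≤ d - 1)
    have h4 : ‖w‖ = 0 := by nlinarith [norm_nonneg w]
    exact norm_le_zero_iff.mp (h4 ▸ h2)
  have hnil : ∃ k, A ^ k = 0 := by
    have h1 := (IsAlgClosed.splits A.charpoly).eq_prod_roots_of_monic A.charpoly_monic
    have h2 : A.charpoly.roots = Multiset.replicate (Multiset.card A.charpoly.roots) 0 :=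
      Multiset.eq_replicate_card.mpr fun z hz => hzero z ((Polynomial.mem_roots hne).mp hz)
    rw [h2] at h1
    simp only [Multiset.map_replicate, Multiset.prod_replicate, map_zero, sub_zero] at h1
    have h3 := Matrix.aeval_self_charpoly A
    rw [h1] at h3
    exact ⟨_, by simpa using h3⟩
  suffices hA0 : A = 0 by
    intro j
    rw [hA, hA0]
    simp
  by_contra hA0
  classical
  obtain ⟨k, hk1, hk0, hk⟩ : ∃ k, 1 ≤ k ∧ A ^ k ≠ 0 ∧ A ^ (k + 1) = 0 := by
    have hs := Nat.find_spec hnil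
    have hm := fun m => Nat.find_min hnil (m := m)
    generalize Nat.find hnil = N at hs hm
    match N, hs, hm with
    | 0, hs, _ => simp at hs
    | 1, hs, _ => exact absurd (by simpa using hs) hA0
    | k + 2, hs, hm => exact ⟨k + 1, by omega, hm _ (by omega), hs⟩
  have hkm : ∀ m, k < m → A ^ m = 0 := fun m hm => pow_eq_zero_of_le hm hk
  obtain ⟨u, hu⟩ : ∃ u, (A ^ k).mulVec u ≠ 0 := by
    by_contra! h
    exact hk0 (Matrix.ext_of_mulVec_single fun i => by rw [h, Matrix.zero_mulVec])
  obtain ⟨x, hxc⟩ : ∃ x : Fin (n + 1) → Polynomial ℂ,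
      ∀ i m, (x i).coeff m = (A ^ m).mulVec u i / (m.factorial : ℂ) := by
    refine ⟨fun i => ∑ r ∈ Finset.range (k + 1),
      Polynomial.monomial r ((A ^ r).mulVec u i / (r.factorial : ℂ)), fun i m => ?_⟩
    rw [Polynomial.finsetSum_coeff]
    simp only [Polynomial.coeff_monomial, Finset.sum_ite_eq', Finset.mem_range]
    split_ifs with h
    · rfl
    · rw [hkm m (by omega)]
      simp
  have hxdeg : ∀ i, (x i).natDegree ≤ k := by
    intro i
    rw [Polynomial.natDegree_le_iff_coeff_eq_zero]
    intro m hm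
    rw [hxc, hkm m hm]
    simp
  have hx' : ∀ i, Polynomial.derivative (x i) = aeval x (ρ i) := by
    intro i
    ext m
    rw [hA, Polynomial.coeff_derivative, hxc, pow_succ', ← Matrix.mulVec_mulVec, map_sum,
      Polynomial.finsetSum_coeff]
    simp only [map_mul, aeval_X, aeval_C, ← Polynomial.C_eq_algebraMap, Polynomial.coeff_C_mul,
      hxc]
    rw [Matrix.mulVec, dotProduct, Finset.sum_div, Finset.sum_mul]
    refine Finset.sum_congr rfl fun l _ => ?_
    have h1 : (m.factorial : ℂ) ≠ 0 := by exact_mod_cast m.factorial_ne_zero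
    have h2 : (m : ℂ) + 1 ≠ 0 := by exact_mod_cast m.succ_ne_zero
    rw [Nat.factorial_succ]
    push_cast
    field_simp
  have hG : ∀ j, Polynomial.derivative (aeval x (pderiv j F)) =
      ∑ i, Polynomial.C ((-A) i j) * aeval x (pderiv i F) := by
    intro j
    rw [aux_chain_s8]
    have := congrArg (aeval x) (hdiff j)
    simp only [map_sum, map_neg, map_mul, aeval_C, ← Polynomial.C_eq_algebraMap] at this
    simp only [hx', Matrix.neg_apply, map_neg, neg_mul, Finset.sum_neg_distrib]
    rw [← this]
    exact Finset.sum_congr rfl fun i _ => by ring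
  have hGr : ∀ r j, Polynomial.derivative^[r] (aeval x (pderiv j F)) =
      ∑ i, Polynomial.C (((-A) ^ r) i j) * aeval x (pderiv i F) := by
    intro r
    induction r with
    | zero =>
      intro j
      simp [Matrix.one_apply]
    | succ r ih =>
      intro j
      rw [Function.iterate_succ_apply', ih, map_sum]
      simp only [Polynomial.derivative_C_mul, hG, pow_succ' (-A) r, Matrix.mul_apply, map_sum,
        map_mul, Finset.sum_mul, Finset.mul_sum]
      rw [Finset.sum_comm]
      exact Finset.sum_congr rfl fun i _ => Finset.sum_congr rfl fun l _ => by ring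
  have hcz : ∀ j, (aeval x (pderiv j F)).coeff ((d - 1) * k) = 0 := by
    intro j
    have h1 := hGr (k + 1) j
    rw [neg_pow, hk] at h1
    have h2 := congrArg (fun p => Polynomial.coeff p ((d - 1) * k - (k + 1))) h1
    have h3 : k + 1 ≤ (d - 1) * k := by
      have : 2 ≤ d - 1 := by omega
      nlinarith
    simp only [Polynomial.coeff_iterate_derivative, Nat.sub_add_cancel h3] at h2
    simp only [mul_zero, Matrix.zero_apply, map_zero, zero_mul, Finset.sum_const_zero,
      Polynomial.coeff_zero, nsmul_eq_mul, mul_eq_zero, Nat.cast_eq_zero,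
      Nat.descFactorial_eq_zero_iff_lt] at h2
    exact h2.resolve_left (by omega)
  have hv := hsm (fun i => (x i).coeff k) fun j => by
    rw [← aux_coeff x hxdeg _ (hpF j)]
    exact hcz j
  apply hu
  funext i
  have := congrFun hv i
  simp only [hxc, Pi.zero_apply, div_eq_zero_iff, Nat.cast_eq_zero, Nat.factorial_ne_zero,
    or_false] at this
  exact this
end

section
/- Let A = (a_{ij}) be an (n+1)×(n+1) complex matrix, F a homogeneous form of degree d ≥ 3 over C defining a smooth hypersurface in P^n, and λ ∈ C such that Σ_{i,j} a_{ij} X_j ∂F/∂X_i = λ F. Then A = (λ/d)·I, i.e., A is a scalar matrix. -/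
open MvPolynomial

/-- Partial derivatives commute. -/
lemma pderiv_swap {σ : Type*} (i j : σ) (F : MvPolynomial σ ℂ) :
    pderiv i (pderiv j F) = pderiv j (pderiv i F) := by
  classical
  have h : ⁅(pderiv i : Derivation ℂ (MvPolynomial σ ℂ) (MvPolynomial σ ℂ)),
      (pderiv j : Derivation ℂ (MvPolynomial σ ℂ) (MvPolynomial σ ℂ))⁆ = 0 := by
    apply MvPolynomial.derivation_ext
    intro k
    rw [Derivation.commutator_apply]
    simp only [pderiv_X, Pi.single_apply]
    split_ifs <;> simp
  have h2 := congrArg (fun D => D F) h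
  simp only [Derivation.commutator_apply] at h2
  exact sub_eq_zero.mp h2

/-- Chain rule along a polynomial curve. -/
lemma derivative_aeval_curve {N : ℕ} (p : Fin N → Polynomial ℂ) (Q : MvPolynomial (Fin N) ℂ) :
    Polynomial.derivative (aeval p Q) =
      ∑ j, aeval p (pderiv j Q) * Polynomial.derivative (p j) := by
  induction Q using MvPolynomial.induction_on with
  | C a => simp
  | add P Q hP hQ => simp [hP, hQ, add_mul, Finset.sum_add_distrib]
  | mul_X Q i hQ =>
    simp only [map_mul, aeval_X, Polynomial.derivative_mul, hQ, pderiv_mul, map_add, add_mul,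
      Finset.sum_add_distrib, Finset.sum_mul]
    refine congrArg₂ (fun a b => a + b) ?_ ?_
    · refine Finset.sum_congr rfl fun j _ => by ring
    · rw [Finset.sum_eq_single i]
      · simp
      · intro j _ hj
        simp [pderiv_X_of_ne hj.symm]
      · simp

/-- Top coefficient of a product of powers. -/
lemma top_coeff_prod {N : ℕ} (m : ℕ) (p : Fin N → Polynomial ℂ)
    (hp : ∀ i, (p i).natDegree ≤ m) (s : Fin N → ℕ) (S : Finset (Fin N)) :
    (∏ i ∈ S, p i ^ s i).natDegree ≤ (∑ i ∈ S, s i) * m ∧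
    (∏ i ∈ S, p i ^ s i).coeff ((∑ i ∈ S, s i) * m) = ∏ i ∈ S, (p i).coeff m ^ s i := by
  classical
  induction S using Finset.induction_on with
  | empty => simp
  | insert a S ha ih =>
    rw [Finset.prod_insert ha, Finset.sum_insert ha, Finset.prod_insert ha, add_mul]
    have h1 : (p a ^ s a).natDegree ≤ s a * m := Polynomial.natDegree_pow_le_of_le _ (hp a)
    refine ⟨Polynomial.natDegree_mul_le_of_le h1 ih.1, ?_⟩
    rw [Polynomial.coeff_mul_add_eq_of_natDegree_le h1 ih.1, ih.2,
      Polynomial.coeff_pow_of_natDegree_le (hp a)]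

lemma top_coeff_aeval {N : ℕ} (m e : ℕ) (p : Fin N → Polynomial ℂ)
    (hp : ∀ i, (p i).natDegree ≤ m) (Q : MvPolynomial (Fin N) ℂ) (hQ : Q.IsHomogeneous e) :
    (aeval p Q).coeff (e * m) = eval (fun i => (p i).coeff m) Q := by
  rw [aeval_def, eval₂_eq', eval_eq', Polynomial.finsetSum_coeff]
  refine Finset.sum_congr rfl fun s hs => ?_
  have he : ∑ i, s i = e := by
    have := hQ (mem_support_iff.mp hs)
    rw [← this, Finsupp.weight_apply, Finsupp.sum_fintype] <;> simp
  rw [Polynomial.algebraMap_eq, Polynomial.coeff_C_mul, ← (top_coeff_prod m p hp s Finset.univ).2, he]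

section
variable {N : ℕ} (F : MvPolynomial (Fin N) ℂ) (B : Matrix (Fin N) (Fin N) ℂ)

/-- Differentiated relation. -/
lemma differentiated (hB : ∑ i, ∑ j, C (B i j) * X j * pderiv i F = 0) (k : Fin N) :
    ∑ i, (∑ j, C (B i j) * X j) * pderiv i (pderiv k F) = - ∑ i, C (B i k) * pderiv i F := by
  have h := congrArg (pderiv k) hB
  simp only [map_sum, pderiv_mul, pderiv_C, map_zero, zero_mul, zero_add,
    Finset.sum_add_distrib] at h
  rw [add_comm] at h
  rw [eq_neg_iff_add_eq_zero, ← h]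
  congr 1
  · refine Finset.sum_congr rfl fun i _ => ?_
    rw [Finset.sum_mul]
    exact Finset.sum_congr rfl fun j _ => by rw [pderiv_swap]
  · refine Finset.sum_congr rfl fun i _ => ?_
    rw [Finset.sum_eq_single k]
    · simp
    · intro j _ hj
      simp [pderiv_X_of_ne hj]
    · simp

/-- If `μ` is an eigenvalue, so is `-(d-1)μ`. -/
lemma next_eigenvalue (d : ℕ) (hF : F.IsHomogeneous d)
    (hsm : ∀ v : Fin N → ℂ, (∀ i, eval v (pderiv i F) = 0) → v = 0)
    (hB : ∑ i, ∑ j, C (B i j) * X j * pderiv i F = 0) (μ : ℂ)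
    (hμ : B.charpoly.IsRoot μ) : B.charpoly.IsRoot (-(((d - 1 : ℕ) : ℂ) * μ)) := by
  rw [Polynomial.IsRoot, Matrix.eval_charpoly] at hμ ⊢
  obtain ⟨v, hv0, hv⟩ := Matrix.exists_mulVec_eq_zero_iff.mpr hμ
  apply Matrix.exists_vecMul_eq_zero_iff.mp
  refine ⟨fun i => eval v (pderiv i F), fun h => hv0 (hsm v fun i => congrFun h i), ?_⟩
  have hBv : ∀ i, ∑ j, B i j * v j = μ * v i := by
    intro i
    have := congrFun hv i
    rw [Matrix.sub_mulVec] at this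
    simp [Matrix.mulVec, dotProduct] at this
    exact (sub_eq_zero.mp this).symm
  ext k
  have h1 := congrArg (eval v) (differentiated F B hB k)
  have h2 := congrArg (eval v) (hF.pderiv (i := k)).sum_X_mul_pderiv
  simp only [map_sum, map_mul, eval_C, eval_X, map_neg, hBv, nsmul_eq_mul, map_natCast] at h1 h2
  rw [Matrix.vecMul_sub]
  simp only [mul_assoc, ← Finset.mul_sum, h2] at h1
  simp [Matrix.vecMul, dotProduct]
  simp only [mul_comm _ (B _ k)]
  linear_combination -h1

lemma nilpotent_of_relation (d : ℕ) (hd : 3 ≤ d) (hF : F.IsHomogeneous d)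
    (hsm : ∀ v : Fin N → ℂ, (∀ i, eval v (pderiv i F) = 0) → v = 0)
    (hB : ∑ i, ∑ j, C (B i j) * X j * pderiv i F = 0) : B ^ N = 0 := by
  have hne : B.charpoly ≠ 0 := B.charpoly_monic.ne_zero
  have hz : ∀ μ ∈ B.charpoly.roots, μ = 0 := by
    intro μ hμ
    obtain ⟨ν, hν, hmax⟩ := B.charpoly.roots.toFinset.exists_max_image (fun z => ‖z‖)
      ⟨μ, Multiset.mem_toFinset.mpr hμ⟩
    have h1 := next_eigenvalue F B d hF hsm hB ν
      ((Polynomial.mem_roots hne).mp (Multiset.mem_toFinset.mp hν))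
    have h2 := hmax _ (Multiset.mem_toFinset.mpr ((Polynomial.mem_roots hne).mpr h1))
    have h3 := hmax _ (Multiset.mem_toFinset.mpr hμ)
    simp only [norm_neg, norm_mul, Complex.norm_natCast] at h2
    have h4 : (2 : ℝ) ≤ ((d - 1 : ℕ) : ℝ) := by
      exact_mod_cast (by omega : 2 ≤ d - 1)
    have h5 : ‖μ‖ ≤ 0 := by nlinarith [norm_nonneg ν]
    exact norm_le_zero_iff.mp h5
  have hsp : B.charpoly.Splits := IsAlgClosed.splits _
  have hp := hsp.eq_prod_roots_of_monic B.charpoly_monic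
  have hcard : B.charpoly.roots.card = N := by
    rw [← hsp.natDegree_eq_card_roots, Matrix.charpoly_natDegree_eq_dim, Fintype.card_fin]
  rw [Multiset.eq_replicate.mpr ⟨hcard, hz⟩] at hp
  have hc := Matrix.aeval_self_charpoly B
  rw [hp] at hc
  simpa using hc

/-- The nilpotent case. -/
lemma nilpotent_step (d : ℕ) (hd : 3 ≤ d) (hF : F.IsHomogeneous d)
    (hsm : ∀ v : Fin N → ℂ, (∀ i, eval v (pderiv i F) = 0) → v = 0)
    (hB : ∑ i, ∑ j, C (B i j) * X j * pderiv i F = 0) (m : ℕ) (hm : 1 ≤ m)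
    (hBm : B ^ (m + 1) = 0) : B ^ m = 0 := by
  have hBk : ∀ k, m < k → B ^ k = 0 := fun k hk => pow_eq_zero_of_le hk hBm
  suffices h : ∀ w, (B ^ m).mulVec w = 0 by
    apply Matrix.ext_of_mulVec_single
    intro i
    rw [h, Matrix.zero_mulVec]
  intro w
  let p : Fin N → Polynomial ℂ := fun i =>
    ∑ k ∈ Finset.range (m + 1), Polynomial.monomial k ((B ^ k).mulVec w i / k.factorial)
  have hpc : ∀ i k, (p i).coeff k = (B ^ k).mulVec w i / k.factorial := by
    intro i k
    simp only [p, Polynomial.finsetSum_coeff, Polynomial.coeff_monomial]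
    rw [Finset.sum_ite_eq' (Finset.range (m + 1)) k]
    split_ifs with h
    · rfl
    · rw [hBk k (by simpa using h)]
      simp
  have hpd : ∀ i, (p i).natDegree ≤ m := by
    intro i
    rw [Polynomial.natDegree_le_iff_coeff_eq_zero]
    intro k hk
    rw [hpc, hBk k hk]
    simp
  have hder : ∀ i, Polynomial.derivative (p i) = ∑ j, Polynomial.C (B i j) * p j := by
    intro i
    ext k
    simp only [Polynomial.coeff_derivative, Polynomial.finsetSum_coeff, Polynomial.coeff_C_mul,
      hpc]
    rw [pow_succ', ← Matrix.mulVec_mulVec, Nat.factorial_succ]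
    have h0 : ((k.factorial : ℕ) : ℂ) ≠ 0 := by exact_mod_cast k.factorial_ne_zero
    have h1 : ((k : ℂ) + 1) ≠ 0 := by exact_mod_cast k.succ_ne_zero
    rw [Matrix.mulVec, dotProduct]
    simp only [mul_div_assoc', ← Finset.sum_div]
    push_cast
    field_simp
  let g : Fin N → Polynomial ℂ := fun i => aeval p (pderiv i F)
  have hg : ∀ k, Polynomial.derivative (g k) = - ∑ i, Polynomial.C (B i k) * g i := by
    intro k
    have h := congrArg (aeval p) (differentiated F B hB k)
    simp only [map_sum, map_mul, map_neg, aeval_X, algHom_C, Polynomial.algebraMap_eq] at h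
    simp only [g, derivative_aeval_curve, hder]
    rw [← h]
    exact Finset.sum_congr rfl fun i _ => mul_comm _ _
  have hit : ∀ s k, Polynomial.derivative^[s] (g k) =
      (-1) ^ s * ∑ i, Polynomial.C ((B ^ s) i k) * g i := by
    intro s
    induction s with
    | zero =>
      intro k
      simp [Matrix.one_apply]
    | succ s ih =>
      intro k
      rw [Function.iterate_succ_apply, hg, Polynomial.iterate_derivative_neg,
        Polynomial.iterate_derivative_sum]
      simp only [Polynomial.iterate_derivative_C_mul, ih, pow_succ B, Matrix.mul_apply, map_sum,
        map_mul, Finset.sum_mul, Finset.mul_sum]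
      rw [Finset.sum_comm, ← Finset.sum_neg_distrib]
      refine Finset.sum_congr rfl fun i _ => ?_
      rw [← Finset.sum_neg_distrib]
      refine Finset.sum_congr rfl fun j _ => ?_
      ring
  have hv : (fun i => (p i).coeff m) = 0 := by
    apply hsm
    intro k
    rw [← top_coeff_aeval m (d - 1) p hpd _ hF.pderiv]
    have h := hit (m + 1) k
    rw [hBm] at h
    simp only [Matrix.zero_apply, map_zero, zero_mul, Finset.sum_const_zero, mul_zero] at h
    have hle : m + 1 ≤ (d - 1) * m := by
      have : 2 * m ≤ (d - 1) * m := Nat.mul_le_mul_right _ (by omega)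
      omega
    obtain ⟨r, hr⟩ := Nat.exists_eq_add_of_le' hle
    have h2 := congrArg (fun q => Polynomial.coeff q r) h
    simp only [Polynomial.coeff_iterate_derivative, Polynomial.coeff_zero, nsmul_eq_mul,
      mul_eq_zero, Nat.cast_eq_zero, Nat.descFactorial_eq_zero_iff_lt] at h2
    rw [hr]
    exact h2.resolve_left (by omega)
  ext i
  have h := congrFun hv i
  simp only [hpc, Pi.zero_apply, div_eq_zero_iff, Nat.cast_eq_zero] at h
  exact h.resolve_right m.factorial_ne_zero

lemma relation_zero (d : ℕ) (hd : 3 ≤ d) (hF : F.IsHomogeneous d)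
    (hsm : ∀ v : Fin N → ℂ, (∀ i, eval v (pderiv i F) = 0) → v = 0)
    (hB : ∑ i, ∑ j, C (B i j) * X j * pderiv i F = 0) : B = 0 := by
  have hN := nilpotent_of_relation F B d hd hF hsm hB
  have key : ∀ m, B ^ (m + 1) = 0 → B = 0 := by
    intro m
    induction m with
    | zero => intro h; simpa using h
    | succ m ih =>
      intro h
      exact ih (nilpotent_step F B d hd hF hsm hB (m + 1) (by omega) h)
  exact key N (pow_eq_zero_of_le (Nat.le_succ N) hN)

end

/-- The Lie algebra of the projective stabilizer of a smooth hypersurface of degree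
`d ≥ 3` is trivial: if `Σ aᵢⱼ Xⱼ ∂F/∂Xᵢ = λ F` then `A = (λ/d)·I`. -/
theorem infinitesimal_stabilizer_is_scalar (n : ℕ)
    (F : MvPolynomial (Fin (n + 1)) ℂ) (d : ℕ) (hd : 3 ≤ d) (hF : F.IsHomogeneous d)
    (hsm : ∀ v : Fin (n + 1) → ℂ, (∀ i, eval v (pderiv i F) = 0) → v = 0)
    (A : Matrix (Fin (n + 1)) (Fin (n + 1)) ℂ) (lam : ℂ)
    (hA : ∑ i, ∑ j, C (A i j) * X j * pderiv i F = C lam * F) :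
    A = (lam / d) • (1 : Matrix (Fin (n + 1)) (Fin (n + 1)) ℂ) := by
  rw [← sub_eq_zero]
  apply relation_zero F _ d hd hF hsm
  have hd0 : (d : ℂ) ≠ 0 := by exact_mod_cast (by omega : d ≠ 0)
  have hE := hF.sum_X_mul_pderiv
  have h1 : ∀ i, ∑ j, C (((lam / d) • (1 : Matrix (Fin (n + 1)) (Fin (n + 1)) ℂ)) i j) * X j *
      pderiv i F = C (lam / d) * (X i * pderiv i F) := by
    intro i
    rw [Finset.sum_eq_single i]
    · simp [mul_assoc]
    · intro j _ hj
      simp [Matrix.one_apply_ne hj.symm]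
    · simp
  simp only [Matrix.sub_apply, map_sub, sub_mul, Finset.sum_sub_distrib, hA, h1]
  rw [← Finset.mul_sum, hE, nsmul_eq_mul, ← mul_assoc,
    ← map_natCast (C : ℂ →+* MvPolynomial (Fin (n + 1)) ℂ) d, ← map_mul, div_mul_cancel₀ _ hd0,
    sub_self]
end
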